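/- In the degenerate case ρ = 1, σ = 0: the system dX₁ = (g·1{X₁≤X₂} − h·1{X₁>X₂}) dt + 1{X₁>X₂} dW, dX₂ = (g·1{X₁>X₂} − h·1{X₁≤X₂}) dt − 1{X₁≤X₂} dW admits a strong solution (adapted to the filtration of the driving Brownian motion W), which is therefore pathwise unique; whereas the system dX₁ = (g·1{X₁≤X₂} − h·1{X₁>X₂}) dt + 1{X₁>X₂} dV, dX₂ = (g·1{X₁>X₂} − h·1{X₁≤X₂}) dt + 1{X₁≤X₂} dV admits no strong solution. -/

import Mathlib

open MeasureTheory ProbabilityTheory Filter Set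

noncomputable section

namespace SDEPaper

/-- The signum convention of the paper: `psgn y = 1` for `y > 0`, `= -1` for `y ≤ 0`. -/
def psgn (y : ℝ) : ℝ := if 0 < y then 1 else -1

variable {Ω : Type*} [m : MeasurableSpace Ω]

/-- The σ-algebra generated by the process `Ξ` on the time interval `[0, t]`. -/
def natSA {E : Type*} [MeasurableSpace E] (Ξ : ℝ → Ω → E) (t : ℝ) : MeasurableSpace Ω :=
  ⨆ s ∈ Icc (0 : ℝ) t, MeasurableSpace.comap (Ξ s) inferInstance

/-- The `μ`-augmentation of a σ-algebra. -/
def augSA (μ : Measure Ω) (m' : MeasurableSpace Ω) : MeasurableSpace Ω :=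
  m' ⊔ MeasurableSpace.generateFrom {A : Set Ω | μ A = 0}

/-- `𝔉^Ξ(t)`: the `μ`-augmented σ-algebra generated by the process `Ξ` up to time `t`. -/
def natFilt {E : Type*} [MeasurableSpace E] (μ : Measure Ω) (Ξ : ℝ → Ω → E) (t : ℝ) :
    MeasurableSpace Ω := augSA μ (natSA Ξ t)

/-- Dyadic left-point Riemann sum of `H` against `X` on `[0,t]`. -/
def rsum (H X : ℝ → Ω → ℝ) (t : ℝ) (n : ℕ) (ω : Ω) : ℝ :=
  ∑ i ∈ Finset.range (2 ^ n),
    H (t * i / 2 ^ n) ω * (X (t * (i + 1) / 2 ^ n) ω - X (t * i / 2 ^ n) ω)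

/-- `I = ∫₀^· H dX`: dyadic Riemann sums converge in probability, and `I 0 = 0` a.s. -/
def IsSI (μ : Measure Ω) (H X I : ℝ → Ω → ℝ) : Prop :=
  (∀ᵐ ω ∂μ, I 0 ω = 0) ∧
  ∀ t : ℝ, 0 ≤ t → TendstoInMeasure μ (fun n => rsum H X t n) atTop (I t)

/-- `I = ∫₀^· H₁ dX₁ + ∫₀^· H₂ dX₂` in the sense of convergence in probability
of dyadic Riemann sums. -/
def IsSI2 (μ : Measure Ω) (H₁ X₁ H₂ X₂ I : ℝ → Ω → ℝ) : Prop :=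
  (∀ᵐ ω ∂μ, I 0 ω = 0) ∧
  ∀ t : ℝ, 0 ≤ t →
    TendstoInMeasure μ (fun n ω => rsum H₁ X₁ t n ω + rsum H₂ X₂ t n ω) atTop (I t)

/-- Dyadic sums of products of increments. -/
def qsum (X Y : ℝ → Ω → ℝ) (t : ℝ) (n : ℕ) (ω : Ω) : ℝ :=
  ∑ i ∈ Finset.range (2 ^ n),
    (X (t * (i + 1) / 2 ^ n) ω - X (t * i / 2 ^ n) ω) *
      (Y (t * (i + 1) / 2 ^ n) ω - Y (t * i / 2 ^ n) ω)

/-- `C = ⟨X,Y⟩`: the quadratic covariation, as a limit in probability of dyadic sums. -/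
def IsQV (μ : Measure Ω) (X Y C : ℝ → Ω → ℝ) : Prop :=
  ∀ t : ℝ, 0 ≤ t → TendstoInMeasure μ (fun n => qsum X Y t n) atTop (C t)

/-- `W` is a standard one-dimensional Brownian motion with respect to the family of
σ-algebras `F` (a filtration contained in the ambient σ-algebra). -/
structure IsBM (μ : Measure Ω) (F : ℝ → MeasurableSpace Ω) (W : ℝ → Ω → ℝ) : Prop where
  le : ∀ t : ℝ, F t ≤ m
  mono : Monotone F
  adapted : ∀ t : ℝ, 0 ≤ t → MeasurableSpace.comap (W t) inferInstance ≤ F t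
  init : ∀ᵐ ω ∂μ, W 0 ω = 0
  cont : ∀ᵐ ω ∂μ, Continuous fun t => W t ω
  law : ∀ s t : ℝ, 0 ≤ s → s ≤ t →
    μ.map (fun ω => W t ω - W s ω) = gaussianReal 0 ((t - s).toNNReal)
  indep : ∀ s t : ℝ, 0 ≤ s → s ≤ t →
    Indep (MeasurableSpace.comap (fun ω => W t ω - W s ω) inferInstance) (F s) μ

/-- `(B₁, B₂)` is a planar Brownian motion: two independent standard Brownian motions
with respect to the common filtration `F`. -/
def IsPlanarBM (μ : Measure Ω) (F : ℝ → MeasurableSpace Ω) (B₁ B₂ : ℝ → Ω → ℝ) : Prop :=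
  IsBM μ F B₁ ∧ IsBM μ F B₂ ∧
    IndepFun (fun ω => (fun t => B₁ t ω)) (fun ω => (fun t => B₂ t ω)) μ

/-- `L` is the (right) local time at the origin of the process `Y`:
`L t = lim_{ε ↓ 0} (4ε)⁻¹ ∫₀ᵗ 1{|Y(s)| < ε} ds`. -/
def IsLocalTime (μ : Measure Ω) (Y L : ℝ → Ω → ℝ) : Prop :=
  ∀ᵐ ω ∂μ, ∀ t : ℝ, 0 ≤ t →
    Tendsto (fun ε : ℝ =>
        (4 * ε)⁻¹ * ∫ s in (0:ℝ)..t, (if |Y s ω| < ε then (1:ℝ) else 0))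
      (nhdsWithin 0 (Ioi 0)) (nhds (L t ω))

/-- A continuous local martingale with respect to the filtration `F`. -/
def IsContLocMart (μ : Measure Ω) (F : Filtration ℝ m) (M : ℝ → Ω → ℝ) : Prop :=
  (∀ᵐ ω ∂μ, Continuous fun t => M t ω) ∧ StronglyAdapted F M ∧
    ∃ τ : ℕ → Ω → ℝ, (∀ n, IsStoppingTime F (fun ω => (τ n ω : WithTop ℝ))) ∧
      (∀ᵐ ω ∂μ, Tendsto (fun n => τ n ω) atTop atTop) ∧
      ∀ n, Martingale (fun t ω => M (min t (τ n ω)) ω) F μ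

/-- Orthogonality: the cross-variation `⟨M,N⟩` vanishes identically. -/
def Orthogonal (μ : Measure Ω) (M N : ℝ → Ω → ℝ) : Prop :=
  IsQV μ M N fun _ _ => 0

/-- Domination: `⟨M⟩(t) = ∫₀ᵗ q(s) d⟨N⟩(s)` for a progressively measurable
process `q` with values in `[0,c]`. -/
def Dominated (μ : Measure Ω) (F : Filtration ℝ m) (M N : ℝ → Ω → ℝ) (c : ℝ) : Prop :=
  ∃ QM QN q : ℝ → Ω → ℝ, IsQV μ M M QM ∧ IsQV μ N N QN ∧
    ProgMeasurable F q ∧ (∀ t ω, q t ω ∈ Icc (0:ℝ) c) ∧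
    ∀ᵐ ω ∂μ, ∃ ν : Measure ℝ,
      (∀ a b : ℝ, 0 ≤ a → a ≤ b → ν (Ioc a b) = ENNReal.ofReal (QN b ω - QN a ω)) ∧
      ∀ t : ℝ, 0 ≤ t → QM t ω = ∫ s in Ioc (0:ℝ) t, q s ω ∂ν

/-- The law of the two-dimensional process `(X₁, X₂)` on path space. -/
def pathLaw (μ : Measure Ω) (X₁ X₂ : ℝ → Ω → ℝ) : Measure (ℝ → ℝ × ℝ) :=
  μ.map fun ω => (fun t => (X₁ t ω, X₂ t ω))
/-- `(X₁, X₂)` solves the system (1.1)-(1.2) driven by `(B₁, B₂)`. -/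
def Solves11 (μ : Measure Ω) (F : ℝ → MeasurableSpace Ω) (g h ρ σ x₁ x₂ : ℝ)
    (B₁ B₂ X₁ X₂ : ℝ → Ω → ℝ) : Prop :=
  (∀ t : ℝ, 0 ≤ t →
    MeasurableSpace.comap (fun ω => (X₁ t ω, X₂ t ω)) inferInstance ≤ F t) ∧
  (∀ᵐ ω ∂μ, Continuous (fun t => X₁ t ω) ∧ Continuous (fun t => X₂ t ω)) ∧
  ∃ I₁ I₂ : ℝ → Ω → ℝ,
    IsSI μ (fun s ω => if X₁ s ω ≤ X₂ s ω then σ else ρ) B₁ I₁ ∧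
    IsSI μ (fun s ω => if X₁ s ω ≤ X₂ s ω then ρ else σ) B₂ I₂ ∧
    ∀ᵐ ω ∂μ, ∀ t : ℝ, 0 ≤ t →
      X₁ t ω = x₁ + (∫ s in (0:ℝ)..t, (if X₁ s ω ≤ X₂ s ω then g else -h)) + I₁ t ω ∧
      X₂ t ω = x₂ + (∫ s in (0:ℝ)..t, (if X₁ s ω ≤ X₂ s ω then -h else g)) + I₂ t ω

/-- `(X₁, X₂)` solves the system (4.7)-(4.8), driven by the single Brownian motion `W`. -/
def Solves47 (μ : Measure Ω) (F : ℝ → MeasurableSpace Ω) (g h x₁ x₂ : ℝ)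
    (W X₁ X₂ : ℝ → Ω → ℝ) : Prop :=
  (∀ t : ℝ, 0 ≤ t →
    MeasurableSpace.comap (fun ω => (X₁ t ω, X₂ t ω)) inferInstance ≤ F t) ∧
  (∀ᵐ ω ∂μ, Continuous (fun t => X₁ t ω) ∧ Continuous (fun t => X₂ t ω)) ∧
  ∃ I₁ I₂ : ℝ → Ω → ℝ,
    IsSI μ (fun s ω => if X₁ s ω ≤ X₂ s ω then (0:ℝ) else 1) W I₁ ∧
    IsSI μ (fun s ω => if X₁ s ω ≤ X₂ s ω then (-1:ℝ) else 0) W I₂ ∧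
    ∀ᵐ ω ∂μ, ∀ t : ℝ, 0 ≤ t →
      X₁ t ω = x₁ + (∫ s in (0:ℝ)..t, (if X₁ s ω ≤ X₂ s ω then g else -h)) + I₁ t ω ∧
      X₂ t ω = x₂ + (∫ s in (0:ℝ)..t, (if X₁ s ω ≤ X₂ s ω then -h else g)) + I₂ t ω

/-- `(X₁, X₂)` solves the system (4.9)-(4.10), driven by the single Brownian motion `V`. -/
def Solves49 (μ : Measure Ω) (F : ℝ → MeasurableSpace Ω) (g h x₁ x₂ : ℝ)
    (V X₁ X₂ : ℝ → Ω → ℝ) : Prop :=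
  (∀ t : ℝ, 0 ≤ t →
    MeasurableSpace.comap (fun ω => (X₁ t ω, X₂ t ω)) inferInstance ≤ F t) ∧
  (∀ᵐ ω ∂μ, Continuous (fun t => X₁ t ω) ∧ Continuous (fun t => X₂ t ω)) ∧
  ∃ I₁ I₂ : ℝ → Ω → ℝ,
    IsSI μ (fun s ω => if X₁ s ω ≤ X₂ s ω then (0:ℝ) else 1) V I₁ ∧
    IsSI μ (fun s ω => if X₁ s ω ≤ X₂ s ω then (1:ℝ) else 0) V I₂ ∧
    ∀ᵐ ω ∂μ, ∀ t : ℝ, 0 ≤ t →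
      X₁ t ω = x₁ + (∫ s in (0:ℝ)..t, (if X₁ s ω ≤ X₂ s ω then g else -h)) + I₁ t ω ∧
      X₂ t ω = x₂ + (∫ s in (0:ℝ)..t, (if X₁ s ω ≤ X₂ s ω then -h else g)) + I₂ t ω

/-- `(X₁, X₂)` solves the system (2.12)-(2.13), driven by the planar BM `(W₁, W₂)`. -/
def Solves212 (μ : Measure Ω) (F : ℝ → MeasurableSpace Ω) (g h ρ σ x₁ x₂ : ℝ)
    (W₁ W₂ X₁ X₂ : ℝ → Ω → ℝ) : Prop :=
  (∀ t : ℝ, 0 ≤ t →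
    MeasurableSpace.comap (fun ω => (X₁ t ω, X₂ t ω)) inferInstance ≤ F t) ∧
  (∀ᵐ ω ∂μ, Continuous (fun t => X₁ t ω) ∧ Continuous (fun t => X₂ t ω)) ∧
  ∃ I₁ I₂ : ℝ → Ω → ℝ,
    IsSI2 μ (fun s ω => if X₁ s ω ≤ X₂ s ω then 0 else ρ) W₁
            (fun s ω => if X₁ s ω ≤ X₂ s ω then σ else 0) W₂ I₁ ∧
    IsSI2 μ (fun s ω => if X₁ s ω ≤ X₂ s ω then -ρ else 0) W₁
            (fun s ω => if X₁ s ω ≤ X₂ s ω then 0 else -σ) W₂ I₂ ∧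
    ∀ᵐ ω ∂μ, ∀ t : ℝ, 0 ≤ t →
      X₁ t ω = x₁ + (∫ s in (0:ℝ)..t, (if X₁ s ω ≤ X₂ s ω then g else -h)) + I₁ t ω ∧
      X₂ t ω = x₂ + (∫ s in (0:ℝ)..t, (if X₁ s ω ≤ X₂ s ω then -h else g)) + I₂ t ω

/-- `(X₁, X₂)` solves the system (2.14)-(2.15), driven by the planar BM `(V₁, V₂)`. -/
def Solves214 (μ : Measure Ω) (F : ℝ → MeasurableSpace Ω) (g h ρ σ x₁ x₂ : ℝ)
    (V₁ V₂ X₁ X₂ : ℝ → Ω → ℝ) : Prop :=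
  (∀ t : ℝ, 0 ≤ t →
    MeasurableSpace.comap (fun ω => (X₁ t ω, X₂ t ω)) inferInstance ≤ F t) ∧
  (∀ᵐ ω ∂μ, Continuous (fun t => X₁ t ω) ∧ Continuous (fun t => X₂ t ω)) ∧
  ∃ I₁ I₂ : ℝ → Ω → ℝ,
    IsSI2 μ (fun s ω => if X₁ s ω ≤ X₂ s ω then 0 else ρ) V₁
            (fun s ω => if X₁ s ω ≤ X₂ s ω then σ else 0) V₂ I₁ ∧
    IsSI2 μ (fun s ω => if X₁ s ω ≤ X₂ s ω then ρ else 0) V₁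
            (fun s ω => if X₁ s ω ≤ X₂ s ω then 0 else σ) V₂ I₂ ∧
    ∀ᵐ ω ∂μ, ∀ t : ℝ, 0 ≤ t →
      X₁ t ω = x₁ + (∫ s in (0:ℝ)..t, (if X₁ s ω ≤ X₂ s ω then g else -h)) + I₁ t ω ∧
      X₂ t ω = x₂ + (∫ s in (0:ℝ)..t, (if X₁ s ω ≤ X₂ s ω then -h else g)) + I₂ t ω

/-- `(X₁, X₂)` solves the system `dX = Σ(X) dU + G(X) dt` of (eq:xSigma), where
`Σ(x) = Σ₊ 1{x₁ > x₂} + Σ₋ 1{x₁ ≤ x₂}`. -/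
def SolvesGen (μ : Measure Ω) (F : ℝ → MeasurableSpace Ω) (g h : ℝ)
    (Sp Sm : Matrix (Fin 2) (Fin 2) ℝ) (x₁ x₂ : ℝ)
    (U₁ U₂ X₁ X₂ : ℝ → Ω → ℝ) : Prop :=
  (∀ t : ℝ, 0 ≤ t →
    MeasurableSpace.comap (fun ω => (X₁ t ω, X₂ t ω)) inferInstance ≤ F t) ∧
  (∀ᵐ ω ∂μ, Continuous (fun t => X₁ t ω) ∧ Continuous (fun t => X₂ t ω)) ∧
  ∃ I₁ I₂ : ℝ → Ω → ℝ,
    IsSI2 μ (fun s ω => if X₁ s ω ≤ X₂ s ω then Sm 0 0 else Sp 0 0) U₁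
            (fun s ω => if X₁ s ω ≤ X₂ s ω then Sm 0 1 else Sp 0 1) U₂ I₁ ∧
    IsSI2 μ (fun s ω => if X₁ s ω ≤ X₂ s ω then Sm 1 0 else Sp 1 0) U₁
            (fun s ω => if X₁ s ω ≤ X₂ s ω then Sm 1 1 else Sp 1 1) U₂ I₂ ∧
    ∀ᵐ ω ∂μ, ∀ t : ℝ, 0 ≤ t →
      X₁ t ω = x₁ + (∫ s in (0:ℝ)..t, (if X₁ s ω ≤ X₂ s ω then g else -h)) + I₁ t ω ∧
      X₂ t ω = x₂ + (∫ s in (0:ℝ)..t, (if X₁ s ω ≤ X₂ s ω then -h else g)) + I₂ t ω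

/-!
Put `Y = X₁ - X₂` and `lam = g + h`; the sum `X₁ + X₂` has constant drift in both systems.

For (4.7) the difference solves `dY = -lam sgn(Y) dt + dW`, whose drift is antitone: two solutions
driven by the same path agree, and the Euler schemes converge path by path, so `Y` is a functional
of `W`. Since `Y` spends no time at zero, the Riemann sums of `sgn(Y) dW` converge, which yields the
noise of `X₁ + X₂` and hence both coordinates.

For (4.9) the difference solves the Tanaka-type equation `dY = -lam sgn(Y) dt + sgn(Y) dV`, and the
roles are exchanged: both `Y` and `V = ∫ sgn(Y) dB` are functionals of the Brownian motion
`B = ∫ sgn(Y) dV`. Reflecting `Y` after its first zero gives a second solution with the same `V`,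
and by uniqueness in law `(Y, V)` and its reflection have the same joint law. If `Y` were a
functional of `V`, the two would coincide, so `Y` would never reach zero. But a path that keeps its
sign has the drift `∓ lam t`, so `B` would have an almost sure sign at every time `t > |y₀| / lam`,
contradicting the symmetry of its law.
-/

/-! ### Convergence in measure -/

section TendstoInMeasure

variable {μ : Measure Ω} {ι κ E : Type*} {l : Filter ι} [SeminormedAddCommGroup E]
  {f f₁ f₂ : ι → Ω → E} {g g₁ g₂ : Ω → E}

lemma tendstoInMeasure_of_norm_sub_le_add (h₁ : TendstoInMeasure μ f₁ l g₁)
    (h₂ : TendstoInMeasure μ f₂ l g₂)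
    (hle : ∀ i ω, ‖f i ω - g ω‖ ≤ ‖f₁ i ω - g₁ ω‖ + ‖f₂ i ω - g₂ ω‖) :
    TendstoInMeasure μ f l g := by
  rw [tendstoInMeasure_iff_norm] at *
  intro ε hε
  have hadd := (h₁ (ε / 2) (half_pos hε)).add (h₂ (ε / 2) (half_pos hε))
  rw [add_zero] at hadd
  refine tendsto_of_tendsto_of_tendsto_of_le_of_le tendsto_const_nhds hadd (fun _ => zero_le)
    fun i => (measure_mono fun ω hω => ?_).trans (measure_union_le _ _)
  simp only [mem_ofPred_eq, mem_union] at hω ⊢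
  by_contra! hlt
  linarith [hle i ω]

lemma tendstoInMeasure_add (h₁ : TendstoInMeasure μ f₁ l g₁) (h₂ : TendstoInMeasure μ f₂ l g₂) :
    TendstoInMeasure μ (fun i ω => f₁ i ω + f₂ i ω) l (fun ω => g₁ ω + g₂ ω) :=
  tendstoInMeasure_of_norm_sub_le_add h₁ h₂ fun i ω => by
    rw [add_sub_add_comm]; exact norm_add_le _ _

lemma tendstoInMeasure_sub (h₁ : TendstoInMeasure μ f₁ l g₁) (h₂ : TendstoInMeasure μ f₂ l g₂) :
    TendstoInMeasure μ (fun i ω => f₁ i ω - f₂ i ω) l (fun ω => g₁ ω - g₂ ω) :=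
  tendstoInMeasure_of_norm_sub_le_add h₁ h₂ fun i ω => by
    rw [sub_sub_sub_comm]; exact norm_sub_le _ _

lemma tendstoInMeasure_const (g : Ω → E) : TendstoInMeasure μ (fun _ : ι => g) l g := by
  rw [tendstoInMeasure_iff_norm]
  intro ε hε
  simp [hε.not_ge, tendsto_const_nhds]

lemma tendstoInMeasure_sum (S : Finset κ) {f : κ → ι → Ω → E} {g : κ → Ω → E}
    (h : ∀ k ∈ S, TendstoInMeasure μ (f k) l (g k)) :
    TendstoInMeasure μ (fun i ω => ∑ k ∈ S, f k i ω) l (fun ω => ∑ k ∈ S, g k ω) := by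
  classical
  induction S using Finset.induction_on with
  | empty => simpa using tendstoInMeasure_const (μ := μ) (l := l) (fun _ : Ω => (0 : E))
  | insert a S ha ih =>
    simp only [Finset.sum_insert ha]
    exact tendstoInMeasure_add (h a (by simp)) (ih fun k hk => h k (by simp [hk]))

lemma tendstoInMeasure_congr_of_sub
    (hsub : TendstoInMeasure μ (fun i ω => f₁ i ω - f₂ i ω) l (fun _ => 0)) :
    TendstoInMeasure μ f₁ l g ↔ TendstoInMeasure μ f₂ l g :=
  ⟨fun h => by simpa using tendstoInMeasure_sub h hsub,
    fun h => by simpa using tendstoInMeasure_add hsub h⟩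

lemma tendstoInMeasure_bdd_mul {f : ι → Ω → ℝ} {g a : Ω → ℝ} {C : ℝ} (ha : ∀ ω, |a ω| ≤ C)
    (h : TendstoInMeasure μ f l g) :
    TendstoInMeasure μ (fun i ω => a ω * f i ω) l (fun ω => a ω * g ω) := by
  rw [tendstoInMeasure_iff_norm] at *
  intro ε hε
  refine tendsto_of_tendsto_of_tendsto_of_le_of_le tendsto_const_nhds
    (h (ε / (|C| + 1)) (by positivity)) (fun _ => zero_le) fun i => measure_mono fun ω hω => ?_
  simp only [mem_ofPred_eq, ← mul_sub, Real.norm_eq_abs, abs_mul] at hω ⊢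
  rw [div_le_iff₀ (by positivity)]
  nlinarith [ha ω, le_abs_self C, abs_nonneg (f i ω - g ω)]

lemma tendstoInMeasure_of_ae_tendsto [IsFiniteMeasure μ] [l.IsCountablyGenerated]
    (hf : ∀ i, AEStronglyMeasurable (f i) μ)
    (h : ∀ᵐ ω ∂μ, Tendsto (fun i => f i ω) l (nhds (g ω))) : TendstoInMeasure μ f l g := by
  rw [tendstoInMeasure_iff_norm]
  intro ε hε
  refine tendsto_of_seq_tendsto fun u hu => ?_
  have hseq := tendstoInMeasure_of_tendsto_ae (fun n => hf (u n)) (h.mono fun ω hω => hω.comp hu)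
  exact tendstoInMeasure_iff_norm.1 hseq ε hε

lemma tendstoInMeasure_zero_of_tendsto_integral_sq [IsFiniteMeasure μ] {f : ι → Ω → ℝ}
    (hf : ∀ i, MemLp (f i) 2 μ) (h : Tendsto (fun i => ∫ ω, f i ω ^ 2 ∂μ) l (nhds 0)) :
    TendstoInMeasure μ f l (fun _ => 0) := by
  rw [tendstoInMeasure_iff_measureReal_norm]
  intro ε hε
  have hscaled := h.const_mul ((ε ^ 2)⁻¹)
  rw [mul_zero] at hscaled
  refine squeeze_zero (fun _ => measureReal_nonneg) (fun i => ?_) hscaled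
  have hset : {ω | ε ≤ ‖f i ω - 0‖} = {ω | ε ^ 2 ≤ f i ω ^ 2} := by
    ext ω
    rw [mem_ofPred_eq, mem_ofPred_eq, sub_zero, Real.norm_eq_abs, ← sq_abs (f i ω),
      pow_le_pow_iff_left₀ hε.le (abs_nonneg _) two_ne_zero]
  rw [hset, inv_mul_eq_div, le_div_iff₀ (by positivity), mul_comm]
  exact mul_meas_ge_le_integral_of_nonneg (ae_of_all _ fun ω => sq_nonneg _)
    (hf i).integrable_sq (ε ^ 2)

lemma tendsto_integral_sq_of_bounded [IsFiniteMeasure μ] [l.IsCountablyGenerated]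
    {f : ι → Ω → ℝ} (hf : ∀ i, Measurable (f i)) {C : ℝ} (hC : ∀ i ω, |f i ω| ≤ C)
    (h : ∀ᵐ ω ∂μ, Tendsto (fun i => f i ω) l (nhds 0)) :
    Tendsto (fun i => ∫ ω, f i ω ^ 2 ∂μ) l (nhds 0) := by
  rw [← integral_zero Ω ℝ (μ := μ)]
  refine tendsto_integral_filter_of_dominated_convergence (fun _ => C ^ 2)
    (.of_forall fun i => ((hf i).pow_const 2).aestronglyMeasurable)
    (.of_forall fun i => ae_of_all _ fun ω => ?_) (integrable_const _) ?_
  · rw [norm_pow]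
    exact pow_le_pow_left₀ (norm_nonneg _) (hC i ω) 2
  · filter_upwards [h] with ω hω
    simpa using hω.pow 2

end TendstoInMeasure

/-! ### Brownian increments -/

section BrownianIncrements

variable {μ : Measure Ω} {F : ℝ → MeasurableSpace Ω} {W : ℝ → Ω → ℝ} {s t u : ℝ}

lemma IsBM.measurable_of_le (hB : IsBM μ F W) (hs : 0 ≤ s) (hst : s ≤ t) :
    Measurable[F t] (W s) :=
  (Measurable.of_comap_le (hB.adapted s hs)).mono (hB.mono hst) le_rfl

lemma IsBM.measurable (hB : IsBM μ F W) (ht : 0 ≤ t) : Measurable (W t) :=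
  (hB.measurable_of_le ht le_rfl).mono (hB.le t) le_rfl

lemma IsBM.measurable_incr_of_le (hB : IsBM μ F W) (hs : 0 ≤ s) (hst : s ≤ t) (htu : t ≤ u) :
    Measurable[F u] (fun ω => W t ω - W s ω) :=
  (hB.measurable_of_le (hs.trans hst) htu).sub (hB.measurable_of_le hs (hst.trans htu))

lemma IsBM.measurable_incr (hB : IsBM μ F W) (hs : 0 ≤ s) (hst : s ≤ t) :
    Measurable (fun ω => W t ω - W s ω) :=
  (hB.measurable_incr_of_le hs hst le_rfl).mono (hB.le t) le_rfl

lemma IsBM.memLp_two_incr (hB : IsBM μ F W) (hs : 0 ≤ s) (hst : s ≤ t) :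
    MemLp (fun ω => W t ω - W s ω) 2 μ := by
  have hid : MemLp id 2 (μ.map (fun ω => W t ω - W s ω)) := by
    rw [hB.law s t hs hst]; exact memLp_id_gaussianReal 2
  exact (memLp_map_measure_iff measurable_id.aestronglyMeasurable
    (hB.measurable_incr hs hst).aemeasurable).1 hid

lemma IsBM.indepFun_incr (hB : IsBM μ F W) (hs : 0 ≤ s) (hst : s ≤ t)
    {E : Type*} [MeasurableSpace E] {f : Ω → E} (hf : Measurable[F s] f) :
    IndepFun f (fun ω => W t ω - W s ω) μ := by
  rw [IndepFun_iff_Indep]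
  exact (indep_of_indep_of_le_right (hB.indep s t hs hst) hf.comap_le).symm

lemma IsBM.map_prodMk_incr (hB : IsBM μ F W) [IsFiniteMeasure μ] (hs : 0 ≤ s) (hst : s ≤ t)
    {E : Type*} [MeasurableSpace E] {f : Ω → E} (hf : Measurable[F s] f) :
    μ.map (fun ω => (f ω, W t ω - W s ω)) =
      (μ.map f).prod (gaussianReal 0 (t - s).toNNReal) := by
  rw [← hB.law s t hs hst]
  exact (indepFun_iff_map_prod_eq_prod_map_map (hf.mono (hB.le s) le_rfl).aemeasurable
    (hB.measurable_incr hs hst).aemeasurable).1 (hB.indepFun_incr hs hst hf)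

lemma IsBM.integral_mul_comp_incr (hB : IsBM μ F W) (hs : 0 ≤ s) (hst : s ≤ t)
    {Z : Ω → ℝ} (hZ : Measurable[F s] Z) {φ : ℝ → ℝ} (hφ : Measurable φ) :
    ∫ ω, Z ω * φ (W t ω - W s ω) ∂μ =
      (∫ ω, Z ω ∂μ) * ∫ x, φ x ∂(gaussianReal 0 (t - s).toNNReal) := by
  rw [(hB.indepFun_incr hs hst hZ).integral_fun_comp_mul_comp (f := fun z => z) (g := φ)
    (hZ.mono (hB.le s) le_rfl).aemeasurable (hB.measurable_incr hs hst).aemeasurable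
    measurable_id.aestronglyMeasurable hφ.aestronglyMeasurable, ← hB.law s t hs hst,
    integral_map (hB.measurable_incr hs hst).aemeasurable hφ.aestronglyMeasurable]

lemma IsBM.integral_mul_incr (hB : IsBM μ F W) (hs : 0 ≤ s) (hst : s ≤ t)
    {Z : Ω → ℝ} (hZ : Measurable[F s] Z) : ∫ ω, Z ω * (W t ω - W s ω) ∂μ = 0 := by
  rw [hB.integral_mul_comp_incr hs hst hZ (φ := fun x => x) measurable_id,
    integral_id_gaussianReal, mul_zero]

lemma integral_sq_gaussianReal (v : NNReal) : ∫ x, x ^ 2 ∂(gaussianReal 0 v) = v := by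
  have hvar := variance_fun_id_gaussianReal (μ := 0) (v := v)
  rw [variance_eq_integral (X := fun x : ℝ => x) measurable_id.aemeasurable] at hvar
  simpa [integral_id_gaussianReal] using hvar

lemma IsBM.integral_mul_incr_sq (hB : IsBM μ F W) (hs : 0 ≤ s) (hst : s ≤ t)
    {Z : Ω → ℝ} (hZ : Measurable[F s] Z) :
    ∫ ω, Z ω * (W t ω - W s ω) ^ 2 ∂μ = (∫ ω, Z ω ∂μ) * (t - s) := by
  rw [hB.integral_mul_comp_incr hs hst hZ (φ := fun x => x ^ 2) (by fun_prop),
    integral_sq_gaussianReal, Real.coe_toNNReal _ (sub_nonneg.2 hst)]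

lemma integral_cexp_mul_gaussianReal (v : NNReal) (c : ℝ) :
    ∫ x, Complex.exp ((c * x : ℝ) * Complex.I) ∂(gaussianReal 0 v) =
      Complex.exp (-((c ^ 2 * v / 2 : ℝ) : ℂ)) := by
  have hchar := charFun_gaussianReal (μ := 0) (v := v) c
  rw [charFun_apply_real] at hchar
  push_cast
  rw [hchar]
  congr 1
  push_cast
  ring

lemma IsBM.integral_mul_cexp_mul_incr (hB : IsBM μ F W) [IsFiniteMeasure μ]
    (hs : 0 ≤ s) (hst : s ≤ t) {Z : Ω → ℂ} (hZ : Measurable[F s] Z) {C : ℝ}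
    (hZC : ∀ ω, ‖Z ω‖ ≤ C) {H : Ω → ℝ} (hH : Measurable[F s] H) :
    ∫ ω, Z ω * Complex.exp ((H ω * (W t ω - W s ω) : ℝ) * Complex.I) ∂μ =
      ∫ ω, Z ω * Complex.exp (-((H ω ^ 2 * (t - s) / 2 : ℝ) : ℂ)) ∂μ := by
  have hZH : Measurable[F s] fun ω => (Z ω, H ω) := hZ.prodMk hH
  have hZHm : Measurable fun ω => (Z ω, H ω) := hZH.mono (hB.le s) le_rfl
  have hpair : Measurable fun ω => ((Z ω, H ω), W t ω - W s ω) :=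
    hZHm.prodMk (hB.measurable_incr hs hst)
  let φ : (ℂ × ℝ) × ℝ → ℂ := fun p => p.1.1 * Complex.exp ((p.1.2 * p.2 : ℝ) * Complex.I)
  have hφ : StronglyMeasurable φ := Measurable.stronglyMeasurable (by fun_prop)
  have hint : Integrable φ (μ.map fun ω => ((Z ω, H ω), W t ω - W s ω)) := by
    rw [integrable_map_measure hφ.aestronglyMeasurable hpair.aemeasurable]
    refine Integrable.of_bound (hφ.comp_measurable hpair).aestronglyMeasurable C
      (ae_of_all _ fun ω => ?_)
    simpa only [φ, Function.comp_apply, norm_mul, Complex.norm_exp_ofReal_mul_I, mul_one]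
      using hZC ω
  calc ∫ ω, φ ((Z ω, H ω), W t ω - W s ω) ∂μ
      = ∫ p, φ p ∂(μ.map fun ω => ((Z ω, H ω), W t ω - W s ω)) :=
        (integral_map hpair.aemeasurable hφ.aestronglyMeasurable).symm
    _ = ∫ ω, (∫ x, φ ((Z ω, H ω), x) ∂(gaussianReal 0 (t - s).toNNReal)) ∂μ := by
        rw [hB.map_prodMk_incr hs hst hZH] at hint ⊢
        rw [integral_prod _ hint, integral_map hZHm.aemeasurable
          hφ.integral_prod_right.aestronglyMeasurable]
    _ = ∫ ω, Z ω * Complex.exp (-((H ω ^ 2 * (t - s) / 2 : ℝ) : ℂ)) ∂μ := by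
        simp only [φ, integral_const_mul, integral_cexp_mul_gaussianReal,
          Real.coe_toNNReal _ (sub_nonneg.2 hst)]

lemma IsBM.measurable_sum_mul_incr (hB : IsBM μ F W) {a : ℕ → ℝ} (ha : Monotone a)
    (ha0 : 0 ≤ a 0) {H : ℕ → Ω → ℝ} (hH : ∀ k, Measurable[F (a k)] (H k)) (N : ℕ) :
    Measurable[F (a N)] (fun ω => ∑ k ∈ Finset.range N, H k ω * (W (a (k + 1)) ω - W (a k) ω)) := by
  refine Finset.measurable_sum _ fun k hk => ?_
  have hkN : k + 1 ≤ N := Finset.mem_range.1 hk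
  exact ((hH k).mono (hB.mono (ha (by lia))) le_rfl).mul
    (hB.measurable_incr_of_le (ha0.trans (ha k.zero_le)) (ha k.le_succ) (ha hkN))

/- When the squares of the weights are deterministic, each step of the conditional characteristic
function is deterministic, so the sum is Gaussian and independent of the past. -/
lemma IsBM.integral_mul_cexp_sum_mul_incr (hB : IsBM μ F W) [IsFiniteMeasure μ] {a : ℕ → ℝ}
    (ha : Monotone a) (ha0 : 0 ≤ a 0) {Z : Ω → ℂ} (hZ : Measurable[F (a 0)] Z) {C : ℝ}
    (hZC : ∀ ω, ‖Z ω‖ ≤ C) {H : ℕ → Ω → ℝ} (hH : ∀ k, Measurable[F (a k)] (H k)) {v : ℕ → ℝ}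
    (hHv : ∀ k ω, H k ω ^ 2 = v k) (N : ℕ) :
    ∫ ω, Z ω * Complex.exp
        ((∑ k ∈ Finset.range N, H k ω * (W (a (k + 1)) ω - W (a k) ω) : ℝ) * Complex.I) ∂μ =
      (∫ ω, Z ω ∂μ) *
        Complex.exp (-((∑ k ∈ Finset.range N, v k * (a (k + 1) - a k) / 2 : ℝ) : ℂ)) := by
  induction N with
  | zero => simp
  | succ N ih =>
    have hcexp : Measurable (fun x : ℝ => Complex.exp (x * Complex.I)) := by fun_prop
    have hZN := (hZ.mono (hB.mono (ha N.zero_le)) le_rfl).mul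
      (hcexp.comp (hB.measurable_sum_mul_incr ha ha0 hH N))
    have hstep := hB.integral_mul_cexp_mul_incr (ha0.trans (ha N.zero_le)) (ha N.le_succ) hZN
      (C := C) (fun ω => by
        simpa only [Pi.mul_apply, Function.comp_apply, norm_mul, Complex.norm_exp_ofReal_mul_I,
          mul_one] using hZC ω) (hH N)
    simp only [Pi.mul_apply, Function.comp_apply, hHv, integral_mul_const, ih] at hstep
    simp only [Finset.sum_range_succ, Complex.ofReal_add, neg_add, add_mul, Complex.exp_add,
      ← mul_assoc]
    exact hstep

end BrownianIncrements

/-! ### The Itô isometry for elementary integrands -/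

section Isometry

variable {μ : Measure Ω} {F : ℝ → MeasurableSpace Ω} {W : ℝ → Ω → ℝ} {a b c d : ℝ}

lemma integral_sum_sq {ι : Type*} (S : Finset ι) {f : ι → Ω → ℝ} (hf : ∀ i, MemLp (f i) 2 μ) :
    ∫ ω, (∑ i ∈ S, f i ω) ^ 2 ∂μ = ∑ i ∈ S, ∑ j ∈ S, ∫ ω, f i ω * f j ω ∂μ := by
  have hint : ∀ i j, Integrable (fun ω => f i ω * f j ω) μ := fun i j =>
    (hf i).integrable_mul (hf j)
  simp only [sq, Finset.sum_mul_sum]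
  rw [integral_finsetSum _ fun i _ => integrable_finsetSum _ fun j _ => hint i j]
  exact Finset.sum_congr rfl fun i _ => integral_finsetSum _ fun j _ => hint i j

lemma IsBM.memLp_two_bdd_mul_incr (hB : IsBM μ F W) (ha : 0 ≤ a) (hab : a ≤ b) {Z : Ω → ℝ}
    (hZ : Measurable Z) {C : ℝ} (hZC : ∀ ω, |Z ω| ≤ C) :
    MemLp (fun ω => Z ω * (W b ω - W a ω)) 2 μ :=
  MemLp.of_le_mul (c := C) (hB.memLp_two_incr ha hab)
    (hZ.mul (hB.measurable_incr ha hab)).aestronglyMeasurable (ae_of_all _ fun ω => by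
      rw [norm_mul]
      exact mul_le_mul_of_nonneg_right (hZC ω) (norm_nonneg _))

lemma IsBM.integral_mul_incr_mul_incr_of_eq_left (hB : IsBM μ F W) (ha : 0 ≤ a) (hab : a ≤ b)
    (hac : a ≤ c) {Z : Ω → ℝ} (hZ : Measurable[F a] Z) {C : ℝ} (hZC : ∀ ω, |Z ω| ≤ C) :
    ∫ ω, Z ω * (W b ω - W a ω) * (W c ω - W a ω) ∂μ = (∫ ω, Z ω ∂μ) * (min b c - a) := by
  wlog hbc : b ≤ c generalizing b c
  · rw [min_comm, ← this hac hab (le_of_not_ge hbc)]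
    simp only [mul_right_comm]
  have hZb : MemLp (fun ω => Z ω * (W b ω - W a ω)) 2 μ :=
    hB.memLp_two_bdd_mul_incr ha hab (hZ.mono (hB.le a) le_rfl) hZC
  have hb : 0 ≤ b := ha.trans hab
  have hlater : ∫ ω, Z ω * (W b ω - W a ω) * (W c ω - W b ω) ∂μ = 0 :=
    hB.integral_mul_incr hb hbc ((hZ.mono (hB.mono hab) le_rfl).mul
      (hB.measurable_incr_of_le ha hab le_rfl))
  calc ∫ ω, Z ω * (W b ω - W a ω) * (W c ω - W a ω) ∂μ
      = ∫ ω, (Z ω * (W b ω - W a ω) * (W b ω - W a ω)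
          + Z ω * (W b ω - W a ω) * (W c ω - W b ω)) ∂μ := by congr 1; ext ω; ring
    _ = ∫ ω, Z ω * (W b ω - W a ω) * (W b ω - W a ω) ∂μ := by
        simpa only [Pi.mul_apply, hlater, add_zero] using
          integral_add (hZb.integrable_mul (hB.memLp_two_incr ha hab))
            (hZb.integrable_mul (hB.memLp_two_incr hb hbc))
    _ = (∫ ω, Z ω ∂μ) * (min b c - a) := by
        rw [min_eq_left hbc, ← hB.integral_mul_incr_sq ha hab hZ]
        simp only [sq, mul_assoc]

lemma IsBM.integral_mul_incr_mul_incr (hB : IsBM μ F W) (ha : 0 ≤ a) (hab : a ≤ b) (hac : a ≤ c)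
    (hcd : c ≤ d) {Z : Ω → ℝ} (hZ : Measurable[F c] Z) {C : ℝ} (hZC : ∀ ω, |Z ω| ≤ C) :
    ∫ ω, Z ω * (W b ω - W a ω) * (W d ω - W c ω) ∂μ =
      (∫ ω, Z ω ∂μ) * volume.real (Ico a b ∩ Ico c d) := by
  have hc : 0 ≤ c := ha.trans hac
  rw [Ico_inter_Ico, Real.volume_real_Ico, max_eq_right hac]
  have hearlier : ∀ {e}, a ≤ e → e ≤ c →
      ∫ ω, Z ω * (W e ω - W a ω) * (W d ω - W c ω) ∂μ = 0 := fun hae hec =>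
    hB.integral_mul_incr hc hcd (hZ.mul (hB.measurable_incr_of_le ha hae hec))
  rcases le_total b c with hbc | hcb
  · rw [hearlier hab hbc, max_eq_right (by linarith [min_le_left b d]), mul_zero]
  have hmemLp : ∀ {p q}, 0 ≤ p → p ≤ q → MemLp (fun ω => Z ω * (W q ω - W p ω)) 2 μ :=
    fun hp hpq => hB.memLp_two_bdd_mul_incr hp hpq (hZ.mono (hB.le c) le_rfl) hZC
  calc ∫ ω, Z ω * (W b ω - W a ω) * (W d ω - W c ω) ∂μ
      = ∫ ω, (Z ω * (W c ω - W a ω) * (W d ω - W c ω)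
          + Z ω * (W b ω - W c ω) * (W d ω - W c ω)) ∂μ := by congr 1; ext ω; ring
    _ = ∫ ω, Z ω * (W b ω - W c ω) * (W d ω - W c ω) ∂μ := by
        simpa only [Pi.mul_apply, hearlier hac le_rfl, zero_add] using
          integral_add ((hmemLp ha hac).integrable_mul (hB.memLp_two_incr hc hcd))
            ((hmemLp hc hcb).integrable_mul (hB.memLp_two_incr hc hcd))
    _ = (∫ ω, Z ω ∂μ) * max (min b d - c) 0 := by
        rw [hB.integral_mul_incr_mul_incr_of_eq_left hc hcb hcd hZ hZC,
          max_eq_left (sub_nonneg.2 (le_min hcb hcd))]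

lemma integral_indicator_one_mul_indicator_one {s t : Set ℝ} (hs : MeasurableSet s)
    (ht : MeasurableSet t) :
    ∫ x, s.indicator 1 x * t.indicator 1 x = volume.real (s ∩ t) := by
  rw [← integral_indicator_one (hs.inter ht), inter_indicator_one]
  rfl

lemma integrable_indicator_Ico_mul_indicator_Ico (a b c d : ℝ) :
    Integrable fun x : ℝ => (Ico a b).indicator (1 : ℝ → ℝ) x * (Ico c d).indicator 1 x := by
  have hprod : (fun x : ℝ => (Ico a b).indicator (1 : ℝ → ℝ) x * (Ico c d).indicator 1 x) =
      (Ico (max a c) (min b d)).indicator 1 := by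
    rw [← Ico_inter_Ico, inter_indicator_one]
    rfl
  rw [hprod, integrable_indicator_iff measurableSet_Ico]
  exact continuous_const.integrableOn_Icc.mono_set Ico_subset_Icc_self

lemma IsBM.integral_bdd_mul_incr_mul_bdd_mul_incr (hB : IsBM μ F W) (ha : 0 ≤ a) (hab : a ≤ b)
    (hc : 0 ≤ c) (hcd : c ≤ d) {X Y : Ω → ℝ} (hX : Measurable[F a] X) (hY : Measurable[F c] Y)
    {C D : ℝ} (hXC : ∀ ω, |X ω| ≤ C) (hYD : ∀ ω, |Y ω| ≤ D) :
    ∫ ω, (X ω * (W b ω - W a ω)) * (Y ω * (W d ω - W c ω)) ∂μ =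
      (∫ ω, X ω * Y ω ∂μ) * volume.real (Ico a b ∩ Ico c d) := by
  wlog hac : a ≤ c generalizing a b c d X Y C D
  · rw [inter_comm]
    simpa only [mul_comm] using this hc hcd ha hab hY hX hYD hXC (le_of_not_ge hac)
  have hXY : ∀ ω, |X ω * Y ω| ≤ C * D := fun ω => by
    rw [abs_mul]
    exact mul_le_mul (hXC ω) (hYD ω) (abs_nonneg _) ((abs_nonneg _).trans (hXC ω))
  rw [← hB.integral_mul_incr_mul_incr (Z := fun ω => X ω * Y ω) ha hab hac hcd
    ((hX.mono (hB.mono hac) le_rfl).mul hY) hXY]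
  congr 1
  ext ω
  ring

lemma IsBM.integral_sum_mul_incr_sq (hB : IsBM μ F W) [IsFiniteMeasure μ] {ι : Type*}
    (S : Finset ι) {a b : ι → ℝ} (ha : ∀ i, 0 ≤ a i) (hab : ∀ i, a i ≤ b i) {X : ι → Ω → ℝ}
    (hX : ∀ i, Measurable[F (a i)] (X i)) {C : ℝ} (hXC : ∀ i ω, |X i ω| ≤ C) :
    ∫ ω, (∑ i ∈ S, X i ω * (W (b i) ω - W (a i) ω)) ^ 2 ∂μ =
      ∫ s, ∫ ω, (∑ i ∈ S, X i ω * (Ico (a i) (b i)).indicator 1 s) ^ 2 ∂μ := by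
  have hXm : ∀ i, Measurable (X i) := fun i => (hX i).mono (hB.le _) le_rfl
  have hstep : ∀ s i, MemLp (fun ω => X i ω * (Ico (a i) (b i)).indicator 1 s) 2 μ := fun s i =>
    (MemLp.of_bound (hXm i).aestronglyMeasurable C (ae_of_all _ (hXC i))).mul_const _
  have hind : ∀ i j, Integrable fun s : ℝ => (∫ ω, X i ω * X j ω ∂μ) *
      ((Ico (a i) (b i)).indicator 1 s * (Ico (a j) (b j)).indicator 1 s) := fun i j =>
    (integrable_indicator_Ico_mul_indicator_Ico _ _ _ _).const_mul _
  simp only [integral_sum_sq S (hstep _), mul_mul_mul_comm (X _ _), integral_mul_const]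
  rw [integral_sum_sq S fun i => hB.memLp_two_bdd_mul_incr (ha i) (hab i) (hXm i) (hXC i),
    integral_finsetSum _ fun i _ => integrable_finsetSum _ fun j _ => hind i j]
  refine Finset.sum_congr rfl fun i _ => ?_
  rw [integral_finsetSum _ fun j _ => hind i j]
  refine Finset.sum_congr rfl fun j _ => ?_
  rw [integral_const_mul, integral_indicator_one_mul_indicator_one measurableSet_Ico
    measurableSet_Ico, hB.integral_bdd_mul_incr_mul_bdd_mul_incr (ha i) (hab i) (ha j) (hab j)
    (hX i) (hX j) (hXC i) (hXC j)]

end Isometry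

/-! ### Left-point sums on uniform grids -/

section LeftPointSums

/-- The left-point sum `∑_{i < N} K(c i) (X(c (i + 1)) - X(c i))` over the uniform grid of
mesh `c`. -/
def leftSum {α : Type*} (c : ℝ) (N : ℕ) (K X : ℝ → α → ℝ) (ω : α) : ℝ :=
  ∑ i ∈ Finset.range N, K (c * i) ω * (X (c * (i + 1)) ω - X (c * i) ω)

/-- The step process that takes the value `K(c i)` on `[c i, c (i + 1))` for `i < N` and vanishes
elsewhere: the elementary integrand whose integral is `leftSum c N K`. -/
def stepProc {α : Type*} (c : ℝ) (N : ℕ) (K : ℝ → α → ℝ) (s : ℝ) (ω : α) : ℝ :=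
  (Ico 0 (c * N)).indicator (fun r => K (c * ⌊r / c⌋₊) ω) s

/-- A process which is adapted to `F` on `[0, ∞)` and bounded by `C`. -/
structure IsBddAdapted {α : Type*} (F : ℝ → MeasurableSpace α) (C : ℝ) (K : ℝ → α → ℝ) :
    Prop where
  meas : ∀ s, 0 ≤ s → Measurable[F s] (K s)
  bdd : ∀ s ω, |K s ω| ≤ C

lemma stepProc_eq_sum {α : Type*} {c : ℝ} (hc : 0 < c) (N : ℕ) (K : ℝ → α → ℝ) (s : ℝ) (ω : α) :
    stepProc c N K s ω =
      ∑ i ∈ Finset.range N, K (c * i) ω * (Ico (c * i) (c * (i + 1))).indicator 1 s := by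
  rcases lt_or_ge s 0 with hs | hs
  · rw [stepProc, indicator_of_notMem (by simp [hs])]
    refine (Finset.sum_eq_zero fun i _ => ?_).symm
    rw [indicator_of_notMem fun hi => (hs.trans_le (by positivity)).not_ge hi.1, mul_zero]
  have hcell : ∀ i : ℕ, s ∈ Ico (c * i) (c * (i + 1)) ↔ i = ⌊s / c⌋₊ := fun i => by
    rw [eq_comm, Nat.floor_eq_iff (by positivity), mem_Ico, le_div_iff₀ hc, div_lt_iff₀ hc,
      mul_comm c, mul_comm c]
  have hlast : s < c * N ↔ ⌊s / c⌋₊ ∈ Finset.range N := by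
    rw [Finset.mem_range, Nat.floor_lt (by positivity), div_lt_iff₀ hc, mul_comm]
  simp only [stepProc, indicator_apply, hcell, mem_Ico, hs, true_and, hlast, Pi.one_apply,
    mul_ite, mul_one, mul_zero, Finset.sum_ite_eq']

variable {μ : Measure Ω} {F : ℝ → MeasurableSpace Ω} {W : ℝ → Ω → ℝ}

lemma IsBM.integral_leftSum_sub_leftSum_sq (hB : IsBM μ F W) [IsFiniteMeasure μ] {c c' : ℝ}
    (hc : 0 < c) (hc' : 0 < c') (N N' : ℕ) {K K' : ℝ → Ω → ℝ} {C : ℝ}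
    (hK : IsBddAdapted F C K) (hK' : IsBddAdapted F C K') :
    ∫ ω, (leftSum c N K W ω - leftSum c' N' K' W ω) ^ 2 ∂μ =
      ∫ s, ∫ ω, (stepProc c N K s ω - stepProc c' N' K' s ω) ^ 2 ∂μ := by
  have hiso := hB.integral_sum_mul_incr_sq (ι := ℕ ⊕ ℕ)
    (Finset.disjSum (Finset.range N) (Finset.range N'))
    (a := Sum.elim (fun i => c * i) (fun i => c' * i))
    (b := Sum.elim (fun i => c * (i + 1)) (fun i => c' * (i + 1)))
    (X := Sum.elim (fun i => K (c * i)) (fun i ω => - K' (c' * i) ω)) (C := C)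
    (Sum.rec (fun i => by dsimp; positivity) fun i => by dsimp; positivity)
    (Sum.rec (fun i => by dsimp; gcongr; simp) fun i => by dsimp; gcongr; simp)
    (Sum.rec (fun i => hK.meas _ (by positivity)) fun i => (hK'.meas _ (by positivity)).neg)
    (Sum.rec (fun i ω => hK.bdd _ _) fun i ω => by simpa using hK'.bdd _ _)
  simpa only [leftSum, Finset.sum_disjSum, Sum.elim_inl, Sum.elim_inr, neg_mul,
    Finset.sum_neg_distrib, ← sub_eq_add_neg,
    ← stepProc_eq_sum hc, ← stepProc_eq_sum hc'] using hiso

lemma IsBM.measurable_leftSum (hB : IsBM μ F W) {c : ℝ} (hc : 0 ≤ c) (N : ℕ) {K : ℝ → Ω → ℝ}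
    {C : ℝ} (hK : IsBddAdapted F C K) : Measurable[F (c * N)] (leftSum c N K W) := by
  have hmono : Monotone fun i : ℕ => c * i := fun i j hij => by dsimp; gcongr
  unfold leftSum
  simpa only [Nat.cast_add_one] using
    hB.measurable_sum_mul_incr hmono (by simp) (fun i => hK.meas (c * i) (by positivity)) N

lemma IsBM.memLp_two_leftSum (hB : IsBM μ F W) {c : ℝ} (hc : 0 ≤ c) (N : ℕ) {K : ℝ → Ω → ℝ}
    {C : ℝ} (hK : IsBddAdapted F C K) : MemLp (leftSum c N K W) 2 μ :=
  memLp_finsetSum _ fun i _ => hB.memLp_two_bdd_mul_incr (by positivity) (by gcongr; simp)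
    ((hK.meas _ (by positivity)).mono (hB.le _) le_rfl) (hK.bdd _)

lemma measurable_uncurry_stepProc (hF : ∀ t, F t ≤ m) {c : ℝ} (hc : 0 < c) (N : ℕ)
    {K : ℝ → Ω → ℝ} {C : ℝ} (hK : IsBddAdapted F C K) :
    Measurable fun p : ℝ × Ω => stepProc c N K p.1 p.2 := by
  simp only [stepProc_eq_sum hc]
  refine Finset.measurable_sum _ fun i _ => ?_
  exact (((hK.meas _ (by positivity)).mono (hF _) le_rfl).comp measurable_snd).mul
    ((measurable_one.indicator measurableSet_Ico).comp measurable_fst)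

lemma IsBddAdapted.abs_stepProc_le {α : Type*} {F : ℝ → MeasurableSpace α} {K : ℝ → α → ℝ}
    {C : ℝ} (hK : IsBddAdapted F C K) {c : ℝ} {N : ℕ} {T : ℝ} (hT : c * N ≤ T) (s : ℝ) (ω : α) :
    |stepProc c N K s ω| ≤ (Ico 0 T).indicator (fun _ => C) s := by
  have hC : 0 ≤ C := (abs_nonneg _).trans (hK.bdd 0 ω)
  by_cases hs : s ∈ Ico 0 (c * N)
  · rw [stepProc, indicator_of_mem hs,
      indicator_of_mem (show s ∈ Ico 0 T from ⟨hs.1, hs.2.trans_le hT⟩)]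
    exact hK.bdd _ _
  · rw [stepProc, indicator_of_notMem hs, abs_zero]
    exact indicator_nonneg (fun _ _ => hC) s

lemma norm_integral_stepProc_sub_stepProc_sq_le [IsProbabilityMeasure μ] {K K' : ℝ → Ω → ℝ}
    {C : ℝ} (hK : IsBddAdapted F C K) (hK' : IsBddAdapted F C K') {c c' : ℝ} {N N' : ℕ} {T : ℝ}
    (hT : c * N ≤ T) (hT' : c' * N' ≤ T) (s : ℝ) :
    ‖∫ ω, (stepProc c N K s ω - stepProc c' N' K' s ω) ^ 2 ∂μ‖ ≤
      (Ico 0 T).indicator (fun _ => (2 * C) ^ 2) s := by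
  have hpointwise : ∀ ω, ‖(stepProc c N K s ω - stepProc c' N' K' s ω) ^ 2‖ ≤
      (Ico 0 T).indicator (fun _ => (2 * C) ^ 2) s := fun ω => by
    have hsub : |stepProc c N K s ω - stepProc c' N' K' s ω| ≤
        2 * (Ico 0 T).indicator (fun _ => C) s := by
      linarith [abs_sub (stepProc c N K s ω) (stepProc c' N' K' s ω),
        hK.abs_stepProc_le hT s ω, hK'.abs_stepProc_le hT' s ω]
    rw [norm_pow, Real.norm_eq_abs]
    refine (pow_le_pow_left₀ (abs_nonneg _) hsub 2).trans_eq ?_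
    by_cases hs : s ∈ Ico 0 T <;> simp [hs]
  simpa using norm_integral_le_of_norm_le_const (ae_of_all μ hpointwise)

section Convergence

variable {ι : Type*} {l : Filter ι} {c c' : ι → ℝ} {N N' : ι → ℕ} {K K' : ι → ℝ → Ω → ℝ} {C t : ℝ}

lemma tendsto_integral_stepProc_sub_stepProc_sq
    (ht : Tendsto (fun i => c i * N i) l (nhds t)) (ht' : Tendsto (fun i => c' i * N' i) l (nhds t))
    {s : ℝ} (hst : s ≠ t)
    (hs : 0 ≤ s → s < t → Tendsto (fun i => ∫ ω, (K i (c i * ⌊s / c i⌋₊) ω -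
      K' i (c' i * ⌊s / c' i⌋₊) ω) ^ 2 ∂μ) l (nhds 0)) :
    Tendsto (fun i => ∫ ω, (stepProc (c i) (N i) (K i) s ω -
      stepProc (c' i) (N' i) (K' i) s ω) ^ 2 ∂μ) l (nhds 0) := by
  by_cases hs0 : 0 ≤ s
  · rcases hst.lt_or_gt with hlt | hgt
    · refine (hs hs0 hlt).congr' ?_
      filter_upwards [ht.eventually_const_lt hlt, ht'.eventually_const_lt hlt] with i hi hi'
      simp [stepProc, hs0, hi, hi']
    · refine tendsto_const_nhds.congr' ?_
      filter_upwards [ht.eventually_lt_const hgt, ht'.eventually_lt_const hgt] with i hi hi'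
      simp [stepProc, hi.not_gt, hi'.not_gt]
  · simp [stepProc, hs0, tendsto_const_nhds]

lemma IsBM.tendsto_integral_leftSum_sub_leftSum_sq (hB : IsBM μ F W) [IsProbabilityMeasure μ]
    [l.IsCountablyGenerated] (hc : ∀ i, 0 < c i) (hc' : ∀ i, 0 < c' i)
    (hK : ∀ i, IsBddAdapted F C (K i)) (hK' : ∀ i, IsBddAdapted F C (K' i))
    (ht : Tendsto (fun i => c i * N i) l (nhds t)) (ht' : Tendsto (fun i => c' i * N' i) l (nhds t))
    (hKK' : ∀ s, 0 < s → s < t → ∀ᵐ ω ∂μ, Tendsto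
      (fun i => K i (c i * ⌊s / c i⌋₊) ω - K' i (c' i * ⌊s / c' i⌋₊) ω) l (nhds 0)) :
    Tendsto (fun i => ∫ ω, (leftSum (c i) (N i) (K i) W ω -
      leftSum (c' i) (N' i) (K' i) W ω) ^ 2 ∂μ) l (nhds 0) := by
  simp only [hB.integral_leftSum_sub_leftSum_sq (hc _) (hc' _) _ _ (hK _) (hK' _)]
  rw [← integral_zero ℝ ℝ]
  refine tendsto_integral_filter_of_dominated_convergence
    ((Ico 0 (t + 1)).indicator fun _ => (2 * C) ^ 2) (.of_forall fun i => ?_) ?_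
    ((integrable_indicator_iff measurableSet_Ico).2
      (continuous_const.integrableOn_Icc.mono_set Ico_subset_Icc_self)) ?_
  · have hmeas := ((measurable_uncurry_stepProc hB.le (hc i) (N i) (hK i)).sub
      (measurable_uncurry_stepProc hB.le (hc' i) (N' i) (hK' i))).pow_const 2
    exact (hmeas.stronglyMeasurable.integral_prod_right (ν := μ)).aestronglyMeasurable
  · filter_upwards [ht.eventually_le_const (lt_add_one t), ht'.eventually_le_const (lt_add_one t)]
      with i hi hi'
    exact ae_of_all _ (norm_integral_stepProc_sub_stepProc_sq_le (hK i) (hK' i) hi hi')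
  · filter_upwards [Measure.ae_ne volume 0, Measure.ae_ne volume t] with s hs hst
    refine tendsto_integral_stepProc_sub_stepProc_sq ht ht' hst fun hs0 hlt =>
      tendsto_integral_sq_of_bounded (C := C + C) (fun i => ?_)
        (fun i ω => (abs_sub _ _).trans (add_le_add ((hK i).bdd _ _) ((hK' i).bdd _ _)))
        (hKK' s (hs0.lt_of_ne' hs) hlt)
    have hci := (hc i).le
    have hci' := (hc' i).le
    exact (((hK i).meas _ (by positivity)).mono (hB.le _) le_rfl).sub
      (((hK' i).meas _ (by positivity)).mono (hB.le _) le_rfl)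

lemma IsBM.tendstoInMeasure_leftSum_sub_leftSum (hB : IsBM μ F W) [IsProbabilityMeasure μ]
    [l.IsCountablyGenerated] (hc : ∀ i, 0 < c i) (hc' : ∀ i, 0 < c' i)
    (hK : ∀ i, IsBddAdapted F C (K i)) (hK' : ∀ i, IsBddAdapted F C (K' i))
    (ht : Tendsto (fun i => c i * N i) l (nhds t)) (ht' : Tendsto (fun i => c' i * N' i) l (nhds t))
    (hKK' : ∀ s, 0 < s → s < t → ∀ᵐ ω ∂μ, Tendsto
      (fun i => K i (c i * ⌊s / c i⌋₊) ω - K' i (c' i * ⌊s / c' i⌋₊) ω) l (nhds 0)) :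
    TendstoInMeasure μ (fun i ω => leftSum (c i) (N i) (K i) W ω -
      leftSum (c' i) (N' i) (K' i) W ω) l (fun _ => 0) :=
  tendstoInMeasure_zero_of_tendsto_integral_sq
    (fun i => (hB.memLp_two_leftSum (hc i).le _ (hK i)).sub
      (hB.memLp_two_leftSum (hc' i).le _ (hK' i)))
    (hB.tendsto_integral_leftSum_sub_leftSum_sq hc hc' hK hK' ht ht' hKK')

end Convergence

end LeftPointSums

/-! ### Dyadic sums -/

section DyadicSums

/-- The mesh `2⁻ⁿ` of the dyadic grid of level `n`. -/
def dyadicMesh (n : ℕ) : ℝ := ((2 : ℝ) ^ n)⁻¹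

/-- The left-point sum of `H` against `X` over the intervals of the dyadic grid of level `n` that
are contained in `[0, t]`. Unlike `rsum`, the grid does not depend on `t`. -/
def dyadicSum {α : Type*} (H X : ℝ → α → ℝ) (t : ℝ) (n : ℕ) (ω : α) : ℝ :=
  leftSum (dyadicMesh n) ⌊t / dyadicMesh n⌋₊ H X ω

/-- Almost sure continuity at each fixed positive time. -/
def IsAEContinuousAt (μ : Measure Ω) (K : ℝ → Ω → ℝ) : Prop :=
  ∀ s, 0 < s → ∀ᵐ ω ∂μ, ContinuousAt (fun r => K r ω) s

lemma tendsto_mul_natFloor_div {ι : Type*} {l : Filter ι} {c u : ι → ℝ} (hc : ∀ i, 0 < c i)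
    (hc0 : Tendsto c l (nhds 0)) (hu : ∀ i, 0 ≤ u i) {s : ℝ} (hus : Tendsto u l (nhds s)) :
    Tendsto (fun i => c i * ⌊u i / c i⌋₊) l (nhds s) := by
  have hlower : Tendsto (fun i => u i - c i) l (nhds s) := by simpa using hus.sub hc0
  refine tendsto_of_tendsto_of_tendsto_of_le_of_le hlower hus (fun i => ?_) fun i => ?_
  · have hfloor := Nat.lt_floor_add_one (u i / c i)
    rw [div_lt_iff₀ (hc i)] at hfloor
    dsimp only
    linarith
  · have hfloor := Nat.floor_le (div_nonneg (hu i) (hc i).le)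
    rwa [le_div_iff₀ (hc i), mul_comm] at hfloor

lemma dyadicMesh_pos (n : ℕ) : 0 < dyadicMesh n := by unfold dyadicMesh; positivity

lemma dyadicMesh_mul_natCast_nonneg (n k : ℕ) : 0 ≤ dyadicMesh n * k :=
  mul_nonneg (dyadicMesh_pos n).le k.cast_nonneg

lemma tendsto_dyadicMesh : Tendsto dyadicMesh atTop (nhds 0) :=
  (tendsto_pow_atTop_nhds_zero_of_lt_one (r := (2 : ℝ)⁻¹) (by norm_num) (by norm_num)).congr
    fun n => inv_pow _ n

lemma tendsto_dyadicMesh_mul_natFloor {t : ℝ} (ht : 0 ≤ t) :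
    Tendsto (fun n => dyadicMesh n * ⌊t / dyadicMesh n⌋₊) atTop (nhds t) :=
  tendsto_mul_natFloor_div dyadicMesh_pos tendsto_dyadicMesh (fun _ => ht) tendsto_const_nhds

lemma rsum_eq_leftSum {α : Type*} (H X : ℝ → α → ℝ) (t : ℝ) (n : ℕ) :
    rsum H X t n = leftSum (t * dyadicMesh n) (2 ^ n) H X := by
  ext ω
  simp only [rsum, leftSum, dyadicMesh, div_eq_mul_inv, mul_right_comm]

lemma rsum_zero {α : Type*} (H X : ℝ → α → ℝ) (n : ℕ) (ω : α) : rsum H X 0 n ω = 0 := by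
  simp [rsum]

lemma dyadicSum_zero {α : Type*} (H X : ℝ → α → ℝ) (n : ℕ) (ω : α) : dyadicSum H X 0 n ω = 0 := by
  simp [dyadicSum, leftSum]

variable {μ : Measure Ω} {F : ℝ → MeasurableSpace Ω} {W : ℝ → Ω → ℝ}

lemma IsBM.tendstoInMeasure_rsum_sub_dyadicSum (hB : IsBM μ F W) [IsProbabilityMeasure μ]
    {K : ℝ → Ω → ℝ} {C : ℝ} (hK : IsBddAdapted F C K) (hcont : IsAEContinuousAt μ K) {t : ℝ}
    (ht : 0 ≤ t) :
    TendstoInMeasure μ (fun n ω => rsum K W t n ω - dyadicSum K W t n ω) atTop (fun _ => 0) := by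
  rcases ht.eq_or_lt with rfl | ht
  · simpa [rsum_zero, dyadicSum_zero] using
      tendstoInMeasure_const (μ := μ) (l := (atTop : Filter ℕ)) (fun _ : Ω => (0 : ℝ))
  have hmesh : Tendsto (fun n => t * dyadicMesh n) atTop (nhds 0) := by
    simpa using tendsto_dyadicMesh.const_mul t
  have hmesh_pos : ∀ n, 0 < t * dyadicMesh n := fun n => mul_pos ht (dyadicMesh_pos n)
  simp only [rsum_eq_leftSum, dyadicSum]
  refine hB.tendstoInMeasure_leftSum_sub_leftSum (t := t) hmesh_pos dyadicMesh_pos (fun _ => hK)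
    (fun _ => hK) (tendsto_const_nhds.congr fun n => ?_) (tendsto_dyadicMesh_mul_natFloor ht.le)
    fun s hs _ => ?_
  · simp [dyadicMesh]
  · filter_upwards [hcont s hs] with ω hω
    simpa using (hω.tendsto.comp (tendsto_mul_natFloor_div hmesh_pos hmesh
      (fun _ => hs.le) tendsto_const_nhds)).sub
      (hω.tendsto.comp (tendsto_dyadicMesh_mul_natFloor hs.le))

lemma IsBM.tendstoInMeasure_rsum_iff_dyadicSum (hB : IsBM μ F W) [IsProbabilityMeasure μ]
    {K : ℝ → Ω → ℝ} {C : ℝ} (hK : IsBddAdapted F C K) (hcont : IsAEContinuousAt μ K) {t : ℝ}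
    (ht : 0 ≤ t) {Z : Ω → ℝ} :
    TendstoInMeasure μ (fun n => rsum K W t n) atTop Z ↔
      TendstoInMeasure μ (fun n => dyadicSum K W t n) atTop Z :=
  tendstoInMeasure_congr_of_sub (hB.tendstoInMeasure_rsum_sub_dyadicSum hK hcont ht)

end DyadicSums

/-! ### One-dimensional equations with antitone drift -/

section AntitoneDrift

variable {β z u v u' v' : ℝ → ℝ} {C T η : ℝ}

lemma intervalIntegrable_bdd_comp (hβ : Measurable β) (hC : ∀ y, |β y| ≤ C) (hu : Measurable u)
    (a b : ℝ) : IntervalIntegrable (fun s => β (u s)) volume a b :=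
  (intervalIntegrable_const (c := C)).mono_fun (hβ.comp hu).aestronglyMeasurable
    (ae_of_all _ fun s => (hC (u s)).trans (le_abs_self C))

lemma abs_integral_bdd_comp_le (hC : ∀ y, |β y| ≤ C) (u : ℝ → ℝ) (a b : ℝ) :
    |∫ s in a..b, β (u s)| ≤ C * |b - a| := by
  rw [← Real.norm_eq_abs (∫ s in a..b, β (u s))]
  exact intervalIntegral.norm_integral_le_of_norm_le_const fun s _ => hC (u s)

/- After the last time at which `D ≤ c`, the function `D` has a nonpositive density. -/
lemma integral_le_of_nonpos_of_lt {p : ℝ → ℝ} {c : ℝ}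
    (hp : ∀ a b, IntervalIntegrable p volume a b) (hc : 0 ≤ c)
    (hneg : ∀ t ∈ Icc 0 T, c < ∫ s in 0..t, p s → p t ≤ 0) {t : ℝ} (ht : t ∈ Icc 0 T) :
    ∫ s in 0..t, p s ≤ c := by
  set D : ℝ → ℝ := fun t => ∫ s in 0..t, p s
  by_contra! hlt
  have hcompact : IsCompact (Icc 0 t ∩ D ⁻¹' Iic c) := isCompact_Icc.inter_right
    (isClosed_Iic.preimage (intervalIntegral.continuous_primitive hp 0))
  obtain ⟨r, ⟨⟨hr0, hrt⟩, hDr⟩, hlast⟩ :=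
    hcompact.exists_isGreatest ⟨0, ⟨le_rfl, ht.1⟩, by simpa [D] using hc⟩
  have hincr : D t - D r = ∫ s in r..t, p s :=
    intervalIntegral.integral_interval_sub_left (hp _ _) (hp _ _)
  have hincr_nonpos : ∫ s in r..t, p s ≤ 0 := by
    rw [intervalIntegral.integral_of_le hrt]
    refine setIntegral_nonpos measurableSet_Ioc fun s hs => ?_
    refine hneg s ⟨hr0.trans hs.1.le, hs.2.trans ht.2⟩ (lt_of_not_ge fun hle => ?_)
    exact (hlast ⟨⟨hr0.trans hs.1.le, hs.2⟩, hle⟩).not_gt hs.1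
  have : D r ≤ c := hDr
  linarith

lemma sub_le_of_antitone_drift (hβ : Antitone β)
    (hu'i : ∀ a b, IntervalIntegrable (fun s => β (u' s)) volume a b)
    (hv'i : ∀ a b, IntervalIntegrable (fun s => β (v' s)) volume a b) (hη : 0 ≤ η)
    (hu : ∀ t ∈ Icc 0 T, u t = z t + ∫ s in 0..t, β (u' s))
    (hv : ∀ t ∈ Icc 0 T, v t = z t + ∫ s in 0..t, β (v' s))
    (hu' : ∀ t ∈ Icc 0 T, |u' t - u t| ≤ η) (hv' : ∀ t ∈ Icc 0 T, |v' t - v t| ≤ η) :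
    ∀ t ∈ Icc 0 T, u t - v t ≤ 2 * η := by
  have hsub : ∀ t ∈ Icc 0 T, u t - v t = ∫ s in 0..t, (β (u' s) - β (v' s)) := fun t ht => by
    rw [hu t ht, hv t ht, intervalIntegral.integral_sub (hu'i _ _) (hv'i _ _)]
    ring
  intro t ht
  rw [hsub t ht]
  refine integral_le_of_nonpos_of_lt (fun a b => (hu'i a b).sub (hv'i a b)) (by positivity)
    (fun s hs hlt => ?_) ht
  rw [← hsub s hs] at hlt
  have hle : v' s ≤ u' s := by linarith [abs_le.1 (hu' s hs), abs_le.1 (hv' s hs)]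
  exact sub_nonpos.2 (hβ hle)

lemma abs_sub_le_of_antitone_drift (hβ : Antitone β)
    (hu'i : ∀ a b, IntervalIntegrable (fun s => β (u' s)) volume a b)
    (hv'i : ∀ a b, IntervalIntegrable (fun s => β (v' s)) volume a b) (hη : 0 ≤ η)
    (hu : ∀ t ∈ Icc 0 T, u t = z t + ∫ s in 0..t, β (u' s))
    (hv : ∀ t ∈ Icc 0 T, v t = z t + ∫ s in 0..t, β (v' s))
    (hu' : ∀ t ∈ Icc 0 T, |u' t - u t| ≤ η) (hv' : ∀ t ∈ Icc 0 T, |v' t - v t| ≤ η) :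
    ∀ t ∈ Icc 0 T, |u t - v t| ≤ 2 * η := fun t ht =>
  abs_sub_le_iff.2 ⟨sub_le_of_antitone_drift hβ hu'i hv'i hη hu hv hu' hv' t ht,
    sub_le_of_antitone_drift hβ hv'i hu'i hη hv hu hv' hu' t ht⟩

end AntitoneDrift

section EulerScheme

/-- The Euler scheme with mesh `δ` for `Y = y₀ + ∫ β(Y) ds + w`, where `w k` is the value of the
driving path at the `k`-th grid point. -/
def eulerSeq (β : ℝ → ℝ) (y₀ δ : ℝ) (w : ℕ → ℝ) : ℕ → ℝ
  | 0 => y₀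
  | k + 1 => eulerSeq β y₀ δ w k + β (eulerSeq β y₀ δ w k) * δ + (w (k + 1) - w k)

/-- The Euler scheme of mesh `2⁻ⁿ` as a piecewise constant path. -/
def eulerStep (β : ℝ → ℝ) (y₀ : ℝ) (w : ℝ → ℝ) (n : ℕ) (t : ℝ) : ℝ :=
  eulerSeq β y₀ (dyadicMesh n) (fun k => w (dyadicMesh n * k)) ⌊t / dyadicMesh n⌋₊

/-- The Euler scheme of mesh `2⁻ⁿ` as a path with the increments of `w`, the drift being frozen
along `eulerStep`. -/
def eulerInterp (β : ℝ → ℝ) (y₀ : ℝ) (w : ℝ → ℝ) (n : ℕ) (t : ℝ) : ℝ :=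
  y₀ + (w t - w 0) + ∫ s in 0..t, β (eulerStep β y₀ w n s)

/-- The values of a path on the dyadic grids, indexed by (generation, position). -/
def dyadicValues (w : ℝ → ℝ) (p : ℕ × ℕ) : ℝ := w (dyadicMesh p.1 * p.2)

/-- The value at time `t` of the limit of the Euler schemes, as a functional of the dyadic values
of the driving path; it takes a junk value where the schemes do not converge. -/
def eulerLimit (β : ℝ → ℝ) (y₀ t : ℝ) (b : ℕ × ℕ → ℝ) : ℝ :=
  limUnder atTop fun n =>
    eulerSeq β y₀ (dyadicMesh n) (fun k => b (n, k)) ⌊t / dyadicMesh n⌋₊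

variable {β w : ℝ → ℝ} {C s t L : ℝ}

lemma measurable_dyadicValues {α : Type*} {_ : MeasurableSpace α} {X : ℝ → α → ℝ}
    (hX : ∀ t, 0 ≤ t → Measurable (X t)) : Measurable fun ω => dyadicValues fun s => X s ω :=
  measurable_pi_lambda _ fun p => hX _ (dyadicMesh_mul_natCast_nonneg p.1 p.2)

lemma measurable_eulerSeq {α : Type*} [MeasurableSpace α] (hβ : Measurable β) (y₀ δ : ℝ)
    {w : α → ℕ → ℝ} (K : ℕ) (hw : ∀ k ≤ K, Measurable fun a => w a k) :
    Measurable fun a => eulerSeq β y₀ δ (w a) K := by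
  induction K with
  | zero => exact measurable_const
  | succ K ih =>
    have hK := ih fun k hk => hw k (by lia)
    exact (hK.add ((hβ.comp hK).mul_const δ)).add ((hw _ le_rfl).sub (hw K (by lia)))

lemma measurable_eulerStep (β : ℝ → ℝ) (y₀ : ℝ) (w : ℝ → ℝ) (n : ℕ) :
    Measurable (eulerStep β y₀ w n) :=
  (measurable_from_nat (f := eulerSeq β y₀ (dyadicMesh n) fun k => w (dyadicMesh n * k))).comp
    (Nat.measurable_floor.comp (measurable_id.div_const _))

lemma measurable_eulerLimit (hβ : Measurable β) (y₀ t : ℝ) : Measurable (eulerLimit β y₀ t) :=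
  (StronglyMeasurable.limUnder (l := atTop) fun n => (measurable_eulerSeq hβ y₀ (dyadicMesh n) _
    fun k _ => measurable_pi_apply (n, k)).stronglyMeasurable).measurable

lemma intervalIntegrable_comp_eulerStep (hβ : Measurable β) (hC : ∀ y, |β y| ≤ C) (y₀ : ℝ)
    (w : ℝ → ℝ) (n : ℕ) (a b : ℝ) :
    IntervalIntegrable (fun s => β (eulerStep β y₀ w n s)) volume a b :=
  intervalIntegrable_bdd_comp hβ hC (measurable_eulerStep β y₀ w n) a b

lemma eulerInterp_sub_eulerInterp (hβ : Measurable β) (hC : ∀ y, |β y| ≤ C) (y₀ : ℝ) (w : ℝ → ℝ)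
    (n : ℕ) (s t : ℝ) :
    eulerInterp β y₀ w n t - eulerInterp β y₀ w n s =
      (w t - w s) + ∫ r in s..t, β (eulerStep β y₀ w n r) := by
  have hint := intervalIntegrable_comp_eulerStep hβ hC y₀ w n
  rw [← intervalIntegral.integral_interval_sub_left (hint 0 t) (hint 0 s)]
  unfold eulerInterp
  ring

lemma integral_comp_eulerStep_cell (β : ℝ → ℝ) (y₀ : ℝ) (w : ℝ → ℝ) (n k : ℕ) :
    ∫ s in (dyadicMesh n * k)..(dyadicMesh n * (k + 1 : ℕ)), β (eulerStep β y₀ w n s) =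
      β (eulerSeq β y₀ (dyadicMesh n) (fun k => w (dyadicMesh n * k)) k) * dyadicMesh n := by
  have hpos := dyadicMesh_pos n
  have hle : dyadicMesh n * k ≤ dyadicMesh n * (k + 1 : ℕ) := by gcongr; simp
  have hconst : ∀ s ∈ Ico (dyadicMesh n * k) (dyadicMesh n * (k + 1 : ℕ)),
      β (eulerStep β y₀ w n s) =
        β (eulerSeq β y₀ (dyadicMesh n) (fun k => w (dyadicMesh n * k)) k) := fun s hs => by
    have hfloor : ⌊s / dyadicMesh n⌋₊ = k := by
      have hs0 : 0 ≤ s := le_trans (by positivity) hs.1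
      rw [Nat.floor_eq_iff (by positivity), le_div_iff₀' hpos, div_lt_iff₀' hpos]
      exact_mod_cast hs
    rw [eulerStep, hfloor]
  rw [intervalIntegral.integral_of_le hle, ← integral_Ico_eq_integral_Ioc,
    setIntegral_congr_fun measurableSet_Ico hconst, setIntegral_const,
    Real.volume_real_Ico_of_le hle]
  push_cast
  simp only [smul_eq_mul]
  ring

lemma eulerInterp_grid (hβ : Measurable β) (hC : ∀ y, |β y| ≤ C) (y₀ : ℝ) (w : ℝ → ℝ) (n k : ℕ) :
    eulerInterp β y₀ w n (dyadicMesh n * k) =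
      eulerSeq β y₀ (dyadicMesh n) (fun k => w (dyadicMesh n * k)) k := by
  induction k with
  | zero => simp [eulerInterp, eulerSeq]
  | succ k ih =>
    have hincr := eulerInterp_sub_eulerInterp hβ hC y₀ w n (dyadicMesh n * k)
      (dyadicMesh n * (k + 1 : ℕ))
    rw [integral_comp_eulerStep_cell, ih] at hincr
    rw [eulerSeq]
    linarith

lemma abs_eulerStep_sub_eulerInterp_le (hβ : Measurable β) (hC : ∀ y, |β y| ≤ C) (y₀ : ℝ)
    (w : ℝ → ℝ) (n : ℕ) (t : ℝ) :
    |eulerStep β y₀ w n t - eulerInterp β y₀ w n t| ≤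
      |w (dyadicMesh n * ⌊t / dyadicMesh n⌋₊) - w t| +
        C * |dyadicMesh n * ⌊t / dyadicMesh n⌋₊ - t| := by
  rw [eulerStep, ← eulerInterp_grid hβ hC, eulerInterp_sub_eulerInterp hβ hC]
  exact (abs_add_le _ _).trans (add_le_add_right (abs_integral_bdd_comp_le hC _ _ _) _)

lemma eventually_abs_eulerStep_sub_eulerInterp_le (hβ : Measurable β) (hC : ∀ y, |β y| ≤ C)
    (y₀ : ℝ) (hw : Continuous w) (T : ℝ) {ε : ℝ} (hε : 0 < ε) :
    ∀ᶠ n in atTop, ∀ t ∈ Icc 0 T, |eulerStep β y₀ w n t - eulerInterp β y₀ w n t| ≤ ε := by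
  have hC0 : 0 ≤ C := (abs_nonneg _).trans (hC 0)
  obtain ⟨δ, hδ, huc⟩ := Metric.uniformContinuousOn_iff.1
    (isCompact_Icc.uniformContinuousOn_of_continuous (hw.continuousOn (s := Icc 0 T)))
    (ε / 2) (by positivity)
  filter_upwards [tendsto_dyadicMesh.eventually_lt_const hδ,
    (tendsto_dyadicMesh.const_mul C).eventually_lt_const (show C * 0 < ε / 2 by simpa using hε)]
    with n hmesh hCmesh t ht
  have hpos := dyadicMesh_pos n
  have hfloor_le : dyadicMesh n * ⌊t / dyadicMesh n⌋₊ ≤ t :=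
    (le_div_iff₀' hpos).1 (Nat.floor_le (div_nonneg ht.1 hpos.le))
  have hlt_floor : t < dyadicMesh n * (⌊t / dyadicMesh n⌋₊ + 1) :=
    (div_lt_iff₀' hpos).1 (Nat.lt_floor_add_one _)
  have hdist : |dyadicMesh n * ⌊t / dyadicMesh n⌋₊ - t| ≤ dyadicMesh n := by
    rw [abs_le]
    constructor <;> linarith
  have hw_near := huc _ ⟨by positivity, hfloor_le.trans ht.2⟩ t ht (hdist.trans_lt hmesh)
  calc |eulerStep β y₀ w n t - eulerInterp β y₀ w n t|
      ≤ |w (dyadicMesh n * ⌊t / dyadicMesh n⌋₊) - w t| +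
          C * |dyadicMesh n * ⌊t / dyadicMesh n⌋₊ - t| :=
        abs_eulerStep_sub_eulerInterp_le hβ hC y₀ w n t
    _ ≤ ε / 2 + C * dyadicMesh n := by gcongr; exact hw_near.le
    _ ≤ ε := by linarith

lemma tendsto_eulerStep_iff_eulerInterp (hβ : Measurable β) (hC : ∀ y, |β y| ≤ C) (y₀ : ℝ)
    (hw : Continuous w) (ht : 0 ≤ t) :
    Tendsto (fun n => eulerStep β y₀ w n t) atTop (nhds L) ↔
      Tendsto (fun n => eulerInterp β y₀ w n t) atTop (nhds L) := by
  have hsub : Tendsto (fun n => eulerStep β y₀ w n t - eulerInterp β y₀ w n t) atTop (nhds 0) := by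
    refine Metric.tendsto_nhds.2 fun ε hε => ?_
    filter_upwards [eventually_abs_eulerStep_sub_eulerInterp_le hβ hC y₀ hw t (half_pos hε)]
      with n hn
    rw [Real.dist_eq, sub_zero]
    linarith [hn t ⟨ht, le_rfl⟩]
  exact ⟨fun h => by simpa using h.sub hsub, fun h => by simpa using h.add hsub⟩

lemma tendsto_eulerStep_of_eq_add_integral (hβ : Antitone β) (hC : ∀ y, |β y| ≤ C) (y₀ : ℝ)
    (hw : Continuous w) {Y : ℝ → ℝ} (hYm : Measurable Y)
    (hY : ∀ t, 0 ≤ t → Y t = y₀ + (w t - w 0) + ∫ s in 0..t, β (Y s)) (ht : 0 ≤ t) :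
    Tendsto (fun n => eulerStep β y₀ w n t) atTop (nhds (Y t)) := by
  rw [tendsto_eulerStep_iff_eulerInterp hβ.measurable hC y₀ hw ht]
  refine Metric.tendsto_nhds.2 fun ε hε => ?_
  have hε4 : 0 < ε / 4 := by positivity
  filter_upwards [eventually_abs_eulerStep_sub_eulerInterp_le hβ.measurable hC y₀ hw t hε4]
    with n hn
  have hcomp := abs_sub_le_of_antitone_drift hβ
    (intervalIntegrable_comp_eulerStep hβ.measurable hC y₀ w n)
    (intervalIntegrable_bdd_comp hβ.measurable hC hYm) hε4.le
    (fun s _ => rfl) (fun s hs => hY s hs.1) hn (fun s _ => by simpa using hε4.le) t ⟨ht, le_rfl⟩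
  rw [Real.dist_eq]
  exact hcomp.trans_lt (by linarith)

lemma exists_tendsto_eulerStep (hβ : Antitone β) (hC : ∀ y, |β y| ≤ C) (y₀ : ℝ)
    (hw : Continuous w) (ht : 0 ≤ t) :
    ∃ L, Tendsto (fun n => eulerStep β y₀ w n t) atTop (nhds L) := by
  simp only [tendsto_eulerStep_iff_eulerInterp hβ.measurable hC y₀ hw ht]
  refine cauchySeq_tendsto_of_complete (Metric.cauchySeq_iff.2 fun ε hε => ?_)
  have hε4 : 0 < ε / 4 := by positivity
  obtain ⟨N, hN⟩ := eventually_atTop.1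
    (eventually_abs_eulerStep_sub_eulerInterp_le hβ.measurable hC y₀ hw t hε4)
  refine ⟨N, fun n hn k hk => ?_⟩
  have hcomp := abs_sub_le_of_antitone_drift hβ
    (intervalIntegrable_comp_eulerStep hβ.measurable hC y₀ w n)
    (intervalIntegrable_comp_eulerStep hβ.measurable hC y₀ w k) hε4.le
    (fun s _ => rfl) (fun s _ => rfl) (hN n hn) (hN k hk) t ⟨ht, le_rfl⟩
  rw [Real.dist_eq]
  exact hcomp.trans_lt (by linarith)

lemma tendsto_eulerStep_eulerLimit (hβ : Antitone β) (hC : ∀ y, |β y| ≤ C) (y₀ : ℝ)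
    (hw : Continuous w) (ht : 0 ≤ t) :
    Tendsto (fun n => eulerStep β y₀ w n t) atTop (nhds (eulerLimit β y₀ t (dyadicValues w))) :=
  tendsto_nhds_limUnder (exists_tendsto_eulerStep hβ hC y₀ hw ht)

lemma tendsto_eulerInterp_eulerLimit (hβ : Antitone β) (hC : ∀ y, |β y| ≤ C) (y₀ : ℝ)
    (hw : Continuous w) (ht : 0 ≤ t) :
    Tendsto (fun n => eulerInterp β y₀ w n t) atTop
      (nhds (eulerLimit β y₀ t (dyadicValues w))) :=
  (tendsto_eulerStep_iff_eulerInterp hβ.measurable hC y₀ hw ht).1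
    (tendsto_eulerStep_eulerLimit hβ hC y₀ hw ht)

lemma eulerLimit_eq_of_eq_add_integral (hβ : Antitone β) (hC : ∀ y, |β y| ≤ C) (y₀ : ℝ)
    (hw : Continuous w) {Y : ℝ → ℝ} (hYm : Measurable Y)
    (hY : ∀ t, 0 ≤ t → Y t = y₀ + (w t - w 0) + ∫ s in 0..t, β (Y s)) (ht : 0 ≤ t) :
    eulerLimit β y₀ t (dyadicValues w) = Y t :=
  (tendsto_eulerStep_of_eq_add_integral hβ hC y₀ hw hYm hY ht).limUnder_eq

lemma abs_eulerLimit_sub_le (hβ : Antitone β) (hC : ∀ y, |β y| ≤ C) (y₀ : ℝ) (hw : Continuous w)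
    (hs : 0 ≤ s) (ht : 0 ≤ t) :
    |(eulerLimit β y₀ t (dyadicValues w) - w t) - (eulerLimit β y₀ s (dyadicValues w) - w s)| ≤
      C * |t - s| := by
  refine le_of_tendsto (((tendsto_eulerInterp_eulerLimit hβ hC y₀ hw ht).sub_const (w t)).sub
    ((tendsto_eulerInterp_eulerLimit hβ hC y₀ hw hs).sub_const (w s))).abs
    (Eventually.of_forall fun n => ?_)
  have hincr := eulerInterp_sub_eulerInterp hβ.measurable hC y₀ w n s t
  rw [sub_sub_sub_comm, hincr, add_sub_cancel_left]
  exact abs_integral_bdd_comp_le hC _ s t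

/- The drift may be discontinuous, so the limit of the schemes solves the equation only if it
spends no time at the discontinuities of `β`. -/
lemma eulerLimit_eq_add_integral (hβ : Antitone β) (hC : ∀ y, |β y| ≤ C) (y₀ : ℝ)
    (hw : Continuous w)
    (hcont : ∀ᵐ s ∂volume.restrict (Ioi 0), ContinuousAt β (eulerLimit β y₀ s (dyadicValues w)))
    (ht : 0 ≤ t) :
    eulerLimit β y₀ t (dyadicValues w) =
      y₀ + (w t - w 0) + ∫ s in 0..t, β (eulerLimit β y₀ s (dyadicValues w)) := by
  refine tendsto_nhds_unique (tendsto_eulerInterp_eulerLimit hβ hC y₀ hw ht)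
    (tendsto_const_nhds.add ?_)
  refine intervalIntegral.tendsto_integral_filter_of_dominated_convergence (fun _ => C)
    (Eventually.of_forall fun n =>
      (hβ.measurable.comp (measurable_eulerStep β y₀ w n)).aestronglyMeasurable)
    (Eventually.of_forall fun n => ae_of_all _ fun s _ => hC _) intervalIntegrable_const ?_
  filter_upwards [(ae_restrict_iff' measurableSet_Ioi).1 hcont] with s hs hst
  rw [uIoc_of_le ht] at hst
  exact (hs hst.1).tendsto.comp (tendsto_eulerStep_eulerLimit hβ hC y₀ hw hst.1.le)

end EulerScheme

/-! ### Paths with Brownian increments do not charge the origin -/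

section SignedIncrements

variable {μ : Measure Ω} {F : ℝ → MeasurableSpace Ω} {W : ℝ → Ω → ℝ} {a : ℕ → ℝ} {H : ℕ → Ω → ℝ}

lemma gaussianPDFReal_le (x₀ : ℝ) {v : NNReal} (hv : v ≠ 0) (x : ℝ) :
    gaussianPDFReal x₀ v x ≤ (2 * √v)⁻¹ := by
  have hv' : (0 : ℝ) < v := by positivity
  have hexp : Real.exp (-(x - x₀) ^ 2 / (2 * v)) ≤ 1 :=
    Real.exp_le_one_iff.2 (div_nonpos_of_nonpos_of_nonneg (neg_nonpos.2 (sq_nonneg _))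
      (by positivity))
  have hsqrt : 2 * √v ≤ √(2 * Real.pi * v) := by
    refine Real.le_sqrt_of_sq_le ?_
    rw [mul_pow, Real.sq_sqrt hv'.le]
    nlinarith [Real.pi_gt_three]
  calc gaussianPDFReal x₀ v x ≤ (√(2 * Real.pi * v))⁻¹ * 1 := by
        rw [gaussianPDFReal_def]
        exact mul_le_mul_of_nonneg_left hexp (by positivity)
    _ ≤ (2 * √v)⁻¹ := by rw [mul_one]; gcongr

lemma gaussianReal_abs_add_le {v : NNReal} (hv : v ≠ 0) (r x₀ : ℝ) :
    gaussianReal 0 v {x | |x₀ + x| ≤ r} ≤ ENNReal.ofReal (r / √v) := by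
  have hset : {x : ℝ | |x₀ + x| ≤ r} = Icc (-x₀ - r) (-x₀ + r) := by
    ext x
    simp only [mem_ofPred_eq, mem_Icc, abs_le]
    constructor <;> rintro ⟨h₁, h₂⟩ <;> constructor <;> linarith
  rw [hset, gaussianReal_apply _ hv]
  calc ∫⁻ x in Icc (-x₀ - r) (-x₀ + r), gaussianPDF 0 v x
      ≤ ∫⁻ _ in Icc (-x₀ - r) (-x₀ + r), ENNReal.ofReal (2 * √v)⁻¹ :=
        lintegral_mono fun x => ENNReal.ofReal_le_ofReal (gaussianPDFReal_le 0 hv x)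
    _ = ENNReal.ofReal (r / √v) := by
        rw [setLIntegral_const, Real.volume_Icc, ← ENNReal.ofReal_mul (by positivity)]
        congr 1
        field_simp
        ring

lemma measureReal_abs_add_le_of_indepFun [IsProbabilityMeasure μ] {A S : Ω → ℝ}
    (hA : Measurable A) (hS : Measurable S) (hind : IndepFun A S μ) {v : NNReal} (hv : v ≠ 0)
    (hlaw : μ.map S = gaussianReal 0 v) {r : ℝ} (hr : 0 ≤ r) :
    μ.real {ω | |A ω + S ω| ≤ r} ≤ r / √v := by
  have hset : MeasurableSet {p : ℝ × ℝ | |p.1 + p.2| ≤ r} :=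
    measurableSet_le (by fun_prop) measurable_const
  have : IsProbabilityMeasure (μ.map A) := Measure.isProbabilityMeasure_map hA.aemeasurable
  refine ENNReal.toReal_le_of_le_ofReal (by positivity) ?_
  calc μ {ω | |A ω + S ω| ≤ r}
      = ((μ.map A).prod (gaussianReal 0 v)) {p : ℝ × ℝ | |p.1 + p.2| ≤ r} := by
        rw [← hlaw,
          ← (indepFun_iff_map_prod_eq_prod_map_map hA.aemeasurable hS.aemeasurable).1 hind,
          Measure.map_apply (hA.prodMk hS) hset]
        rfl
    _ = ∫⁻ x₀, gaussianReal 0 v {x | |x₀ + x| ≤ r} ∂μ.map A := Measure.prod_apply hset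
    _ ≤ ∫⁻ _, ENNReal.ofReal (r / √v) ∂μ.map A :=
        lintegral_mono fun x₀ => gaussianReal_abs_add_le hv r x₀
    _ = ENNReal.ofReal (r / √v) := by simp

lemma IsBM.integral_mul_cexp_const_mul_sum_signed_incr (hB : IsBM μ F W) [IsFiniteMeasure μ]
    (ha : Monotone a) (ha0 : 0 ≤ a 0) {Z : Ω → ℂ} (hZ : Measurable[F (a 0)] Z) {C : ℝ}
    (hZC : ∀ ω, ‖Z ω‖ ≤ C) (hH : ∀ k, Measurable[F (a k)] (H k)) (hH1 : ∀ k ω, H k ω ^ 2 = 1)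
    (N : ℕ) (θ : ℝ) :
    ∫ ω, Z ω * Complex.exp
        ((θ * ∑ k ∈ Finset.range N, H k ω * (W (a (k + 1)) ω - W (a k) ω) : ℝ) * Complex.I) ∂μ =
      (∫ ω, Z ω ∂μ) * Complex.exp (-((θ ^ 2 * (a N - a 0) / 2 : ℝ) : ℂ)) := by
  have hsum := hB.integral_mul_cexp_sum_mul_incr ha ha0 hZ hZC
    (H := fun k ω => θ * H k ω) (v := fun _ => θ ^ 2) (fun k => (hH k).const_mul θ)
    (fun k ω => by rw [mul_pow, hH1, mul_one]) N
  simpa only [mul_assoc, ← Finset.mul_sum, ← Finset.sum_div, Finset.sum_range_sub] using hsum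

lemma IsBM.charFun_map_sum_signed_incr (hB : IsBM μ F W) [IsProbabilityMeasure μ]
    (ha : Monotone a) (ha0 : 0 ≤ a 0) (hH : ∀ k, Measurable[F (a k)] (H k))
    (hH1 : ∀ k ω, H k ω ^ 2 = 1) (N : ℕ) (θ : ℝ) :
    charFun (μ.map fun ω => ∑ k ∈ Finset.range N, H k ω * (W (a (k + 1)) ω - W (a k) ω)) θ =
      Complex.exp (-((θ ^ 2 * (a N - a 0) / 2 : ℝ) : ℂ)) := by
  have hmeas := (hB.measurable_sum_mul_incr ha ha0 hH N).mono (hB.le _) le_rfl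
  have hone := hB.integral_mul_cexp_const_mul_sum_signed_incr ha ha0 (Z := fun _ => 1)
    measurable_const (fun ω => norm_one.le) hH hH1 N θ
  rw [charFun_apply_real, integral_map hmeas.aemeasurable (by fun_prop)]
  simpa only [one_mul, integral_const, probReal_univ, one_smul, Complex.ofReal_mul] using hone

lemma IsBM.map_sum_signed_incr (hB : IsBM μ F W) [IsProbabilityMeasure μ] (ha : Monotone a)
    (ha0 : 0 ≤ a 0) (hH : ∀ k, Measurable[F (a k)] (H k)) (hH1 : ∀ k ω, H k ω ^ 2 = 1) (N : ℕ) :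
    μ.map (fun ω => ∑ k ∈ Finset.range N, H k ω * (W (a (k + 1)) ω - W (a k) ω)) =
      gaussianReal 0 (a N - a 0).toNNReal := by
  have hmeas := (hB.measurable_sum_mul_incr ha ha0 hH N).mono (hB.le _) le_rfl
  have : IsProbabilityMeasure (μ.map _) := Measure.isProbabilityMeasure_map hmeas.aemeasurable
  refine Measure.ext_of_charFun (funext fun θ => ?_)
  rw [hB.charFun_map_sum_signed_incr ha ha0 hH hH1, charFun_gaussianReal,
    Real.coe_toNNReal _ (sub_nonneg.2 (ha N.zero_le))]
  congr 1
  push_cast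
  ring

lemma IsBM.indepFun_sum_signed_incr (hB : IsBM μ F W) [IsProbabilityMeasure μ] (ha : Monotone a)
    (ha0 : 0 ≤ a 0) (hH : ∀ k, Measurable[F (a k)] (H k)) (hH1 : ∀ k ω, H k ω ^ 2 = 1) (N : ℕ)
    {A : Ω → ℝ} (hA : Measurable[F (a 0)] A) :
    IndepFun A (fun ω => ∑ k ∈ Finset.range N, H k ω * (W (a (k + 1)) ω - W (a k) ω)) μ := by
  have hmeas := (hB.measurable_sum_mul_incr ha ha0 hH N).mono (hB.le _) le_rfl
  have hAm : Measurable A := hA.mono (hB.le _) le_rfl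
  have hcexp (c : ℝ) : Measurable fun x : ℝ => Complex.exp ((c * x : ℝ) * Complex.I) := by fun_prop
  rw [indepFun_iff_charFun_prod hAm.aemeasurable hmeas.aemeasurable]
  intro t
  have hprod := hB.integral_mul_cexp_const_mul_sum_signed_incr ha ha0 ((hcexp t.ofLp.1).comp hA)
    (fun ω => (Complex.norm_exp_ofReal_mul_I _).le) hH hH1 N t.ofLp.2
  rw [hB.charFun_map_sum_signed_incr ha ha0 hH hH1, charFun_apply,
    integral_map (by fun_prop) (by fun_prop), charFun_apply_real,
    integral_map hAm.aemeasurable (by fun_prop)]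
  simp only [← Complex.ofReal_mul]
  refine Eq.trans (integral_congr_ae (ae_of_all _ fun ω => ?_)) hprod
  simp only [Function.comp_apply, ← Complex.exp_add, WithLp.prod_inner_apply]
  congr 1
  simp only [RCLike.inner_apply, conj_trivial]
  push_cast
  ring_nf

lemma IsBM.measureReal_abs_add_sum_signed_incr_le (hB : IsBM μ F W) [IsProbabilityMeasure μ]
    (ha : Monotone a) (ha0 : 0 ≤ a 0) (hH : ∀ k, Measurable[F (a k)] (H k))
    (hH1 : ∀ k ω, H k ω ^ 2 = 1) {N : ℕ} (haN : a 0 < a N) {A : Ω → ℝ}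
    (hA : Measurable[F (a 0)] A) {r : ℝ} (hr : 0 ≤ r) :
    μ.real {ω | |A ω + ∑ k ∈ Finset.range N, H k ω * (W (a (k + 1)) ω - W (a k) ω)| ≤ r} ≤
      r / √(a N - a 0) := by
  have hle := measureReal_abs_add_le_of_indepFun (hA.mono (hB.le _) le_rfl)
    ((hB.measurable_sum_mul_incr ha ha0 hH N).mono (hB.le _) le_rfl)
    (hB.indepFun_sum_signed_incr ha ha0 hH hH1 N hA) (by simpa using haN)
    (hB.map_sum_signed_incr ha ha0 hH hH1 N) hr
  rwa [Real.coe_toNNReal _ (sub_nonneg.2 haN.le)] at hle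

end SignedIncrements

section ZeroSet

variable {μ : Measure Ω} {F : ℝ → MeasurableSpace Ω} {W H : ℝ → Ω → ℝ} {t : ℝ}

lemma measureReal_abs_le_of_tendstoInMeasure [IsFiniteMeasure μ] {ι : Type*} {l : Filter ι}
    [l.NeBot] {X : ι → Ω → ℝ} {X' : Ω → ℝ} (hX : TendstoInMeasure μ X l X') {φ : ℝ → ℝ}
    {r : ℝ} (hφ : ContinuousWithinAt φ (Ioi r) r)
    (hle : ∀ r' > r, ∀ᶠ i in l, μ.real {ω | |X i ω| ≤ r'} ≤ φ r') :
    μ.real {ω | |X' ω| ≤ r} ≤ φ r := by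
  refine ge_of_tendsto hφ (eventually_nhdsWithin_of_forall fun r' hr' => ?_)
  have hη : 0 < r' - r := sub_pos.2 hr'
  have hfar := (tendstoInMeasure_iff_measureReal_norm.1 hX (r' - r) hη).const_add (φ r')
  rw [add_zero] at hfar
  refine ge_of_tendsto hfar ?_
  filter_upwards [hle r' hr'] with i hi
  calc μ.real {ω | |X' ω| ≤ r}
      ≤ μ.real ({ω | |X i ω| ≤ r'} ∪ {ω | r' - r ≤ ‖X i ω - X' ω‖}) := by
        refine measureReal_mono fun ω (hω : |X' ω| ≤ r) => or_iff_not_imp_right.2 fun hnear => ?_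
        have hnear : |X i ω - X' ω| < r' - r := not_le.1 hnear
        change |X i ω| ≤ r'
        linarith [abs_sub_abs_le_abs_sub (X i ω) (X' ω)]
    _ ≤ φ r' + μ.real {ω | r' - r ≤ ‖X i ω - X' ω‖} :=
        (measureReal_union_le _ _).trans (add_le_add_left hi _)

lemma leftSum_add {α : Type*} (c : ℝ) (N M : ℕ) (K X : ℝ → α → ℝ) (ω : α) :
    leftSum c (N + M) K X ω = leftSum c N K X ω + ∑ i ∈ Finset.range M,
      K (c * (N + i : ℕ)) ω * (X (c * (N + (i + 1) : ℕ)) ω - X (c * (N + i : ℕ)) ω) := by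
  simp only [leftSum, Finset.sum_range_add, Nat.cast_add, Nat.cast_one, add_assoc]

lemma isBddAdapted_of_sq_eq_one {α : Type*} {F : ℝ → MeasurableSpace α} {H : ℝ → α → ℝ}
    (hH : ∀ s, 0 ≤ s → Measurable[F s] (H s)) (hH1 : ∀ s ω, H s ω ^ 2 = 1) :
    IsBddAdapted F 1 H :=
  ⟨hH, fun s ω => (sq_le_one_iff_abs_le_one _).1 (hH1 s ω).le⟩

lemma IsBM.measurable_rsum (hB : IsBM μ F W) {C : ℝ} (hH : IsBddAdapted F C H) (ht : 0 ≤ t)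
    (n : ℕ) : Measurable[F t] (rsum H W t n) := by
  have hmeas := hB.measurable_leftSum (mul_nonneg ht (dyadicMesh_pos n).le) (2 ^ n) hH
  rw [← rsum_eq_leftSum] at hmeas
  convert hmeas using 2
  unfold dyadicMesh
  push_cast
  field_simp

lemma IsBM.measureReal_abs_add_rsum_sub_rsum_le (hB : IsBM μ F W) [IsProbabilityMeasure μ]
    (hH : ∀ s, 0 ≤ s → Measurable[F s] (H s)) (hH1 : ∀ s ω, H s ω ^ 2 = 1) (ht : 0 < t) {k n : ℕ}
    (hkn : k ≤ n) {Y : Ω → ℝ} (hY : Measurable[F (t - t * dyadicMesh k)] Y) {r : ℝ} (hr : 0 ≤ r) :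
    μ.real {ω | |Y ω + (rsum H W t n ω - rsum H W (t - t * dyadicMesh k) n ω)| ≤ r} ≤
      r / √(t * dyadicMesh k) := by
  have hbdd := isBddAdapted_of_sq_eq_one hH hH1
  obtain ⟨j, rfl⟩ := Nat.exists_eq_add_of_le hkn
  set c := t * dyadicMesh (k + j) with hc
  have hc0 : 0 < c := mul_pos ht (dyadicMesh_pos _)
  obtain ⟨N, hN⟩ : ∃ N : ℕ, 2 ^ (k + j) = N + 2 ^ j :=
    ⟨_, (Nat.sub_add_cancel (Nat.pow_le_pow_right two_pos (Nat.le_add_left j k))).symm⟩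
  have hlen : c * (N + 2 ^ j : ℕ) = t := by
    rw [← hN, hc, dyadicMesh]
    push_cast
    field_simp
  have hblock : c * 2 ^ j = t * dyadicMesh k := by
    rw [hc, dyadicMesh, dyadicMesh, pow_add]
    field_simp
  have hstart : c * N = t - t * dyadicMesh k := by
    push_cast at hlen
    linarith
  have hstart0 : 0 ≤ t - t * dyadicMesh k := by rw [← hstart]; positivity
  have hle := hB.measureReal_abs_add_sum_signed_incr_le (a := fun i => c * (N + i : ℕ))
    (H := fun i => H (c * (N + i : ℕ))) (N := 2 ^ j) (r := r)
    (A := fun ω => Y ω - rsum H W (t - t * dyadicMesh k) (k + j) ω + leftSum c N H W ω)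
    (fun i i' hii' => by dsimp only; gcongr) (by positivity) (fun i => hH _ (by positivity))
    (fun i => hH1 _) (by gcongr; positivity)
    (by
      rw [add_zero, hstart]
      exact (hY.sub (hB.measurable_rsum hbdd hstart0 _)).add
        (hstart ▸ hB.measurable_leftSum hc0.le N hbdd)) hr
  rw [hlen, add_zero, hstart, sub_sub_cancel] at hle
  convert hle using 6 with ω
  rw [rsum_eq_leftSum, ← hc, hN, leftSum_add]
  ring

/- Conditionally on time `t - δ`, the variable `Y t` is within `C δ` of a Gaussian with standard
deviation `√δ`, hence vanishes with probability at most `C √δ`. -/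
lemma IsBM.ae_ne_zero (hB : IsBM μ F W) [IsProbabilityMeasure μ] {B Y : ℝ → Ω → ℝ}
    (hH : ∀ s, 0 ≤ s → Measurable[F s] (H s)) (hH1 : ∀ s ω, H s ω ^ 2 = 1)
    (hBt : ∀ t, 0 ≤ t → TendstoInMeasure μ (rsum H W t) atTop (B t))
    (hY : ∀ t, 0 ≤ t → Measurable[F t] (Y t)) {C : ℝ} (hC : 0 ≤ C)
    (hLip : ∀ᵐ ω ∂μ, ∀ s t, 0 ≤ s → 0 ≤ t → |(Y t ω - B t ω) - (Y s ω - B s ω)| ≤ C * |t - s|)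
    (ht : 0 < t) : ∀ᵐ ω ∂μ, Y t ω ≠ 0 := by
  have hbound (k : ℕ) : μ.real {ω | Y t ω = 0} ≤ C * √(t * dyadicMesh k) := by
    set δ := t * dyadicMesh k
    have hδ : 0 < δ := mul_pos ht (dyadicMesh_pos k)
    have hs : 0 ≤ t - δ := sub_nonneg.2
      (mul_le_of_le_one_right ht.le (inv_le_one_of_one_le₀ (one_le_pow₀ one_le_two)))
    have hlim := tendstoInMeasure_add (tendstoInMeasure_const (Y (t - δ)))
      (tendstoInMeasure_sub (hBt t ht.le) (hBt (t - δ) hs))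
    calc μ.real {ω | Y t ω = 0}
        ≤ μ.real {ω | |Y (t - δ) ω + (B t ω - B (t - δ) ω)| ≤ C * δ} := by
          refine ENNReal.toReal_mono (measure_ne_top _ _) (measure_mono_ae ?_)
          filter_upwards [hLip] with ω hω (hzero : Y t ω = 0)
          have hω' := hω t (t - δ) ht.le hs
          rwa [hzero, zero_sub, sub_neg_eq_add, sub_add_eq_add_sub, add_sub_assoc,
            sub_sub_cancel_left, abs_neg, abs_of_pos hδ] at hω'
      _ ≤ C * δ / √δ := measureReal_abs_le_of_tendstoInMeasure hlim (φ := fun r => r / √δ)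
          (by fun_prop) fun r' hr' => (eventually_ge_atTop k).mono fun n hn =>
            hB.measureReal_abs_add_rsum_sub_rsum_le hH hH1 ht hn (hY _ hs)
              (le_trans (by positivity) (le_of_lt hr'))
      _ = C * √δ := by rw [mul_div_assoc, Real.div_sqrt]
  have hlim : Tendsto (fun k => C * √(t * dyadicMesh k)) atTop (nhds 0) := by
    simpa using ((tendsto_dyadicMesh.const_mul t).sqrt).const_mul C
  have hzero : μ {ω | Y t ω = 0} = 0 :=
    (measureReal_eq_zero_iff).1 (le_antisymm (ge_of_tendsto' hlim hbound) measureReal_nonneg)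
  simpa [ae_iff] using hzero

end ZeroSet

/-! ### The sign and the bang-bang drift -/

section Sign

lemma psgn_of_pos {y : ℝ} (hy : 0 < y) : psgn y = 1 := if_pos hy

lemma psgn_of_nonpos {y : ℝ} (hy : y ≤ 0) : psgn y = -1 := if_neg hy.not_gt

lemma psgn_sq (y : ℝ) : psgn y ^ 2 = 1 := by
  unfold psgn; split_ifs <;> norm_num

lemma abs_psgn (y : ℝ) : |psgn y| = 1 := by
  unfold psgn; split_ifs <;> simp

lemma psgn_neg {y : ℝ} (hy : y ≠ 0) : psgn (-y) = -psgn y := by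
  rcases lt_or_gt_of_ne hy with hneg | hpos
  · rw [psgn_of_pos (neg_pos.2 hneg), psgn_of_nonpos hneg.le, neg_neg]
  · rw [psgn_of_nonpos (neg_nonpos.2 hpos.le), psgn_of_pos hpos]

lemma measurable_psgn : Measurable psgn :=
  Measurable.ite measurableSet_Ioi measurable_const measurable_const

lemma monotone_psgn : Monotone psgn := fun x y hxy => by
  rcases le_or_gt x 0 with hx | hx
  · rw [psgn_of_nonpos hx]
    unfold psgn; split_ifs <;> norm_num
  · rw [psgn_of_pos hx, psgn_of_pos (hx.trans_le hxy)]

lemma continuousAt_psgn {y : ℝ} (hy : y ≠ 0) : ContinuousAt psgn y := by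
  rcases lt_or_gt_of_ne hy with hneg | hpos
  · exact continuousAt_const.congr
      ((gt_mem_nhds hneg).mono fun z hz => (psgn_of_nonpos (le_of_lt hz)).symm)
  · exact continuousAt_const.congr ((lt_mem_nhds hpos).mono fun z hz => (psgn_of_pos hz).symm)

lemma ite_le_eq_psgn (a b x y : ℝ) :
    (if x ≤ y then a else b) = (a + b) / 2 + (b - a) / 2 * psgn (x - y) := by
  split_ifs with hxy
  · rw [psgn_of_nonpos (sub_nonpos.2 hxy)]; ring
  · rw [psgn_of_pos (sub_pos.2 (not_le.1 hxy))]; ring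

/-- The drift `-λ sgn` of the difference of the two particles, which pushes towards the origin at
constant speed `λ`. -/
def bangDrift (lam y : ℝ) : ℝ := -lam * psgn y

lemma antitone_bangDrift {lam : ℝ} (hlam : 0 ≤ lam) : Antitone (bangDrift lam) := fun _ _ hxy =>
  mul_le_mul_of_nonpos_left (monotone_psgn hxy) (neg_nonpos.2 hlam)

lemma measurable_bangDrift (lam : ℝ) : Measurable (bangDrift lam) := measurable_psgn.const_mul _

lemma abs_bangDrift_le {lam : ℝ} (hlam : 0 ≤ lam) (y : ℝ) : |bangDrift lam y| ≤ lam := by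
  rw [bangDrift, abs_mul, abs_neg, abs_of_nonneg hlam, abs_psgn, mul_one]

lemma continuousAt_bangDrift (lam : ℝ) {y : ℝ} (hy : y ≠ 0) : ContinuousAt (bangDrift lam) y :=
  (continuousAt_psgn hy).const_mul _

end Sign

/-! ### Riemann-sum stochastic integrals -/

section StochasticIntegral

variable {μ : Measure Ω} {H H' X I I' : ℝ → Ω → ℝ} {t : ℝ}

lemma ae_forall_eq_of_continuousOn_Ici {f f' : ℝ → Ω → ℝ}
    (hf : ∀ᵐ ω ∂μ, ContinuousOn (fun t => f t ω) (Ici 0))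
    (hf' : ∀ᵐ ω ∂μ, ContinuousOn (fun t => f' t ω) (Ici 0))
    (h : ∀ t, 0 ≤ t → f t =ᵐ[μ] f' t) : ∀ᵐ ω ∂μ, ∀ t, 0 ≤ t → f t ω = f' t ω := by
  have hrat : ∀ᵐ ω ∂μ, ∀ q : ℚ, f (max q 0) ω = f' (max q 0) ω :=
    ae_all_iff.2 fun q => h _ (le_max_right _ _)
  filter_upwards [hf, hf', hrat] with ω hω hω' heq t ht
  have hmax : Continuous fun t : ℝ => max t 0 := by fun_prop
  have hmem (t : ℝ) : max t 0 ∈ Ici (0 : ℝ) := le_max_right t 0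
  have hext := Continuous.ext_on Rat.denseRange_cast (hω.comp_continuous hmax hmem)
    (hω'.comp_continuous hmax hmem) (by rintro _ ⟨q, rfl⟩; exact heq q)
  simpa [max_eq_left ht] using congrFun hext t

lemma rsum_one {α : Type*} (X : ℝ → α → ℝ) (t : ℝ) (n : ℕ) (ω : α) :
    rsum (fun _ _ => 1) X t n ω = X t ω - X 0 ω := by
  have htel := Finset.sum_range_sub (fun i : ℕ => X (t * i / 2 ^ n) ω) (2 ^ n)
  push_cast at htel
  simp only [rsum, one_mul, htel, mul_zero, zero_div]
  rw [mul_div_cancel_right₀ t (by positivity)]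

lemma isSI_one (X : ℝ → Ω → ℝ) : IsSI μ (fun _ _ => 1) X (fun t ω => X t ω - X 0 ω) :=
  ⟨ae_of_all _ fun _ => sub_self _, fun t _ => by
    simpa only [funext (rsum_one X t _)] using tendstoInMeasure_const _⟩

lemma IsSI.const_mul_add_const_mul (h : IsSI μ H X I) (h' : IsSI μ H' X I') (a b : ℝ) :
    IsSI μ (fun s ω => a * H s ω + b * H' s ω) X (fun t ω => a * I t ω + b * I' t ω) := by
  refine ⟨?_, fun t ht => ?_⟩
  · filter_upwards [h.1, h'.1] with ω h0 h0'
    simp [h0, h0']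
  · refine (tendstoInMeasure_add (tendstoInMeasure_bdd_mul (fun _ => le_refl |a|) (h.2 t ht))
      (tendstoInMeasure_bdd_mul (fun _ => le_refl |b|) (h'.2 t ht))).congr_left
        fun n => ae_of_all _ fun ω => ?_
    simp only [rsum, Finset.mul_sum, ← Finset.sum_add_distrib]
    exact Finset.sum_congr rfl fun i _ => by ring

lemma IsSI.congr_integrand (h : IsSI μ H X I)
    (hH : ∀ᵐ ω ∂μ, ∀ s, 0 ≤ s → H s ω = H' s ω) : IsSI μ H' X I := by
  refine ⟨h.1, fun t ht => (h.2 t ht).congr_left fun n => ?_⟩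
  filter_upwards [hH] with ω hω
  exact Finset.sum_congr rfl fun i _ => by rw [hω _ (by positivity)]

lemma IsSI.ae_eq (h : IsSI μ H X I) (h' : IsSI μ H X I') (ht : 0 ≤ t) : I t =ᵐ[μ] I' t :=
  tendstoInMeasure_ae_unique (h.2 t ht) (h'.2 t ht)

end StochasticIntegral

/-! ### The difference of the two particles, and pathwise uniqueness -/

section RankSystem

variable {μ : Measure Ω} {F : ℝ → MeasurableSpace Ω} {W : ℝ → Ω → ℝ} {g h x₁ x₂ : ℝ}
  {X₁ X₂ I₁ I₂ : ℝ → Ω → ℝ}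

/-- The part common to the systems (4.7) and (4.9): `(X₁, X₂)` is adapted and continuous, has the
rank-dependent drifts `g` (laggard) and `-h` (leader), and noise terms `I₁`, `I₂`. -/
structure IsRankSystem (μ : Measure Ω) (F : ℝ → MeasurableSpace Ω) (g h x₁ x₂ : ℝ)
    (X₁ X₂ I₁ I₂ : ℝ → Ω → ℝ) : Prop where
  meas₁ : ∀ t, 0 ≤ t → Measurable[F t] (X₁ t)
  meas₂ : ∀ t, 0 ≤ t → Measurable[F t] (X₂ t)
  cont : ∀ᵐ ω ∂μ, Continuous (fun t => X₁ t ω) ∧ Continuous (fun t => X₂ t ω)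
  eq : ∀ᵐ ω ∂μ, ∀ t : ℝ, 0 ≤ t →
    X₁ t ω = x₁ + (∫ s in 0..t, if X₁ s ω ≤ X₂ s ω then g else -h) + I₁ t ω ∧
    X₂ t ω = x₂ + (∫ s in 0..t, if X₁ s ω ≤ X₂ s ω then -h else g) + I₂ t ω

lemma isRankSystem_of_comap_le
    (hX : ∀ t, 0 ≤ t → MeasurableSpace.comap (fun ω => (X₁ t ω, X₂ t ω)) inferInstance ≤ F t)
    (hcont : ∀ᵐ ω ∂μ, Continuous (fun t => X₁ t ω) ∧ Continuous (fun t => X₂ t ω))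
    (heq : ∀ᵐ ω ∂μ, ∀ t : ℝ, 0 ≤ t →
      X₁ t ω = x₁ + (∫ s in 0..t, if X₁ s ω ≤ X₂ s ω then g else -h) + I₁ t ω ∧
      X₂ t ω = x₂ + (∫ s in 0..t, if X₁ s ω ≤ X₂ s ω then -h else g) + I₂ t ω) :
    IsRankSystem μ F g h x₁ x₂ X₁ X₂ I₁ I₂ where
  meas₁ t ht := measurable_fst.comp (measurable_iff_comap_le.2 (hX t ht))
  meas₂ t ht := measurable_snd.comp (measurable_iff_comap_le.2 (hX t ht))
  cont := hcont
  eq := heq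

lemma integral_ite_le_eq {u v : ℝ → ℝ} (hu : Measurable u) (hv : Measurable v) (a b t : ℝ) :
    ∫ s in 0..t, (if u s ≤ v s then a else b) =
      (a + b) / 2 * t + (b - a) / 2 * ∫ s in 0..t, psgn (u s - v s) := by
  have hint : IntervalIntegrable (fun s => psgn (u s - v s)) volume 0 t :=
    intervalIntegrable_bdd_comp measurable_psgn (fun y => (abs_psgn y).le) (hu.sub hv) 0 t
  simp_rw [ite_le_eq_psgn]
  rw [intervalIntegral.integral_add (by simp) (hint.const_mul _),
    intervalIntegral.integral_const_mul, intervalIntegral.integral_const, sub_zero, smul_eq_mul,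
    mul_comm t]

lemma IsRankSystem.continuous_sub (hS : IsRankSystem μ F g h x₁ x₂ X₁ X₂ I₁ I₂) :
    ∀ᵐ ω ∂μ, Continuous fun t => X₁ t ω - X₂ t ω :=
  hS.cont.mono fun _ hω => hω.1.sub hω.2

lemma IsRankSystem.sub_eq (hS : IsRankSystem μ F g h x₁ x₂ X₁ X₂ I₁ I₂) :
    ∀ᵐ ω ∂μ, ∀ t, 0 ≤ t → X₁ t ω - X₂ t ω =
      x₁ - x₂ + (I₁ t ω - I₂ t ω) + ∫ s in 0..t, bangDrift (g + h) (X₁ s ω - X₂ s ω) := by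
  filter_upwards [hS.eq, hS.cont] with ω heq ⟨hc₁, hc₂⟩ t ht
  obtain ⟨h₁, h₂⟩ := heq t ht
  rw [integral_ite_le_eq hc₁.measurable hc₂.measurable] at h₁ h₂
  simp only [bangDrift, intervalIntegral.integral_const_mul]
  linear_combination h₁ - h₂

lemma IsRankSystem.continuousOn_noise_sub (hgh : 0 ≤ g + h)
    (hS : IsRankSystem μ F g h x₁ x₂ X₁ X₂ I₁ I₂) :
    ∀ᵐ ω ∂μ, ContinuousOn (fun t => I₁ t ω - I₂ t ω) (Ici 0) := by
  filter_upwards [hS.sub_eq, hS.continuous_sub] with ω heq hcont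
  have hdrift : Continuous fun t => ∫ s in 0..t, bangDrift (g + h) (X₁ s ω - X₂ s ω) :=
    intervalIntegral.continuous_primitive (intervalIntegrable_bdd_comp (measurable_bangDrift _)
      (abs_bangDrift_le hgh) hcont.measurable) 0
  refine ((hcont.sub continuous_const).sub hdrift).continuousOn.congr
    (f := fun t => X₁ t ω - X₂ t ω - (x₁ - x₂) - _) fun t ht => ?_
  linear_combination -heq t ht

lemma IsRankSystem.sub_eq_eulerLimit {B : ℝ → Ω → ℝ} (hgh : 0 ≤ g + h)
    (hS : IsRankSystem μ F g h x₁ x₂ X₁ X₂ I₁ I₂) (hB : ∀ᵐ ω ∂μ, Continuous fun t => B t ω)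
    (hIB : ∀ t, 0 ≤ t → (fun ω => I₁ t ω - I₂ t ω) =ᵐ[μ] fun ω => B t ω - B 0 ω) :
    ∀ᵐ ω ∂μ, ∀ t, 0 ≤ t → X₁ t ω - X₂ t ω =
      eulerLimit (bangDrift (g + h)) (x₁ - x₂) t (dyadicValues fun t => B t ω) := by
  have hnoise := ae_forall_eq_of_continuousOn_Ici (f' := fun t ω => B t ω - B 0 ω)
    (hS.continuousOn_noise_sub hgh)
    (hB.mono fun ω hω => (hω.sub continuous_const).continuousOn) hIB
  filter_upwards [hS.sub_eq, hS.continuous_sub, hB, hnoise] with ω heq hcont hBc hnoise t ht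
  refine (eulerLimit_eq_of_eq_add_integral (antitone_bangDrift hgh) (abs_bangDrift_le hgh)
    (x₁ - x₂) hBc hcont.measurable (fun t ht => ?_) ht).symm
  rw [heq t ht, hnoise t ht]

lemma Solves47.exists_isRankSystem (hX : Solves47 μ F g h x₁ x₂ W X₁ X₂) :
    ∃ I₁ I₂, IsRankSystem μ F g h x₁ x₂ X₁ X₂ I₁ I₂ ∧
      IsSI μ (fun s ω => if X₁ s ω ≤ X₂ s ω then 0 else 1) W I₁ ∧
      IsSI μ (fun s ω => if X₁ s ω ≤ X₂ s ω then -1 else 0) W I₂ :=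
  let ⟨hadp, hcont, I₁, I₂, hI₁, hI₂, heq⟩ := hX
  ⟨I₁, I₂, isRankSystem_of_comap_le hadp hcont heq, hI₁, hI₂⟩

lemma Solves49.exists_isRankSystem (hX : Solves49 μ F g h x₁ x₂ W X₁ X₂) :
    ∃ I₁ I₂, IsRankSystem μ F g h x₁ x₂ X₁ X₂ I₁ I₂ ∧
      IsSI μ (fun s ω => if X₁ s ω ≤ X₂ s ω then 0 else 1) W I₁ ∧
      IsSI μ (fun s ω => if X₁ s ω ≤ X₂ s ω then 1 else 0) W I₂ :=
  let ⟨hadp, hcont, I₁, I₂, hI₁, hI₂, heq⟩ := hX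
  ⟨I₁, I₂, isRankSystem_of_comap_le hadp hcont heq, hI₁, hI₂⟩

lemma Solves47.sub_eq_eulerLimit (hgh : 0 ≤ g + h) (hW : ∀ᵐ ω ∂μ, Continuous fun t => W t ω)
    (hX : Solves47 μ F g h x₁ x₂ W X₁ X₂) :
    ∀ᵐ ω ∂μ, ∀ t, 0 ≤ t → X₁ t ω - X₂ t ω =
      eulerLimit (bangDrift (g + h)) (x₁ - x₂) t (dyadicValues fun t => W t ω) := by
  obtain ⟨I₁, I₂, hS, hI₁, hI₂⟩ := hX.exists_isRankSystem
  have hone : IsSI μ (fun _ _ => 1) W (fun t ω => 1 * I₁ t ω + -1 * I₂ t ω) :=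
    (hI₁.const_mul_add_const_mul hI₂ 1 (-1)).congr_integrand
      (ae_of_all _ fun ω s _ => by split_ifs <;> norm_num)
  refine hS.sub_eq_eulerLimit hgh hW fun t ht => ?_
  filter_upwards [hone.ae_eq (isSI_one W) ht] with ω hω
  linear_combination hω

theorem Solves47.pathwise_unique {X₁' X₂' : ℝ → Ω → ℝ} (hgh : 0 ≤ g + h)
    (hW : ∀ᵐ ω ∂μ, Continuous fun t => W t ω) (hX : Solves47 μ F g h x₁ x₂ W X₁ X₂)
    (hX' : Solves47 μ F g h x₁ x₂ W X₁' X₂') :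
    ∀ᵐ ω ∂μ, ∀ t, 0 ≤ t → X₁ t ω = X₁' t ω ∧ X₂ t ω = X₂' t ω := by
  obtain ⟨I₁, I₂, hS, hI, -⟩ := hX.exists_isRankSystem
  obtain ⟨I₁', I₂', hS', hI', -⟩ := hX'.exists_isRankSystem
  have hsub : ∀ᵐ ω ∂μ, ∀ t, 0 ≤ t → X₁ t ω - X₂ t ω = X₁' t ω - X₂' t ω := by
    filter_upwards [hX.sub_eq_eulerLimit hgh hW, hX'.sub_eq_eulerLimit hgh hW] with ω hω hω' t ht
    rw [hω t ht, hω' t ht]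
  have hrank : ∀ᵐ ω ∂μ, ∀ t, 0 ≤ t → (X₁ t ω ≤ X₂ t ω ↔ X₁' t ω ≤ X₂' t ω) := by
    filter_upwards [hsub] with ω hω t ht
    rw [← sub_nonpos, hω t ht, sub_nonpos]
  have hnoise (t : ℝ) (ht : 0 ≤ t) : I₁ t =ᵐ[μ] I₁' t :=
    (hI.congr_integrand (hrank.mono fun ω hω s hs => by simp only [hω s hs])).ae_eq hI' ht
  have hfst : ∀ᵐ ω ∂μ, ∀ t, 0 ≤ t → X₁ t ω = X₁' t ω := by
    refine ae_forall_eq_of_continuousOn_Ici (hS.cont.mono fun ω hω => hω.1.continuousOn)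
      (hS'.cont.mono fun ω hω => hω.1.continuousOn) fun t ht => ?_
    filter_upwards [hrank, hnoise t ht, hS.eq, hS'.eq] with ω hrank hnoise heq heq'
    rw [(heq t ht).1, (heq' t ht).1, hnoise]
    congr 2
    refine intervalIntegral.integral_congr fun s hs => ?_
    simp only [hrank s (uIcc_of_le ht ▸ hs).1]
  filter_upwards [hfst, hsub] with ω hfst hsub t ht
  exact ⟨hfst t ht, by linear_combination hfst t ht - hsub t ht⟩

end RankSystem

/-! ### Dyadic chaining -/

section DyadicChaining

/-- The bound `|b((k + 1) 2⁻ⁿ) - b(k 2⁻ⁿ)| ≤ qⁿ` on all increments of `b` over the cells of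
`[0, T]` of the dyadic grids of level `n ≥ N`. -/
def HasDyadicModulus (b : ℝ → ℝ) (q : ℝ) (T N : ℕ) : Prop :=
  ∀ n ≥ N, ∀ k < T * 2 ^ n, |b (dyadicMesh n * (k + 1)) - b (dyadicMesh n * k)| ≤ q ^ n

/-- The limit of the values of `b` at the lower dyadic approximations of `t`; it is `b 0` for
`t ≤ 0`, since `⌊·⌋₊` vanishes on negative numbers. -/
def dyadicExtension (b : ℝ → ℝ) (t : ℝ) : ℝ :=
  limUnder atTop fun n => b (dyadicMesh n * ⌊t / dyadicMesh n⌋₊)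

lemma abs_sub_le_of_natFloor_adjacent {b : ℝ → ℝ} {c r y : ℝ} {k : ℕ} (hky : k ≤ y)
    (hyk : y < k + 2) (hr : |b (c * (k + 1)) - b (c * k)| ≤ r) :
    |b (c * ⌊y⌋₊) - b (c * k)| ≤ r := by
  have hy : 0 ≤ y := k.cast_nonneg.trans hky
  have hcases : ⌊y⌋₊ = k ∨ ⌊y⌋₊ = k + 1 := by
    have hlower := Nat.le_floor hky
    have hupper : ⌊y⌋₊ < k + 2 := (Nat.floor_lt hy).2 (by exact_mod_cast hyk)
    omega
  rcases hcases with hfloor | hfloor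
  · rw [hfloor, sub_self, abs_zero]
    exact (abs_nonneg _).trans hr
  · rw [hfloor]
    exact_mod_cast hr

lemma natFloor_div_dyadicMesh_lt {t : ℝ} (ht : 0 ≤ t) {T : ℕ} (htT : t < T) (n : ℕ) :
    ⌊t / dyadicMesh n⌋₊ < T * 2 ^ n := by
  rw [Nat.floor_lt (div_nonneg ht (dyadicMesh_pos n).le), dyadicMesh, div_inv_eq_mul]
  push_cast
  gcongr

lemma dyadicMesh_succ_mul_two (n : ℕ) : dyadicMesh (n + 1) * 2 = dyadicMesh n := by
  unfold dyadicMesh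
  rw [pow_succ]
  field_simp

namespace HasDyadicModulus

variable {b : ℝ → ℝ} {q s t : ℝ} {T N : ℕ}

lemma abs_sub_succ_le (h : HasDyadicModulus b q T N) (ht : 0 ≤ t) (htT : t < T) {n : ℕ}
    (hn : N ≤ n + 1) :
    |b (dyadicMesh (n + 1) * ⌊t / dyadicMesh (n + 1)⌋₊) - b (dyadicMesh n * ⌊t / dyadicMesh n⌋₊)|
      ≤ q ^ (n + 1) := by
  have hscale : t / dyadicMesh (n + 1) = 2 * (t / dyadicMesh n) := by
    rw [← dyadicMesh_succ_mul_two n]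
    have := (dyadicMesh_pos (n + 1)).ne'
    field_simp
  have hgrid : dyadicMesh n * (⌊t / dyadicMesh n⌋₊ : ℝ) =
      dyadicMesh (n + 1) * ((2 * ⌊t / dyadicMesh n⌋₊ : ℕ) : ℝ) := by
    rw [← dyadicMesh_succ_mul_two n]
    push_cast
    ring
  have hlower := Nat.floor_le (div_nonneg ht (dyadicMesh_pos n).le)
  have hupper := Nat.lt_floor_add_one (t / dyadicMesh n)
  have hlt := natFloor_div_dyadicMesh_lt ht htT n
  rw [hgrid, hscale]
  refine abs_sub_le_of_natFloor_adjacent (by push_cast; linarith) (by push_cast; linarith)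
    (h _ hn _ ?_)
  rw [pow_succ, ← mul_assoc]
  omega

lemma abs_sub_natFloor_le (h : HasDyadicModulus b q T N) (hs : 0 ≤ s) (hst : s ≤ t) (htT : t < T)
    {n : ℕ} (hn : N ≤ n) (hd : t - s < dyadicMesh n) :
    |b (dyadicMesh n * ⌊t / dyadicMesh n⌋₊) - b (dyadicMesh n * ⌊s / dyadicMesh n⌋₊)| ≤ q ^ n := by
  have hmesh := dyadicMesh_pos n
  have hlower := Nat.floor_le (div_nonneg hs hmesh.le)
  have hupper := Nat.lt_floor_add_one (s / dyadicMesh n)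
  have hmono : s / dyadicMesh n ≤ t / dyadicMesh n := by gcongr
  have hclose : t / dyadicMesh n < s / dyadicMesh n + 1 := by
    rw [div_add_one hmesh.ne', div_lt_div_iff_of_pos_right hmesh]
    linarith
  exact abs_sub_le_of_natFloor_adjacent (hlower.trans hmono) (by linarith)
    (h n hn _ (natFloor_div_dyadicMesh_lt hs (hst.trans_lt htT) n))

lemma dist_succ_le (h : HasDyadicModulus b q T N) (hq : 0 ≤ q) (hq1 : q < 1) (ht : 0 ≤ t)
    (htT : t < T) {n : ℕ} (hn : N ≤ n) (k : ℕ) :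
    dist (b (dyadicMesh (k + n) * ⌊t / dyadicMesh (k + n)⌋₊))
      (b (dyadicMesh (k + 1 + n) * ⌊t / dyadicMesh (k + 1 + n)⌋₊)) ≤ q ^ n * q ^ k := by
  rw [dist_comm, Real.dist_eq, ← pow_add, add_right_comm]
  exact (h.abs_sub_succ_le ht htT (by omega)).trans (pow_le_pow_of_le_one hq hq1.le (by omega))

lemma tendsto_dyadicExtension (h : HasDyadicModulus b q T N) (hq : 0 ≤ q) (hq1 : q < 1)
    (ht : 0 ≤ t) (htT : t < T) :
    Tendsto (fun n => b (dyadicMesh n * ⌊t / dyadicMesh n⌋₊)) atTop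
      (nhds (dyadicExtension b t)) := by
  refine tendsto_nhds_limUnder ?_
  obtain ⟨L, hL⟩ := cauchySeq_tendsto_of_complete
    (cauchySeq_of_le_geometric q (q ^ N) hq1 (h.dist_succ_le hq hq1 ht htT le_rfl))
  exact ⟨L, (tendsto_add_atTop_iff_nat N).1 hL⟩

lemma abs_sub_dyadicExtension_le (h : HasDyadicModulus b q T N) (hq : 0 ≤ q) (hq1 : q < 1)
    (ht : 0 ≤ t) (htT : t < T) {n : ℕ} (hn : N ≤ n) :
    |b (dyadicMesh n * ⌊t / dyadicMesh n⌋₊) - dyadicExtension b t| ≤ q ^ n / (1 - q) := by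
  have hlim := (tendsto_add_atTop_iff_nat n).2 (h.tendsto_dyadicExtension hq hq1 ht htT)
  simpa [Real.dist_eq] using dist_le_of_le_geometric_of_tendsto₀ q (q ^ n) hq1
    (h.dist_succ_le hq hq1 ht htT hn) hlim

lemma abs_dyadicExtension_sub_le (h : HasDyadicModulus b q T N) (hq : 0 ≤ q) (hq1 : q < 1)
    (hs : 0 ≤ s) (ht : 0 ≤ t) (hsT : s < T) (htT : t < T) {n : ℕ} (hn : N ≤ n)
    (hd : |t - s| < dyadicMesh n) :
    |dyadicExtension b t - dyadicExtension b s| ≤ q ^ n + 2 * (q ^ n / (1 - q)) := by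
  wlog hst : s ≤ t generalizing s t
  · rw [abs_sub_comm]
    exact this ht hs htT hsT (by rwa [abs_sub_comm]) (le_of_not_ge hst)
  have hgrid := abs_le.1 (h.abs_sub_natFloor_le hs hst htT hn (lt_of_abs_lt hd))
  have hs' := abs_le.1 (h.abs_sub_dyadicExtension_le hq hq1 hs hsT hn)
  have ht' := abs_le.1 (h.abs_sub_dyadicExtension_le hq hq1 ht htT hn)
  rw [abs_le]
  constructor <;> linarith [hgrid.1, hgrid.2, hs'.1, hs'.2, ht'.1, ht'.2]

lemma continuousWithinAt_dyadicExtension (h : HasDyadicModulus b q T N) (hq : 0 ≤ q)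
    (hq1 : q < 1) (ht : 0 ≤ t) (htT : t < T) :
    ContinuousWithinAt (dyadicExtension b) (Ici 0) t := by
  rw [Metric.continuousWithinAt_iff]
  intro ε hε
  have hbound : Tendsto (fun n => q ^ n + 2 * (q ^ n / (1 - q))) atTop (nhds 0) := by
    have hpow := tendsto_pow_atTop_nhds_zero_of_lt_one hq hq1
    simpa using hpow.add ((hpow.div_const (1 - q)).const_mul 2)
  obtain ⟨n, hnε, hn⟩ := ((hbound.eventually_lt_const hε).and (eventually_ge_atTop N)).exists
  refine ⟨min (dyadicMesh n) (T - t), lt_min (dyadicMesh_pos n) (sub_pos.2 htT),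
    fun {s} hs hd => ?_⟩
  obtain ⟨hmesh, hsT⟩ := lt_min_iff.1 hd
  rw [Real.dist_eq] at hmesh hsT
  exact (h.abs_dyadicExtension_sub_le hq hq1 ht hs htT (by linarith [le_abs_self (s - t)]) hn
    hmesh).trans_lt hnε

end HasDyadicModulus

lemma dyadicExtension_max_zero (b : ℝ → ℝ) (t : ℝ) :
    dyadicExtension b (max t 0) = dyadicExtension b t := by
  rcases le_total 0 t with ht | ht
  · rw [max_eq_left ht]
  · simp [dyadicExtension, max_eq_right ht,
      fun n => Nat.floor_of_nonpos (div_nonpos_of_nonpos_of_nonneg ht (dyadicMesh_pos n).le)]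

lemma continuous_dyadicExtension {b : ℝ → ℝ} {q : ℝ} (hq : 0 ≤ q) (hq1 : q < 1)
    (h : ∀ T, ∃ N, HasDyadicModulus b q T N) : Continuous (dyadicExtension b) := by
  have hcont : ContinuousOn (dyadicExtension b) (Ici 0) := fun t ht => by
    obtain ⟨T, hT⟩ := exists_nat_gt t
    obtain ⟨N, hN⟩ := h T
    exact hN.continuousWithinAt_dyadicExtension hq hq1 ht hT
  exact (hcont.comp_continuous (f := fun t => max t 0) (by fun_prop)
    fun t => le_max_right t 0).congr (dyadicExtension_max_zero b)

end DyadicChaining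

/-! ### Continuous versions of integrals of sign processes -/

section ContinuousVersion

variable {μ : Measure Ω}

lemma tendstoInMeasure_zero_of_tendstoInMeasure_prod [IsFiniteMeasure μ] {f : ℕ → ℕ → Ω → ℝ}
    {g : ℕ → Ω → ℝ} (hfg : ∀ n, TendstoInMeasure μ (f n) atTop (g n))
    (hf : TendstoInMeasure μ (fun p : ℕ × ℕ => f p.1 p.2) (atTop ×ˢ atTop) (fun _ => 0)) :
    TendstoInMeasure μ g atTop (fun _ => 0) := by
  rw [tendstoInMeasure_iff_measureReal_norm]
  intro ε hε
  rw [Metric.tendsto_atTop]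
  intro δ hδ
  have hf' := (tendstoInMeasure_iff_measureReal_norm.1 hf (ε / 2) (half_pos hε)).eventually_lt_const
    (half_pos hδ)
  rw [prod_atTop_atTop_eq, eventually_atTop] at hf'
  obtain ⟨⟨N, M⟩, hNM⟩ := hf'
  refine ⟨N, fun n hn => ?_⟩
  obtain ⟨p, hpg, hpM⟩ := (((tendstoInMeasure_iff_measureReal_norm.1 (hfg n) (ε / 2)
    (half_pos hε)).eventually_lt_const (half_pos hδ)).and (eventually_ge_atTop M)).exists
  rw [Real.dist_eq, sub_zero, abs_of_nonneg measureReal_nonneg]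
  calc μ.real {x | ε ≤ ‖g n x - 0‖}
      ≤ μ.real ({x | ε / 2 ≤ ‖f n p x - 0‖} ∪ {x | ε / 2 ≤ ‖f n p x - g n x‖}) := by
        refine measureReal_mono fun x hx => ?_
        simp only [mem_union, mem_ofPred_eq, sub_zero] at hx ⊢
        by_contra! hsmall
        linarith [norm_sub_norm_le (g n x) (f n p x), norm_sub_rev (g n x) (f n p x)]
    _ ≤ μ.real {x | ε / 2 ≤ ‖f n p x - 0‖} + μ.real {x | ε / 2 ≤ ‖f n p x - g n x‖} :=
        measureReal_union_le _ _
    _ < δ := by linarith [hNM (n, p) ⟨hn, hpM⟩]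

lemma map_eq_of_tendstoInMeasure [IsProbabilityMeasure μ] {Ω' : Type*} [MeasurableSpace Ω']
    {ν : Measure Ω'} [IsProbabilityMeasure ν] {X : ℕ → Ω → ℝ} {X' : ℕ → Ω' → ℝ} {Z : Ω → ℝ}
    {Z' : Ω' → ℝ} (hX : TendstoInMeasure μ X atTop Z) (hX' : TendstoInMeasure ν X' atTop Z')
    (hXm : ∀ n, Measurable (X n)) (hXm' : ∀ n, Measurable (X' n))
    (hmap : ∀ᶠ n in atTop, μ.map (X n) = ν.map (X' n)) : μ.map Z = ν.map Z' := by
  have hlim := (hX.tendstoInDistribution fun n => (hXm n).aemeasurable).tendsto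
  have hlim' := (hX'.tendstoInDistribution fun n => (hXm' n).aemeasurable).tendsto
  exact congrArg Subtype.val (tendsto_nhds_unique (X := ProbabilityMeasure ℝ)
    (hlim.congr' (hmap.mono fun n hn => Subtype.ext hn)) hlim')

lemma exists_tendstoInMeasure_of_tendsto_integral_sub_sq {f : ℕ → Ω → ℝ}
    (hf : ∀ n, MemLp (f n) 2 μ)
    (hcauchy : Tendsto (fun p : ℕ × ℕ => ∫ ω, (f p.1 ω - f p.2 ω) ^ 2 ∂μ) atTop (nhds 0)) :
    ∃ g : Ω → ℝ, TendstoInMeasure μ f atTop g := by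
  have hnorm : ∀ p : ℕ × ℕ, eLpNorm (⇑((hf p.1).toLp (f p.1)) - ⇑((hf p.2).toLp (f p.2))) 2 μ =
      ENNReal.ofReal ((∫ ω, (f p.1 ω - f p.2 ω) ^ 2 ∂μ) ^ (1 / 2 : ℝ)) := fun p => by
    rw [eLpNorm_congr_ae ((hf p.1).coeFn_toLp.sub (hf p.2).coeFn_toLp),
      MemLp.eLpNorm_eq_integral_rpow_norm (by norm_num) (by norm_num) ((hf p.1).sub (hf p.2))]
    simp
  have hcauchySeq : CauchySeq fun n => (hf n).toLp (f n) := by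
    rw [Lp.cauchySeq_Lp_iff_cauchySeq_eLpNorm]
    simp_rw [hnorm]
    have hsqrt := hcauchy.rpow_const (p := (1 / 2 : ℝ)) (.inr (by norm_num))
    rw [Real.zero_rpow (by norm_num)] at hsqrt
    simpa [Function.comp_def] using (ENNReal.continuous_ofReal.tendsto _).comp hsqrt
  obtain ⟨g, hg⟩ := cauchySeq_tendsto_of_complete hcauchySeq
  exact ⟨g, (tendstoInMeasure_of_tendsto_Lp hg).congr_left fun n => (hf n).coeFn_toLp⟩

lemma exists_measurable_tendstoInMeasure {m₀ : MeasurableSpace Ω} {f : ℕ → Ω → ℝ} {g : Ω → ℝ}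
    (hf : ∀ n, Measurable[m₀] (f n)) (hg : TendstoInMeasure μ f atTop g) :
    ∃ g' : Ω → ℝ, Measurable[m₀] g' ∧ TendstoInMeasure μ f atTop g' := by
  obtain ⟨ns, -, hns⟩ := hg.exists_seq_tendsto_ae
  refine ⟨fun ω => limUnder atTop fun i => f (ns i) ω, (StronglyMeasurable.limUnder (l := atTop)
    fun i => (hf (ns i)).stronglyMeasurable).measurable, hg.congr_right ?_⟩
  filter_upwards [hns] with ω hω
  exact hω.limUnder_eq.symm

lemma measureReal_le_abs_le_of_map_eq_gaussianReal [IsFiniteMeasure μ] {S : Ω → ℝ}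
    (hS : AEMeasurable S μ) {v : NNReal} (hmap : μ.map S = gaussianReal 0 v) {r : ℝ}
    (hr : 0 ≤ r) : μ.real {ω | r ≤ |S ω|} ≤ 2 * Real.exp (-r ^ 2 / (2 * v)) := by
  have hsub : HasSubgaussianMGF S v μ :=
    (HasSubgaussianMGF.id_map_iff hS).1 (hmap ▸ ⟨integrable_exp_mul_gaussianReal,
      fun t => (mgf_gaussianReal Measure.map_id t).le.trans_eq (by simp)⟩)
  have hunion : {ω | r ≤ |S ω|} = {ω | r ≤ S ω} ∪ {ω | r ≤ (-S) ω} := by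
    ext ω
    simp only [mem_union, mem_ofPred_eq, Pi.neg_apply, le_abs]
  calc μ.real {ω | r ≤ |S ω|} ≤ μ.real {ω | r ≤ S ω} + μ.real {ω | r ≤ (-S) ω} :=
        hunion ▸ measureReal_union_le _ _
    _ ≤ Real.exp (-r ^ 2 / (2 * v)) + Real.exp (-r ^ 2 / (2 * v)) :=
        add_le_add (hsub.measure_ge_le hr) (hsub.neg.measure_ge_le hr)
    _ = 2 * Real.exp (-r ^ 2 / (2 * v)) := (two_mul _).symm

variable {b : ℝ → Ω → ℝ}

/-- `(9/10)²·2 > √2`, so the Gaussian bound `exp(-((9/10)² 2)ⁿ / 2)` beats the number of cells. -/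
lemma measureReal_pow_le_abs_le_of_map_eq_gaussianReal [IsFiniteMeasure μ] {S : Ω → ℝ}
    (hS : AEMeasurable S μ) {n : ℕ} (hmap : μ.map S = gaussianReal 0 (dyadicMesh n).toNNReal) :
    μ.real {ω | (9 / 10 : ℝ) ^ n ≤ |S ω|} ≤ 16 * (2500 / 6561) ^ n := by
  have hexponent : -((9 / 10 : ℝ) ^ n) ^ 2 / (2 * (dyadicMesh n).toNNReal) =
      -((81 / 50 : ℝ) ^ n / 2) := by
    rw [Real.coe_toNNReal _ (dyadicMesh_pos n).le, dyadicMesh, ← pow_mul, mul_comm n 2, pow_mul,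
      show (81 / 50 : ℝ) = (9 / 10) ^ 2 * 2 by norm_num, mul_pow]
    field_simp
  have hexp : Real.exp (-((81 / 50 : ℝ) ^ n / 2)) ≤ 8 * (2500 / 6561) ^ n := by
    have hpow := Real.pow_div_factorial_le_exp ((81 / 50 : ℝ) ^ n / 2) (by positivity) 2
    rw [Real.exp_neg, inv_le_comm₀ (Real.exp_pos _) (by positivity)]
    refine le_trans (le_of_eq ?_) hpow
    rw [show (2500 / 6561 : ℝ) = ((81 / 50) ^ 2)⁻¹ by norm_num, inv_pow, pow_right_comm,
      Nat.factorial_two, mul_inv, inv_inv]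
    push_cast
    ring
  refine (measureReal_le_abs_le_of_map_eq_gaussianReal hS hmap (by positivity)).trans ?_
  rw [hexponent]
  linarith

lemma ae_exists_hasDyadicModulus [IsFiniteMeasure μ]
    (hb : ∀ n k : ℕ, AEMeasurable
      (fun ω => b (dyadicMesh n * (k + 1)) ω - b (dyadicMesh n * k) ω) μ)
    (hmap : ∀ n k : ℕ, μ.map (fun ω => b (dyadicMesh n * (k + 1)) ω - b (dyadicMesh n * k) ω) =
      gaussianReal 0 (dyadicMesh n).toNNReal) :
    ∀ᵐ ω ∂μ, ∀ T, ∃ N, HasDyadicModulus (fun s => b s ω) (9 / 10) T N := by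
  rw [ae_all_iff]
  intro T
  let exceptional : ℕ → Set Ω := fun n => ⋃ k ∈ Finset.range (T * 2 ^ n),
    {ω | (9 / 10 : ℝ) ^ n ≤ |b (dyadicMesh n * (k + 1)) ω - b (dyadicMesh n * k) ω|}
  have hle : ∀ n, μ (exceptional n) ≤ ENNReal.ofReal (T * 16 * (5000 / 6561) ^ n) := fun n => by
    rw [← ofReal_measureReal (measure_ne_top _ _)]
    refine ENNReal.ofReal_le_ofReal ((measureReal_biUnion_finset_le _ _).trans
      ((Finset.sum_le_sum fun k _ =>
        measureReal_pow_le_abs_le_of_map_eq_gaussianReal (hb n k) (hmap n k)).trans_eq ?_))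
    rw [Finset.sum_const, Finset.card_range, nsmul_eq_mul,
      show (5000 / 6561 : ℝ) = 2 * (2500 / 6561) by norm_num, mul_pow]
    push_cast
    ring
  have hsum : ∑' n, μ (exceptional n) ≠ ⊤ := ne_top_of_le_ne_top
    (((summable_geometric_of_lt_one (by norm_num) (by norm_num)).mul_left _).tsum_ofReal_ne_top)
    (ENNReal.tsum_le_tsum hle)
  filter_upwards [ae_eventually_notMem hsum] with ω hω
  obtain ⟨N, hN⟩ := eventually_atTop.1 hω
  refine ⟨N, fun n hn k hk => ?_⟩
  have hmem := hN n hn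
  simp only [exceptional, mem_iUnion, not_exists, mem_ofPred_eq, not_le, Finset.mem_range] at hmem
  exact (hmem k hk).le

variable {F : ℝ → MeasurableSpace Ω} {W : ℝ → Ω → ℝ} {H : ℝ → Ω → ℝ} {C t : ℝ}

lemma dyadicMesh_mul_natFloor_le (ht : 0 ≤ t) (n : ℕ) :
    dyadicMesh n * ⌊t / dyadicMesh n⌋₊ ≤ t := by
  rw [← le_div_iff₀' (dyadicMesh_pos n)]
  exact Nat.floor_le (div_nonneg ht (dyadicMesh_pos n).le)

lemma IsBM.measurable_dyadicSum (hB : IsBM μ F W) (hH : IsBddAdapted F C H) (ht : 0 ≤ t) (n : ℕ) :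
    Measurable[F t] (dyadicSum H W t n) :=
  (hB.measurable_leftSum (dyadicMesh_pos n).le _ hH).mono
    (hB.mono (dyadicMesh_mul_natFloor_le ht n)) le_rfl

lemma IsBM.exists_tendstoInMeasure_dyadicSum (hB : IsBM μ F W) [IsProbabilityMeasure μ]
    (hH : IsBddAdapted F C H) (hcont : IsAEContinuousAt μ H) (ht : 0 ≤ t) :
    ∃ Z : Ω → ℝ, Measurable[F t] Z ∧ TendstoInMeasure μ (fun n => dyadicSum H W t n) atTop Z := by
  have hfst : Tendsto (Prod.fst : ℕ × ℕ → ℕ) atTop atTop := by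
    rw [← prod_atTop_atTop_eq]
    exact tendsto_fst
  have hsnd : Tendsto (Prod.snd : ℕ × ℕ → ℕ) atTop atTop := by
    rw [← prod_atTop_atTop_eq]
    exact tendsto_snd
  have hcauchy : Tendsto (fun p : ℕ × ℕ =>
      ∫ ω, (dyadicSum H W t p.1 ω - dyadicSum H W t p.2 ω) ^ 2 ∂μ) atTop (nhds 0) := by
    simp only [dyadicSum]
    refine hB.tendsto_integral_leftSum_sub_leftSum_sq (fun p => dyadicMesh_pos p.1)
      (fun p => dyadicMesh_pos p.2) (fun _ => hH) (fun _ => hH)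
      ((tendsto_dyadicMesh_mul_natFloor ht).comp hfst)
      ((tendsto_dyadicMesh_mul_natFloor ht).comp hsnd) fun s hs _ => ?_
    filter_upwards [hcont s hs] with ω hω
    have hlim := hω.tendsto.comp (tendsto_dyadicMesh_mul_natFloor hs.le)
    simpa using (hlim.comp hfst).sub (hlim.comp hsnd)
  have hmem : ∀ n, MemLp (dyadicSum H W t n) 2 μ := fun n =>
    hB.memLp_two_leftSum (dyadicMesh_pos n).le _ hH
  obtain ⟨Z, hZ⟩ := exists_tendstoInMeasure_of_tendsto_integral_sub_sq hmem hcauchy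
  exact exists_measurable_tendstoInMeasure (hB.measurable_dyadicSum hH ht) hZ

lemma dyadicMesh_mul_two_pow {n p : ℕ} (hnp : n ≤ p) :
    dyadicMesh p * 2 ^ (p - n) = dyadicMesh n := by
  obtain ⟨j, rfl⟩ := Nat.exists_eq_add_of_le hnp
  rw [add_tsub_cancel_left, dyadicMesh, dyadicMesh, pow_add]
  field_simp

lemma natFloor_dyadicMesh_mul_div {n p : ℕ} (hnp : n ≤ p) (k : ℕ) :
    ⌊dyadicMesh n * k / dyadicMesh p⌋₊ = 2 ^ (p - n) * k := by
  have hcast : dyadicMesh n * k / dyadicMesh p = ((2 ^ (p - n) * k : ℕ) : ℝ) := by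
    have := (dyadicMesh_pos p).ne'
    rw [← dyadicMesh_mul_two_pow hnp]
    push_cast
    field_simp
  rw [hcast, Nat.floor_natCast]

lemma IsBM.map_dyadicSum_sub_dyadicSum (hB : IsBM μ F W) [IsProbabilityMeasure μ]
    (hH : ∀ s, 0 ≤ s → Measurable[F s] (H s)) (hH1 : ∀ s ω, H s ω ^ 2 = 1) {n p : ℕ}
    (hnp : n ≤ p) (k : ℕ) :
    μ.map (fun ω => dyadicSum H W (dyadicMesh n * (k + 1)) p ω -
      dyadicSum H W (dyadicMesh n * k) p ω) = gaussianReal 0 (dyadicMesh n).toNNReal := by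
  have hmesh := dyadicMesh_pos p
  have hfloor := natFloor_dyadicMesh_mul_div hnp (k + 1)
  push_cast at hfloor
  simp only [dyadicSum, hfloor, natFloor_dyadicMesh_mul_div hnp k]
  simp only [mul_add_one, leftSum_add, add_sub_cancel_left]
  rw [hB.map_sum_signed_incr (a := fun j : ℕ => dyadicMesh p * (2 ^ (p - n) * k + j : ℕ))
    (H := fun j => H (dyadicMesh p * (2 ^ (p - n) * k + j : ℕ)))
    (fun i j hij => by dsimp only; gcongr) (by positivity) (fun j => hH _ (by positivity))
    (fun j => hH1 _)]
  congr 2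
  rw [← dyadicMesh_mul_two_pow hnp]
  push_cast
  ring

lemma IsBM.map_sub_of_tendstoInMeasure_dyadicSum (hB : IsBM μ F W) [IsProbabilityMeasure μ]
    (hH : ∀ s, 0 ≤ s → Measurable[F s] (H s)) (hH1 : ∀ s ω, H s ω ^ 2 = 1)
    (hb : ∀ t, 0 ≤ t → TendstoInMeasure μ (fun n => dyadicSum H W t n) atTop (b t)) (n k : ℕ) :
    μ.map (fun ω => b (dyadicMesh n * (k + 1)) ω - b (dyadicMesh n * k) ω) =
      gaussianReal 0 (dyadicMesh n).toNNReal := by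
  have hmesh := dyadicMesh_pos n
  have hmeas : ∀ t, 0 ≤ t → ∀ p, Measurable (dyadicSum H W t p) := fun t ht p =>
    (hB.measurable_dyadicSum (isBddAdapted_of_sq_eq_one hH hH1) ht p).mono (hB.le _) le_rfl
  refine (map_eq_of_tendstoInMeasure (ν := gaussianReal 0 (dyadicMesh n).toNNReal)
    (tendstoInMeasure_sub (hb _ (by positivity)) (hb _ (by positivity)))
    (tendstoInMeasure_const id)
    (fun p => (hmeas _ (by positivity) p).sub (hmeas _ (by positivity) p)) (fun _ => measurable_id)
    ?_).trans Measure.map_id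
  filter_upwards [eventually_ge_atTop n] with p hp
  rw [Measure.map_id]
  exact hB.map_dyadicSum_sub_dyadicSum hH hH1 hp k

lemma IsBM.tendstoInMeasure_of_tendstoInMeasure_dyadicSum (hB : IsBM μ F W)
    [IsProbabilityMeasure μ] (hH : IsBddAdapted F C H)
    (hb : ∀ t, 0 ≤ t → TendstoInMeasure μ (fun n => dyadicSum H W t n) atTop (b t)) (ht : 0 ≤ t) :
    TendstoInMeasure μ (fun n => b (dyadicMesh n * ⌊t / dyadicMesh n⌋₊)) atTop (b t) := by
  have hfst : Tendsto (Prod.fst : ℕ × ℕ → ℕ) (atTop ×ˢ atTop) atTop := tendsto_fst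
  have hsnd : Tendsto (Prod.snd : ℕ × ℕ → ℕ) (atTop ×ˢ atTop) atTop := tendsto_snd
  have hgrid (n : ℕ) := dyadicMesh_mul_natCast_nonneg n ⌊t / dyadicMesh n⌋₊
  have hfloor : Tendsto (fun p : ℕ × ℕ => dyadicMesh p.2 *
      ⌊dyadicMesh p.1 * ⌊t / dyadicMesh p.1⌋₊ / dyadicMesh p.2⌋₊) (atTop ×ˢ atTop) (nhds t) :=
    tendsto_mul_natFloor_div (fun _ => dyadicMesh_pos _) (tendsto_dyadicMesh.comp hsnd)
      (fun p => hgrid p.1) ((tendsto_dyadicMesh_mul_natFloor ht).comp hfst)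
  have hsub : TendstoInMeasure μ (fun n ω => b (dyadicMesh n * ⌊t / dyadicMesh n⌋₊) ω - b t ω)
      atTop (fun _ => 0) := by
    refine tendstoInMeasure_zero_of_tendstoInMeasure_prod
      (fun n => tendstoInMeasure_sub (hb _ (hgrid n)) (hb t ht)) ?_
    exact hB.tendstoInMeasure_leftSum_sub_leftSum (fun p => dyadicMesh_pos p.2)
      (fun p => dyadicMesh_pos p.2) (fun _ => hH) (fun _ => hH) hfloor
      ((tendsto_dyadicMesh_mul_natFloor ht).comp hsnd) fun s _ _ => ae_of_all _ fun ω => by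
        simpa only [sub_self] using tendsto_const_nhds
  exact (tendstoInMeasure_congr_of_sub hsub).2 (tendstoInMeasure_const (b t))

/-- `B` is a continuous adapted version of `∫ H dW` for an adapted integrand `H` with values in
`{1, -1}`. Continuity of `H` at each fixed time makes all left-point Riemann sums have the same
limit. -/
structure IsSignedIntegral (μ : Measure Ω) (F : ℝ → MeasurableSpace Ω) (W H B : ℝ → Ω → ℝ) :
    Prop where
  measurable_integrand : ∀ s, 0 ≤ s → Measurable[F s] (H s)
  sq_eq_one : ∀ s ω, H s ω ^ 2 = 1
  isAEContinuousAt : IsAEContinuousAt μ H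
  measurable : ∀ t, 0 ≤ t → Measurable[F t] (B t)
  continuous : ∀ᵐ ω ∂μ, Continuous fun t => B t ω
  isSI : IsSI μ H W B

lemma measurable_dyadicExtension {α : Type*} {_ : MeasurableSpace α} {b : ℝ → α → ℝ}
    (ht : 0 ≤ t) (hb : ∀ s, 0 ≤ s → s ≤ t → Measurable (b s)) :
    Measurable fun ω => dyadicExtension (fun s => b s ω) t :=
  (StronglyMeasurable.limUnder (l := atTop) fun n => (hb _ (dyadicMesh_mul_natCast_nonneg n _)
    (dyadicMesh_mul_natFloor_le ht n)).stronglyMeasurable).measurable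

lemma dyadicExtension_ae_eq (hb : ∀ s, 0 ≤ s → Measurable (b s))
    (hmod : ∀ᵐ ω ∂μ, ∀ T, ∃ N, HasDyadicModulus (fun s => b s ω) (9 / 10) T N)
    [IsFiniteMeasure μ] (ht : 0 ≤ t)
    (hlim : TendstoInMeasure μ (fun n => b (dyadicMesh n * ⌊t / dyadicMesh n⌋₊)) atTop (b t)) :
    (fun ω => dyadicExtension (fun s => b s ω) t) =ᵐ[μ] b t := by
  refine tendstoInMeasure_ae_unique (tendstoInMeasure_of_ae_tendsto
    (fun n => (hb _ (dyadicMesh_mul_natCast_nonneg n _)).aestronglyMeasurable) ?_) hlim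
  filter_upwards [hmod] with ω hω
  obtain ⟨T, hT⟩ := exists_nat_gt t
  obtain ⟨N, hN⟩ := hω T
  exact hN.tendsto_dyadicExtension (by norm_num) (by norm_num) ht hT

lemma IsBM.exists_isSignedIntegral (hB : IsBM μ F W) [IsProbabilityMeasure μ]
    (hH : ∀ s, 0 ≤ s → Measurable[F s] (H s)) (hH1 : ∀ s ω, H s ω ^ 2 = 1)
    (hcont : IsAEContinuousAt μ H) : ∃ B : ℝ → Ω → ℝ, IsSignedIntegral μ F W H B := by
  have hbdd := isBddAdapted_of_sq_eq_one hH hH1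
  have hexists : ∀ t, ∃ Z : Ω → ℝ, 0 ≤ t → Measurable[F t] Z ∧
      TendstoInMeasure μ (fun n => dyadicSum H W t n) atTop Z := fun t => by
    by_cases ht : 0 ≤ t
    · exact (hB.exists_tendstoInMeasure_dyadicSum hbdd hcont ht).imp fun Z hZ _ => hZ
    · exact ⟨0, fun ht' => absurd ht' ht⟩
  choose b hb using hexists
  have hbF : ∀ t, 0 ≤ t → Measurable[F t] (b t) := fun t ht => (hb t ht).1
  have hbm : ∀ t, 0 ≤ t → Measurable (b t) := fun t ht => (hbF t ht).mono (hB.le t) le_rfl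
  have hlim : ∀ t, 0 ≤ t → TendstoInMeasure μ (fun n => dyadicSum H W t n) atTop (b t) :=
    fun t ht => (hb t ht).2
  have hmod : ∀ᵐ ω ∂μ, ∀ T, ∃ N, HasDyadicModulus (fun s => b s ω) (9 / 10) T N :=
    ae_exists_hasDyadicModulus (fun n k => by
      have hmesh := dyadicMesh_pos n
      exact ((hbm _ (by positivity)).sub (hbm _ (by positivity))).aemeasurable)
      (hB.map_sub_of_tendstoInMeasure_dyadicSum hH hH1 hlim)
  have hSI : ∀ t, 0 ≤ t → TendstoInMeasure μ (fun n => rsum H W t n) atTop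
      (fun ω => dyadicExtension (fun s => b s ω) t) := fun t ht =>
    ((hB.tendstoInMeasure_rsum_iff_dyadicSum hbdd hcont ht).2 (hlim t ht)).congr_right
      (dyadicExtension_ae_eq hbm hmod ht
        (hB.tendstoInMeasure_of_tendstoInMeasure_dyadicSum hbdd hlim ht)).symm
  refine ⟨fun t ω => dyadicExtension (fun s => b s ω) t, hH, hH1, hcont, fun t ht =>
    measurable_dyadicExtension ht fun s hs hst => (hbF s hs).mono (hB.mono hst) le_rfl, ?_, ?_, hSI⟩
  · exact hmod.mono fun ω hω => continuous_dyadicExtension (by norm_num) (by norm_num) hω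
  · have hzero := hSI 0 le_rfl
    simp only [funext (rsum_zero H W _)] at hzero
    exact tendstoInMeasure_ae_unique hzero (tendstoInMeasure_const fun _ => 0)

end ContinuousVersion

/-! ### Existence of a strong solution of (4.7) -/

section NaturalFiltration

variable {μ : Measure Ω} {F : ℝ → MeasurableSpace Ω} {W : ℝ → Ω → ℝ}

lemma monotone_natSA {α E : Type*} [MeasurableSpace E] (Ξ : ℝ → α → E) : Monotone (natSA Ξ) :=
  fun _ _ hst => iSup₂_le fun r hr => le_iSup₂_of_le r ⟨hr.1, hr.2.trans hst⟩ le_rfl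

lemma measurable_natSA {α E : Type*} [MeasurableSpace E] (Ξ : ℝ → α → E) {s t : ℝ}
    (hs : 0 ≤ s) (hst : s ≤ t) : Measurable[natSA Ξ t] (Ξ s) :=
  measurable_iff_comap_le.2 <| le_iSup₂_of_le (f := fun s (_ : s ∈ Icc (0 : ℝ) t) =>
    MeasurableSpace.comap (Ξ s) inferInstance) s ⟨hs, hst⟩ le_rfl

lemma IsBM.natSA_le (hW : IsBM μ F W) (t : ℝ) : natSA W t ≤ F t :=
  iSup₂_le fun s hs => (hW.adapted s hs.1).trans (hW.mono hs.2)

lemma IsBM.natural (hW : IsBM μ F W) : IsBM μ (natSA W) W where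
  le t := (hW.natSA_le t).trans (hW.le t)
  mono := monotone_natSA W
  adapted _ ht := (measurable_natSA W ht le_rfl).comap_le
  init := hW.init
  cont := hW.cont
  law := hW.law
  indep s t hs hst := indep_of_indep_of_le_right (hW.indep s t hs hst) (hW.natSA_le s)

end NaturalFiltration

section Zeros

variable {μ : Measure Ω} {Y : ℝ → Ω → ℝ}

lemma isAEContinuousAt_psgn (hY : ∀ᵐ ω ∂μ, Continuous fun t => Y t ω)
    (hne : ∀ t, 0 < t → ∀ᵐ ω ∂μ, Y t ω ≠ 0) : IsAEContinuousAt μ fun t ω => psgn (Y t ω) :=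
  fun s hs => by
    filter_upwards [hY, hne s hs] with ω hω hs0
    exact ContinuousAt.comp (f := fun r => Y r ω) (continuousAt_psgn hs0) hω.continuousAt

lemma ae_ae_ne_zero [SFinite μ] (hYm : ∀ t, 0 ≤ t → Measurable (Y t))
    (hY : ∀ᵐ ω ∂μ, Continuous fun t => Y t ω) (hne : ∀ t, 0 < t → ∀ᵐ ω ∂μ, Y t ω ≠ 0) :
    ∀ᵐ ω ∂μ, ∀ᵐ s ∂volume.restrict (Ioi 0), Y s ω ≠ 0 := by
  -- `Y` need not be jointly measurable off the event where it is continuous, but `Z` is.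
  set Z : ℝ × Ω → ℝ := fun p =>
    limUnder atTop fun n => Y (dyadicMesh n * ⌊p.1 / dyadicMesh n⌋₊) p.2
  have hZm : Measurable Z := by
    refine (StronglyMeasurable.limUnder (l := atTop) fun n => ?_).measurable
    have hcell : Measurable fun q : ℕ × Ω => Y (dyadicMesh n * q.1) q.2 :=
      measurable_from_prod_countable_right fun k =>
        hYm _ (dyadicMesh_mul_natCast_nonneg n k)
    have hfloor : Measurable fun p : ℝ × Ω => (⌊p.1 / dyadicMesh n⌋₊, p.2) := by fun_prop
    exact (hcell.comp hfloor).stronglyMeasurable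
  have hZY : ∀ᵐ ω ∂μ, ∀ s, 0 ≤ s → Z (s, ω) = Y s ω := hY.mono fun ω hω s hs =>
    ((hω.tendsto s).comp (tendsto_dyadicMesh_mul_natFloor hs)).limUnder_eq
  have hZne : ∀ᵐ s ∂volume.restrict (Ioi (0 : ℝ)), ∀ᵐ ω ∂μ, Z (s, ω) ≠ 0 := by
    filter_upwards [ae_restrict_mem measurableSet_Ioi] with s hs
    filter_upwards [hZY, hne s hs] with ω hω hs0
    rwa [hω s (le_of_lt hs)]
  rw [Measure.ae_ae_comm (p := fun s ω => Z (s, ω) ≠ 0)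
    (hZm (measurableSet_singleton 0)).compl] at hZne
  filter_upwards [hZne, hZY] with ω hω hω'
  filter_upwards [hω, ae_restrict_mem measurableSet_Ioi] with s hs hs0
  rwa [← hω' s (le_of_lt hs0)]

end Zeros

section StrongDifference

variable {μ : Measure Ω} {F : ℝ → MeasurableSpace Ω} {W : ℝ → Ω → ℝ} {β : ℝ → ℝ} {C : ℝ}

lemma continuous_eulerLimit_max (hβ : Antitone β) (hC : ∀ y, |β y| ≤ C) (y₀ : ℝ) {w : ℝ → ℝ}
    (hw : Continuous w) : Continuous fun t => eulerLimit β y₀ (max t 0) (dyadicValues w) := by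
  have hLip : LipschitzWith C.toNNReal
      fun t => eulerLimit β y₀ (max t 0) (dyadicValues w) - w (max t 0) := by
    refine LipschitzWith.of_dist_le' fun t s => ?_
    calc |eulerLimit β y₀ (max t 0) (dyadicValues w) - w (max t 0) -
          (eulerLimit β y₀ (max s 0) (dyadicValues w) - w (max s 0))|
        ≤ C * |max t 0 - max s 0| :=
          abs_eulerLimit_sub_le hβ hC y₀ hw (le_max_right _ _) (le_max_right _ _)
      _ ≤ C * |t - s| := mul_le_mul_of_nonneg_left (abs_max_sub_max_le_abs _ _ _)
          ((abs_nonneg _).trans (hC 0))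
  have hw' : Continuous fun t => w (max t 0) := hw.comp (by fun_prop)
  exact (hLip.continuous.add hw').congr fun t => sub_add_cancel _ _

lemma measurable_eulerLimit_of_le (hβ : Measurable β) (y₀ : ℝ) {α : Type*}
    {_ : MeasurableSpace α} {W : ℝ → α → ℝ} {t : ℝ} (ht : 0 ≤ t)
    (hW : ∀ s, 0 ≤ s → s ≤ t → Measurable (W s)) :
    Measurable fun ω => eulerLimit β y₀ t (dyadicValues fun s => W s ω) := by
  refine (StronglyMeasurable.limUnder (l := atTop) fun n => ?_).measurable
  refine (measurable_eulerSeq hβ y₀ (dyadicMesh n) (w := fun ω k => W (dyadicMesh n * k) ω) _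
    fun k hk => ?_).stronglyMeasurable
  have hmesh := dyadicMesh_pos n
  exact hW _ (by positivity) (le_trans (by gcongr) (dyadicMesh_mul_natFloor_le ht n))

lemma IsBM.ae_eulerLimit_ne_zero (hW : IsBM μ F W) [IsProbabilityMeasure μ] (hβ : Antitone β)
    (hC : ∀ y, |β y| ≤ C) (y₀ : ℝ) {t : ℝ} (ht : 0 < t) :
    ∀ᵐ ω ∂μ, eulerLimit β y₀ t (dyadicValues fun s => W s ω) ≠ 0 := by
  refine hW.natural.ae_ne_zero (H := fun _ _ => 1) (B := fun t ω => W t ω - W 0 ω)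
    (Y := fun t ω => eulerLimit β y₀ t (dyadicValues fun s => W s ω)) (fun _ _ => measurable_const)
    (fun _ _ => one_pow 2) (isSI_one W).2
    (fun t ht => measurable_eulerLimit_of_le hβ.measurable y₀ ht fun _ => measurable_natSA W)
    ((abs_nonneg _).trans (hC 0)) ?_ ht
  filter_upwards [hW.cont] with ω hω s t hs ht
  refine le_of_eq_of_le (congrArg _ ?_) (abs_eulerLimit_sub_le hβ hC y₀ hω hs ht)
  ring

/- The drift may jump at `0`, but Lebesgue-almost every time avoids the zeros of the solution. -/
lemma IsBM.eulerLimit_eq_add_integral (hW : IsBM μ F W) [IsProbabilityMeasure μ] (hβ : Antitone β)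
    (hC : ∀ y, |β y| ≤ C) (hcont : ∀ y ≠ 0, ContinuousAt β y) (y₀ : ℝ) :
    ∀ᵐ ω ∂μ, ∀ t, 0 ≤ t → eulerLimit β y₀ t (dyadicValues fun s => W s ω) =
      y₀ + (W t ω - W 0 ω) +
        ∫ s in 0..t, β (eulerLimit β y₀ s (dyadicValues fun s => W s ω)) := by
  have hne := ae_ae_ne_zero (μ := μ)
    (Y := fun t ω => eulerLimit β y₀ (max t 0) (dyadicValues fun s => W s ω))
    (fun t _ => measurable_eulerLimit_of_le hβ.measurable y₀ (le_max_right t 0)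
      fun s hs _ => hW.measurable hs)
    (hW.cont.mono fun ω hω => continuous_eulerLimit_max hβ hC y₀ hω)
    (fun t ht => hW.ae_eulerLimit_ne_zero hβ hC y₀ (lt_max_of_lt_left ht))
  filter_upwards [hne, hW.cont] with ω hω hcontW t ht
  refine SDEPaper.eulerLimit_eq_add_integral hβ hC y₀ hcontW ?_ ht
  filter_upwards [hω, ae_restrict_mem measurableSet_Ioi] with s hs (hs0 : 0 < s)
  rw [max_eq_left hs0.le] at hs
  exact hcont _ hs

end StrongDifference

section Existence

variable {μ : Measure Ω} {F : ℝ → MeasurableSpace Ω} {W B X₁ X₂ : ℝ → Ω → ℝ} {g h x₁ x₂ : ℝ}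

lemma solves47_of_sub_eq_of_add_eq (hm₁ : ∀ t, 0 ≤ t → Measurable[F t] (X₁ t))
    (hm₂ : ∀ t, 0 ≤ t → Measurable[F t] (X₂ t))
    (hcont : ∀ᵐ ω ∂μ, Continuous (fun t => X₁ t ω) ∧ Continuous (fun t => X₂ t ω))
    (hsub : ∀ᵐ ω ∂μ, ∀ t, 0 ≤ t → X₁ t ω - X₂ t ω = x₁ - x₂ + (W t ω - W 0 ω) +
      ∫ s in 0..t, bangDrift (g + h) (X₁ s ω - X₂ s ω))
    (hadd : ∀ᵐ ω ∂μ, ∀ t, 0 ≤ t → X₁ t ω + X₂ t ω = x₁ + x₂ + (g - h) * t + B t ω)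
    (hB : IsSI μ (fun t ω => psgn (X₁ t ω - X₂ t ω)) W B) : Solves47 μ F g h x₁ x₂ W X₁ X₂ := by
  refine ⟨fun t ht => ((hm₁ t ht).prodMk (hm₂ t ht)).comap_le, hcont,
    fun t ω => 1 / 2 * B t ω + 1 / 2 * (W t ω - W 0 ω),
    fun t ω => 1 / 2 * B t ω + -1 / 2 * (W t ω - W 0 ω),
    (hB.const_mul_add_const_mul (isSI_one W) _ _).congr_integrand ?_,
    (hB.const_mul_add_const_mul (isSI_one W) _ _).congr_integrand ?_, ?_⟩
  · exact .of_forall fun ω s _ => by rw [ite_le_eq_psgn]; ring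
  · exact .of_forall fun ω s _ => by rw [ite_le_eq_psgn]; ring
  · filter_upwards [hcont, hsub, hadd] with ω ⟨hc₁, hc₂⟩ hsub hadd t ht
    have hsub := hsub t ht
    simp only [bangDrift, intervalIntegral.integral_const_mul] at hsub
    rw [integral_ite_le_eq hc₁.measurable hc₂.measurable,
      integral_ite_le_eq hc₁.measurable hc₂.measurable]
    constructor <;> linarith [hadd t ht]

theorem IsBM.exists_solves47 (hW : IsBM μ F W) [IsProbabilityMeasure μ] (hgh : 0 ≤ g + h)
    (x₁ x₂ : ℝ) : ∃ X₁ X₂ : ℝ → Ω → ℝ, Solves47 μ (natSA W) g h x₁ x₂ W X₁ X₂ := by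
  have hβ := antitone_bangDrift hgh
  have hC := abs_bangDrift_le hgh
  set Y : ℝ → Ω → ℝ := fun t ω =>
    eulerLimit (bangDrift (g + h)) (x₁ - x₂) (max t 0) (dyadicValues fun s => W s ω)
  have hY_of_nonneg : ∀ t, 0 ≤ t → ∀ ω, Y t ω =
      eulerLimit (bangDrift (g + h)) (x₁ - x₂) t (dyadicValues fun s => W s ω) :=
    fun t ht ω => by simp only [Y, max_eq_left ht]
  have hYm : ∀ t, 0 ≤ t → Measurable[natSA W t] (Y t) := fun t ht => by
    simpa only [funext (hY_of_nonneg t ht)] using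
      measurable_eulerLimit_of_le hβ.measurable (x₁ - x₂) ht fun _ => measurable_natSA W
  have hYc : ∀ᵐ ω ∂μ, Continuous fun t => Y t ω :=
    hW.cont.mono fun ω hω => continuous_eulerLimit_max hβ hC _ hω
  have hYne : ∀ t, 0 < t → ∀ᵐ ω ∂μ, Y t ω ≠ 0 := fun t ht =>
    hW.ae_eulerLimit_ne_zero hβ hC _ (lt_max_of_lt_left ht)
  obtain ⟨B, hB⟩ := hW.natural.exists_isSignedIntegral
    (H := fun s ω => psgn (Y s ω)) (fun s hs => measurable_psgn.comp (hYm s hs))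
    (fun s ω => psgn_sq _)
    (isAEContinuousAt_psgn hYc hYne)
  have hsub : ∀ t ω, (x₁ + x₂ + (g - h) * t + B t ω + Y t ω) / 2 -
      (x₁ + x₂ + (g - h) * t + B t ω - Y t ω) / 2 = Y t ω := fun t ω => by ring
  refine ⟨fun t ω => (x₁ + x₂ + (g - h) * t + B t ω + Y t ω) / 2,
    fun t ω => (x₁ + x₂ + (g - h) * t + B t ω - Y t ω) / 2,
    solves47_of_sub_eq_of_add_eq (B := B)
      (fun t ht => (((hB.measurable t ht).const_add _).add (hYm t ht)).div_const 2)
      (fun t ht => (((hB.measurable t ht).const_add _).sub (hYm t ht)).div_const 2) ?_ ?_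
      (.of_forall fun ω t _ => by ring) (by simpa only [hsub] using hB.isSI)⟩
  · filter_upwards [hYc, hB.continuous] with ω hYω hBω
    constructor <;> fun_prop
  · filter_upwards [hW.eulerLimit_eq_add_integral hβ hC (fun y => continuousAt_bangDrift (g + h))
      (x₁ - x₂)] with ω hω t ht
    simp only [hsub]
    rw [hY_of_nonneg t ht, hω t ht]
    congr 1
    refine intervalIntegral.integral_congr fun s hs => ?_
    rw [uIcc_of_le ht] at hs
    simp only [hY_of_nonneg s hs.1]

lemma Solves47.mono {G : ℝ → MeasurableSpace Ω} (hX : Solves47 μ F g h x₁ x₂ W X₁ X₂)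
    (hFG : ∀ t, F t ≤ G t) : Solves47 μ G g h x₁ x₂ W X₁ X₂ :=
  ⟨fun t ht => (hX.1 t ht).trans (hFG t), hX.2⟩

lemma Solves47.natFilt_le (hX : Solves47 μ (natSA W) g h x₁ x₂ W X₁ X₂) (t : ℝ) :
    natFilt μ (fun s ω => (X₁ s ω, X₂ s ω)) t ≤ natFilt μ W t :=
  sup_le_sup_right (iSup₂_le fun s hs => (hX.1 s hs.1).trans (monotone_natSA W hs.2)) _

end Existence

/-! ### The law of integrals of sign processes -/

section Law

lemma sum_mul_leftSum {α ι : Type*} (S : Finset ι) (θ : ι → ℝ) {N : ι → ℕ} {M : ℕ}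
    (hM : ∀ x ∈ S, N x ≤ M) (c : ℝ) (K X : ℝ → α → ℝ) (ω : α) :
    ∑ x ∈ S, θ x * leftSum c (N x) K X ω = ∑ k ∈ Finset.range M,
      (∑ x ∈ S, if k < N x then θ x else 0) * K (c * k) ω *
        (X (c * (k + 1 : ℕ)) ω - X (c * k) ω) := by
  simp only [Finset.sum_mul]
  rw [Finset.sum_comm]
  refine Finset.sum_congr rfl fun x hx => ?_
  rw [leftSum, Finset.mul_sum]
  refine Finset.sum_subset_zero_on_sdiff (Finset.range_mono (hM x hx)) (fun k hk => ?_)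
    fun k hk => ?_
  · simp only [Finset.mem_sdiff, Finset.mem_range] at hk
    rw [if_neg hk.2, zero_mul, zero_mul]
  · rw [if_pos (Finset.mem_range.1 hk)]
    push_cast
    ring

variable {μ : Measure Ω} {F : ℝ → MeasurableSpace Ω} {W : ℝ → Ω → ℝ} {H H' B B' : ℝ → Ω → ℝ}
  {ι : Type*}

lemma IsBM.integral_cexp_sum_mul_leftSum (hB : IsBM μ F W) [IsProbabilityMeasure μ]
    (hH : ∀ s, 0 ≤ s → Measurable[F s] (H s)) (hH1 : ∀ s ω, H s ω ^ 2 = 1) {c : ℝ} (hc : 0 ≤ c)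
    (S : Finset ι) (θ : ι → ℝ) {N : ι → ℕ} {M : ℕ} (hM : ∀ x ∈ S, N x ≤ M) :
    ∫ ω, Complex.exp ((∑ x ∈ S, θ x * leftSum c (N x) H W ω : ℝ) * Complex.I) ∂μ =
      Complex.exp (-((∑ k ∈ Finset.range M, (∑ x ∈ S, if k < N x then θ x else 0) ^ 2 *
        (c * (k + 1 : ℕ) - c * k) / 2 : ℝ) : ℂ)) := by
  have hexp := hB.integral_mul_cexp_sum_mul_incr (a := fun k : ℕ => c * k)
    (fun i j hij => mul_le_mul_of_nonneg_left (Nat.cast_le.2 hij) hc) (by simp)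
    (Z := fun _ => 1) measurable_const (C := 1) (by simp)
    (H := fun k ω => (∑ x ∈ S, if k < N x then θ x else 0) * H (c * k) ω)
    (fun k => (hH _ (by positivity)).const_mul _)
    (fun k ω => by rw [mul_pow, hH1, mul_one]) M
  simp only [one_mul, integral_const, probReal_univ, one_smul] at hexp
  simp_rw [sum_mul_leftSum S θ hM]
  exact hexp

lemma IsBM.map_sum_mul_dyadicSum_eq (hB : IsBM μ F W) [IsProbabilityMeasure μ]
    (hH : ∀ s, 0 ≤ s → Measurable[F s] (H s)) (hH1 : ∀ s ω, H s ω ^ 2 = 1)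
    (hH' : ∀ s, 0 ≤ s → Measurable[F s] (H' s)) (hH1' : ∀ s ω, H' s ω ^ 2 = 1)
    (S : Finset ι) (θ : ι → ℝ) {t : ι → ℝ} (ht : ∀ x, 0 ≤ t x) (n : ℕ) :
    μ.map (fun ω => ∑ x ∈ S, θ x * dyadicSum H W (t x) n ω) =
      μ.map (fun ω => ∑ x ∈ S, θ x * dyadicSum H' W (t x) n ω) := by
  have hmeas : ∀ {H : ℝ → Ω → ℝ}, IsBddAdapted F 1 H →
      AEMeasurable (fun ω => ∑ x ∈ S, θ x * dyadicSum H W (t x) n ω) μ := fun hK =>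
    (Finset.measurable_sum _ fun x _ => ((hB.measurable_dyadicSum hK (ht x) n).mono
      (hB.le _) le_rfl).const_mul _).aemeasurable
  have hm := hmeas (isBddAdapted_of_sq_eq_one hH hH1)
  have hm' := hmeas (isBddAdapted_of_sq_eq_one hH' hH1')
  refine Measure.ext_of_charFun (funext fun r => ?_)
  have hM : ∀ x ∈ S, ⌊t x / dyadicMesh n⌋₊ ≤ S.sup fun x => ⌊t x / dyadicMesh n⌋₊ :=
    fun x hx => Finset.le_sup (f := fun x => ⌊t x / dyadicMesh n⌋₊) hx
  rw [charFun_apply_real, charFun_apply_real, integral_map hm (by fun_prop),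
    integral_map hm' (by fun_prop)]
  simp only [dyadicSum, ← Complex.ofReal_mul, Finset.mul_sum, ← mul_assoc]
  rw [hB.integral_cexp_sum_mul_leftSum hH hH1 (dyadicMesh_pos n).le S _ hM,
    hB.integral_cexp_sum_mul_leftSum hH' hH1' (dyadicMesh_pos n).le S _ hM]

lemma IsSignedIntegral.isBddAdapted {α : Type*} [MeasurableSpace α] {μ : Measure α}
    {F : ℝ → MeasurableSpace α} {W H B : ℝ → α → ℝ} (hI : IsSignedIntegral μ F W H B) :
    IsBddAdapted F 1 H :=
  isBddAdapted_of_sq_eq_one hI.measurable_integrand hI.sq_eq_one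

lemma IsSignedIntegral.tendstoInMeasure_dyadicSum (hI : IsSignedIntegral μ F W H B)
    (hB : IsBM μ F W) [IsProbabilityMeasure μ] {t : ℝ} (ht : 0 ≤ t) :
    TendstoInMeasure μ (fun n => dyadicSum H W t n) atTop (B t) :=
  (hB.tendstoInMeasure_rsum_iff_dyadicSum hI.isBddAdapted hI.isAEContinuousAt ht).1
    (hI.isSI.2 t ht)

lemma IsSignedIntegral.map_sum_mul_eq (hI : IsSignedIntegral μ F W H B)
    (hI' : IsSignedIntegral μ F W H' B') (hB : IsBM μ F W) [IsProbabilityMeasure μ]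
    (S : Finset ι) (θ : ι → ℝ) {t : ι → ℝ} (ht : ∀ x, 0 ≤ t x) :
    μ.map (fun ω => ∑ x ∈ S, θ x * B (t x) ω) = μ.map (fun ω => ∑ x ∈ S, θ x * B' (t x) ω) := by
  have hlim : ∀ {H B : ℝ → Ω → ℝ}, IsSignedIntegral μ F W H B →
      TendstoInMeasure μ (fun n ω => ∑ x ∈ S, θ x * dyadicSum H W (t x) n ω) atTop
        (fun ω => ∑ x ∈ S, θ x * B (t x) ω) := fun hI =>
    tendstoInMeasure_sum S fun x _ => tendstoInMeasure_bdd_mul (fun _ => le_rfl)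
      (hI.tendstoInMeasure_dyadicSum hB (ht x))
  have hmeas : ∀ {H B : ℝ → Ω → ℝ}, IsSignedIntegral μ F W H B → ∀ n,
      Measurable fun ω => ∑ x ∈ S, θ x * dyadicSum H W (t x) n ω := fun hI n =>
    Finset.measurable_sum _ fun x _ => ((hB.measurable_dyadicSum hI.isBddAdapted (ht x) n).mono
      (hB.le _) le_rfl).const_mul _
  exact map_eq_of_tendstoInMeasure (hlim hI) (hlim hI') (hmeas hI) (hmeas hI')
    (.of_forall fun n => hB.map_sum_mul_dyadicSum_eq hI.measurable_integrand hI.sq_eq_one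
      hI'.measurable_integrand hI'.sq_eq_one S θ ht n)

lemma map_pi_eq_of_forall_map_sum_mul_eq [Fintype ι] [IsFiniteMeasure μ] {X X' : ι → Ω → ℝ}
    (hX : ∀ i, Measurable (X i)) (hX' : ∀ i, Measurable (X' i))
    (hmap : ∀ θ : ι → ℝ, μ.map (fun ω => ∑ i, θ i * X i ω) = μ.map (fun ω => ∑ i, θ i * X' i ω)) :
    μ.map (fun ω i => X i ω) = μ.map (fun ω i => X' i ω) := by
  classical
  refine Measure.ext_of_charFunDual ?_
  ext L
  obtain ⟨θ, hθ⟩ : ∃ θ : ι → ℝ, ∀ v, L v = ∑ i, θ i * v i := by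
    refine ⟨fun i => L (Pi.single i 1), fun v => ?_⟩
    conv_lhs => rw [pi_eq_sum_univ' v, map_sum]
    exact Finset.sum_congr rfl fun i _ => by rw [map_smul, smul_eq_mul, mul_comm]
  have hcharFun : ∀ {X : ι → Ω → ℝ}, (∀ i, Measurable (X i)) →
      charFunDual (μ.map fun ω i => X i ω) L = charFun (μ.map fun ω => ∑ i, θ i * X i ω) 1 :=
    fun hX => by
      rw [charFunDual_apply, charFun_apply_real, integral_map (by fun_prop) (by fun_prop),
        integral_map (by fun_prop) (by fun_prop)]
      simp only [hθ, Complex.ofReal_one, one_mul]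
  rw [hcharFun hX, hcharFun hX', hmap]

lemma IsSignedIntegral.map_dyadicValues_eq (hI : IsSignedIntegral μ F W H B)
    (hI' : IsSignedIntegral μ F W H' B') (hB : IsBM μ F W) [IsProbabilityMeasure μ] :
    μ.map (fun ω => dyadicValues fun s => B s ω) =
      μ.map (fun ω => dyadicValues fun s => B' s ω) := by
  have hgrid (p : ℕ × ℕ) : 0 ≤ dyadicMesh p.1 * p.2 := dyadicMesh_mul_natCast_nonneg p.1 p.2
  have hm : ∀ p : ℕ × ℕ, Measurable fun ω => dyadicValues (fun s => B s ω) p := fun p =>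
    (hI.measurable _ (hgrid p)).mono (hB.le _) le_rfl
  have hm' : ∀ p : ℕ × ℕ, Measurable fun ω => dyadicValues (fun s => B' s ω) p := fun p =>
    (hI'.measurable _ (hgrid p)).mono (hB.le _) le_rfl
  refine (map_eq_iff_forall_finset_map_restrict_eq (measurable_pi_lambda _ hm).aemeasurable
    (measurable_pi_lambda _ hm').aemeasurable).2 fun S => ?_
  exact map_pi_eq_of_forall_map_sum_mul_eq (fun p : S => hm p) (fun p : S => hm' p)
    fun θ => hI.map_sum_mul_eq hI' hB Finset.univ θ fun p : S => hgrid p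

lemma IsSignedIntegral.neg (hI : IsSignedIntegral μ F W H B) :
    IsSignedIntegral μ F W (fun t ω => -H t ω) (fun t ω => -B t ω) where
  measurable_integrand s hs := (hI.measurable_integrand s hs).neg
  sq_eq_one s ω := by rw [neg_sq, hI.sq_eq_one]
  isAEContinuousAt s hs := (hI.isAEContinuousAt s hs).mono fun ω hω => hω.neg
  measurable t ht := (hI.measurable t ht).neg
  continuous := hI.continuous.mono fun ω hω => hω.neg
  isSI := by simpa using hI.isSI.const_mul_add_const_mul hI.isSI (-1) 0

end Law

/-! ### Associativity of the integral and recovery of the driving noise -/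

section Associativity

/-- The process `K` frozen between consecutive points of the dyadic grid of mesh `2⁻ⁿ`. -/
def dyadicFreeze {α : Type*} (K : ℝ → α → ℝ) (n : ℕ) (s : ℝ) (ω : α) : ℝ :=
  K (dyadicMesh n * ⌊s / dyadicMesh n⌋₊) ω

lemma natFloor_dyadicMesh_mul_add_div {n p : ℕ} (hnp : n ≤ p) (N : ℕ) {j : ℕ}
    (hj : j < 2 ^ (p - n)) :
    ⌊dyadicMesh p * (2 ^ (p - n) * N + j : ℕ) / dyadicMesh n⌋₊ = N := by
  have hcast : (2 : ℝ) ^ (p - n) = (2 ^ (p - n) : ℕ) := by push_cast; rfl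
  rw [← dyadicMesh_mul_two_pow hnp, mul_div_mul_left _ _ (dyadicMesh_pos p).ne', hcast,
    Nat.floor_div_eq_div, Nat.mul_add_div (by positivity), Nat.div_eq_of_lt hj, add_zero]

lemma leftSum_succ {α : Type*} (c : ℝ) (N : ℕ) (K X : ℝ → α → ℝ) (ω : α) :
    leftSum c (N + 1) K X ω =
      leftSum c N K X ω + K (c * N) ω * (X (c * (N + 1)) ω - X (c * N) ω) :=
  Finset.sum_range_succ _ N

lemma leftSum_dyadicSum {α : Type*} (K H X : ℝ → α → ℝ) {n p : ℕ} (hnp : n ≤ p) (N : ℕ) (ω : α) :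
    leftSum (dyadicMesh n) N K (fun t => dyadicSum H X t p) ω =
      leftSum (dyadicMesh p) (2 ^ (p - n) * N) (fun s ω => dyadicFreeze K n s ω * H s ω) X ω := by
  induction N with
  | zero => simp [leftSum]
  | succ N ih =>
    have hincr : dyadicSum H X (dyadicMesh n * (N + 1)) p ω - dyadicSum H X (dyadicMesh n * N) p ω =
        ∑ i ∈ Finset.range (2 ^ (p - n)), H (dyadicMesh p * (2 ^ (p - n) * N + i : ℕ)) ω *
          (X (dyadicMesh p * (2 ^ (p - n) * N + (i + 1) : ℕ)) ω -
            X (dyadicMesh p * (2 ^ (p - n) * N + i : ℕ)) ω) := by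
      have hfloor := natFloor_dyadicMesh_mul_div hnp (N + 1)
      push_cast at hfloor
      rw [dyadicSum, dyadicSum, hfloor, natFloor_dyadicMesh_mul_div hnp, mul_add_one, leftSum_add,
        add_sub_cancel_left]
    rw [mul_add_one, leftSum_add (dyadicMesh p), ← ih, leftSum_succ, hincr, Finset.mul_sum]
    refine congrArg _ (Finset.sum_congr rfl fun j hj => ?_)
    rw [dyadicFreeze, natFloor_dyadicMesh_mul_add_div hnp N (Finset.mem_range.1 hj), mul_assoc]

lemma IsBddAdapted.dyadicFreeze {α : Type*} {F : ℝ → MeasurableSpace α} (hF : Monotone F)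
    {K : ℝ → α → ℝ} {C : ℝ} (hK : IsBddAdapted F C K) (n : ℕ) :
    IsBddAdapted F C (dyadicFreeze K n) where
  meas _ hs := (hK.meas _ (dyadicMesh_mul_natCast_nonneg n _)).mono
    (hF (dyadicMesh_mul_natFloor_le hs n)) le_rfl
  bdd _ ω := hK.bdd _ ω

lemma IsBddAdapted.mul {α : Type*} {F : ℝ → MeasurableSpace α} {K H : ℝ → α → ℝ} {C D : ℝ}
    (hK : IsBddAdapted F C K) (hH : IsBddAdapted F D H) :
    IsBddAdapted F (C * D) (fun s ω => K s ω * H s ω) where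
  meas s hs := (hK.meas s hs).mul (hH.meas s hs)
  bdd s ω := by
    rw [abs_mul]
    exact mul_le_mul (hK.bdd s ω) (hH.bdd s ω) (abs_nonneg _) ((abs_nonneg _).trans (hK.bdd s ω))

variable {μ : Measure Ω} {F : ℝ → MeasurableSpace Ω} {W K H B : ℝ → Ω → ℝ} {C D t : ℝ}

lemma IsAEContinuousAt.mul (hK : IsAEContinuousAt μ K) (hH : IsAEContinuousAt μ H) :
    IsAEContinuousAt μ (fun s ω => K s ω * H s ω) := fun s hs => by
  filter_upwards [hK s hs, hH s hs] with ω hKω hHω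
  exact hKω.mul hHω

lemma IsBM.tendstoInMeasure_leftSum_dyadicSum (hB : IsBM μ F W) [IsProbabilityMeasure μ]
    (hK : IsBddAdapted F C K) (hKc : IsAEContinuousAt μ K) (hH : IsBddAdapted F D H)
    (hHc : IsAEContinuousAt μ H) (ht : 0 ≤ t) :
    TendstoInMeasure μ (fun (p : ℕ × ℕ) ω => leftSum (dyadicMesh p.1) ⌊t / dyadicMesh p.1⌋₊ K
        (fun s => dyadicSum H W s (max p.1 p.2)) ω -
          dyadicSum (fun s ω => K s ω * H s ω) W t p.1 ω) (atTop ×ˢ atTop) (fun _ => 0) := by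
  have hfst : Tendsto (Prod.fst : ℕ × ℕ → ℕ) (atTop ×ˢ atTop) atTop := tendsto_fst
  have hmax : Tendsto (fun p : ℕ × ℕ => max p.1 p.2) (atTop ×ˢ atTop) atTop :=
    tendsto_atTop_mono (fun p => le_max_left p.1 p.2) hfst
  have key := hB.tendstoInMeasure_leftSum_sub_leftSum (l := (atTop ×ˢ atTop : Filter (ℕ × ℕ)))
    (c := fun p => dyadicMesh (max p.1 p.2)) (c' := fun p => dyadicMesh p.1)
    (N := fun p => 2 ^ (max p.1 p.2 - p.1) * ⌊t / dyadicMesh p.1⌋₊)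
    (N' := fun p => ⌊t / dyadicMesh p.1⌋₊) (K := fun p s ω => dyadicFreeze K p.1 s ω * H s ω)
    (K' := fun _ s ω => K s ω * H s ω) (t := t) (C := C * D)
    (fun _ => dyadicMesh_pos _) (fun _ => dyadicMesh_pos _)
    (fun p => (hK.dyadicFreeze hB.mono p.1).mul hH) (fun _ => hK.mul hH)
    (((tendsto_dyadicMesh_mul_natFloor ht).comp hfst).congr fun p => ?_)
    ((tendsto_dyadicMesh_mul_natFloor ht).comp hfst) fun s hs _ => ?_
  · refine key.congr_left fun p => ae_of_all _ fun ω => ?_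
    beta_reduce
    rw [leftSum_dyadicSum K H W (le_max_left p.1 p.2)]
    rfl
  · rw [Function.comp, ← dyadicMesh_mul_two_pow (le_max_left p.1 p.2)]
    push_cast
    ring
  · filter_upwards [hKc s hs, hHc s hs] with ω hKω hHω
    have hcoarse := (tendsto_dyadicMesh_mul_natFloor hs.le).comp hfst
    have hfine := (tendsto_dyadicMesh_mul_natFloor hs.le).comp hmax
    have hnested := tendsto_mul_natFloor_div (fun p : ℕ × ℕ => dyadicMesh_pos p.1)
      (tendsto_dyadicMesh.comp hfst) (fun p => dyadicMesh_mul_natCast_nonneg (max p.1 p.2) _) hfine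
    have hdiff := ((hKω.tendsto.comp hnested).mul (hHω.tendsto.comp hfine)).sub
      ((hKω.tendsto.comp hcoarse).mul (hHω.tendsto.comp hcoarse))
    rw [sub_self] at hdiff
    exact hdiff

lemma IsBM.tendstoInMeasure_dyadicSum_sub_dyadicSum_mul (hB : IsBM μ F W) [IsProbabilityMeasure μ]
    (hK : IsBddAdapted F C K) (hKc : IsAEContinuousAt μ K) (hH : IsBddAdapted F D H)
    (hHc : IsAEContinuousAt μ H)
    (hBt : ∀ t, 0 ≤ t → TendstoInMeasure μ (fun n => dyadicSum H W t n) atTop (B t)) (ht : 0 ≤ t) :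
    TendstoInMeasure μ (fun n ω => dyadicSum K B t n ω -
      dyadicSum (fun s ω => K s ω * H s ω) W t n ω) atTop (fun _ => 0) := by
  refine tendstoInMeasure_zero_of_tendstoInMeasure_prod
    (f := fun n p ω => leftSum (dyadicMesh n) ⌊t / dyadicMesh n⌋₊ K
      (fun s => dyadicSum H W s (max n p)) ω - dyadicSum (fun s ω => K s ω * H s ω) W t n ω)
    (fun n => ?_) (hB.tendstoInMeasure_leftSum_dyadicSum hK hKc hH hHc ht)
  refine tendstoInMeasure_sub ?_ (tendstoInMeasure_const _)
  have hmax : Tendsto (fun p => max n p) atTop atTop :=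
    tendsto_atTop_mono (fun p => le_max_right n p) tendsto_id
  have hmesh := dyadicMesh_pos n
  have hsum := tendstoInMeasure_sum (μ := μ) (l := (atTop : Filter ℕ))
    (Finset.range ⌊t / dyadicMesh n⌋₊)
    (f := fun k p ω => K (dyadicMesh n * k) ω *
      (dyadicSum H W (dyadicMesh n * (k + 1)) (max n p) ω -
        dyadicSum H W (dyadicMesh n * k) (max n p) ω))
    (g := fun k ω => K (dyadicMesh n * k) ω *
      (B (dyadicMesh n * (k + 1)) ω - B (dyadicMesh n * k) ω))
    fun k _ => tendstoInMeasure_bdd_mul (hK.bdd _) (tendstoInMeasure_sub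
      (fun ε hε => (hBt _ (by positivity) ε hε).comp hmax)
      (fun ε hε => (hBt _ (by positivity) ε hε).comp hmax))
  refine hsum.congr_right (ae_of_all _ fun ω => ?_)
  simp [dyadicSum, leftSum]

lemma dyadicSum_one {α : Type*} (X : ℝ → α → ℝ) (t : ℝ) (n : ℕ) (ω : α) :
    dyadicSum (fun _ _ => 1) X t n ω = X (dyadicMesh n * ⌊t / dyadicMesh n⌋₊) ω - X 0 ω := by
  have htel := Finset.sum_range_sub (fun k : ℕ => X (dyadicMesh n * k) ω) ⌊t / dyadicMesh n⌋₊
  simpa [dyadicSum, leftSum] using htel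

lemma isBddAdapted_one {α : Type*} (F : ℝ → MeasurableSpace α) :
    IsBddAdapted F 1 (fun _ _ => 1) :=
  isBddAdapted_of_sq_eq_one (fun _ _ => measurable_const) fun _ _ => one_pow 2

lemma IsBM.tendstoInMeasure_dyadicSum_one (hB : IsBM μ F W) [IsFiniteMeasure μ] (ht : 0 ≤ t) :
    TendstoInMeasure μ (fun n => dyadicSum (fun _ _ => 1) W t n) atTop (W t) := by
  refine tendstoInMeasure_of_ae_tendsto (fun n => ((hB.measurable_dyadicSum (isBddAdapted_one F)
    ht n).mono (hB.le _) le_rfl).aestronglyMeasurable) ?_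
  filter_upwards [hB.cont, hB.init] with ω hcont hinit
  simp_rw [dyadicSum_one, hinit, sub_zero]
  exact (hcont.tendsto t).comp (tendsto_dyadicMesh_mul_natFloor ht)

lemma IsSignedIntegral.tendstoInMeasure_dyadicSum_of_mul_eq_one (hI : IsSignedIntegral μ F W H B)
    (hB : IsBM μ F W) [IsProbabilityMeasure μ] (hK : IsBddAdapted F 1 K)
    (hKc : IsAEContinuousAt μ K) (hKH : ∀ s, 0 < s → ∀ᵐ ω ∂μ, K s ω * H s ω = 1) (ht : 0 ≤ t) :
    TendstoInMeasure μ (fun n => dyadicSum K B t n) atTop (W t) := by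
  have hone : TendstoInMeasure μ (fun n ω => dyadicSum (fun s ω => K s ω * H s ω) W t n ω -
      dyadicSum (fun _ _ => 1) W t n ω) atTop (fun _ => 0) := by
    refine hB.tendstoInMeasure_leftSum_sub_leftSum (K' := fun _ _ _ => 1) dyadicMesh_pos
      dyadicMesh_pos (fun _ => hK.mul hI.isBddAdapted)
      (fun _ => by simpa only [mul_one] using isBddAdapted_one F)
      (tendsto_dyadicMesh_mul_natFloor ht) (tendsto_dyadicMesh_mul_natFloor ht) fun s hs _ => ?_
    filter_upwards [hKc.mul hI.isAEContinuousAt s hs, hKH s hs] with ω hω hmul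
    have hlim := hω.tendsto.comp (tendsto_dyadicMesh_mul_natFloor hs.le)
    rw [hmul] at hlim
    simpa only [sub_self, Function.comp_def] using hlim.sub_const 1
  rw [tendstoInMeasure_congr_of_sub (hB.tendstoInMeasure_dyadicSum_sub_dyadicSum_mul hK hKc
    hI.isBddAdapted hI.isAEContinuousAt (fun _ => hI.tendstoInMeasure_dyadicSum hB) ht),
    tendstoInMeasure_congr_of_sub hone]
  exact hB.tendstoInMeasure_dyadicSum_one ht

end Associativity

/-! ### Reflection of a path after its first zero -/

section Reflection

/-- The path `y` is bounded away from zero along the dyadic times of `[0, s]`; for continuous `y`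
this means that `y` has no zero on `[0, s]`. Testing on dyadic times makes it a countable
condition. -/
def AvoidsZero (y : ℝ → ℝ) (s : ℝ) : Prop :=
  ∃ j : ℕ, ∀ p k : ℕ, dyadicMesh p * k ≤ s → 1 / ((j : ℝ) + 1) ≤ |y (dyadicMesh p * k)|

open Classical in
/-- The sign which is `1` before the first zero of the path `y` and `-1` from then on. -/
def flipSign (y : ℝ → ℝ) (s : ℝ) : ℝ := if AvoidsZero y s then 1 else -1

variable {y : ℝ → ℝ} {s t T τ : ℝ}

lemma flipSign_sq (y : ℝ → ℝ) (s : ℝ) : flipSign y s ^ 2 = 1 := by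
  rw [flipSign, ite_pow, one_pow, neg_one_sq, ite_self]

lemma avoidsZero_iff (hy : Continuous y) : AvoidsZero y s ↔ ∀ r ∈ Icc 0 s, y r ≠ 0 := by
  refine ⟨fun ⟨j, hj⟩ r hr hyr => ?_, fun hne => ?_⟩
  · have hlim : Tendsto (fun n => |y (dyadicMesh n * ⌊r / dyadicMesh n⌋₊)|) atTop (nhds |y r|) :=
      (hy.abs.tendsto r).comp (tendsto_dyadicMesh_mul_natFloor hr.1)
    have hpos : 0 < |y r| := Nat.one_div_pos_of_nat.trans_le (ge_of_tendsto' hlim fun n =>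
      hj n _ ((dyadicMesh_mul_natFloor_le hr.1 n).trans hr.2))
    exact abs_pos.1 hpos hyr
  · rcases lt_or_ge s 0 with hs | hs
    · exact ⟨0, fun p k hk => absurd (hk.trans_lt hs) (dyadicMesh_mul_natCast_nonneg p k).not_gt⟩
    · obtain ⟨r, hr, hmin⟩ := isCompact_Icc.exists_isMinOn (nonempty_Icc.2 hs) hy.abs.continuousOn
      obtain ⟨j, hj⟩ := exists_nat_one_div_lt (abs_pos.2 (hne r hr))
      exact ⟨j, fun p k hk => hj.le.trans (hmin ⟨dyadicMesh_mul_natCast_nonneg p k, hk⟩)⟩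

lemma exists_flipSign_eq_ite (hy : Continuous y) (T : ℝ) :
    ∃ τ, 0 ≤ τ ∧ (τ ≤ T → y τ = 0) ∧ ∀ r ≤ T, flipSign y r = if r < τ then 1 else -1 := by
  let zeros : Set ℝ := {r | 0 ≤ r ∧ y r = 0}
  have hbdd : BddBelow zeros := ⟨0, fun _ hr => hr.1⟩
  have hclosed : IsClosed zeros :=
    (isClosed_le continuous_const continuous_id).inter (isClosed_eq hy continuous_const)
  rcases zeros.eq_empty_or_nonempty with hempty | hne
  · refine ⟨max (T + 1) 0, le_max_right _ _, fun hT => ?_, fun r hr => ?_⟩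
    · linarith [le_max_left (T + 1) 0]
    · have havoid : AvoidsZero y r :=
        (avoidsZero_iff hy).2 fun q hq hyq => (hempty ▸ (⟨hq.1, hyq⟩ : q ∈ zeros) : q ∈ (∅ : Set ℝ))
      rw [flipSign, if_pos havoid, if_pos (lt_max_of_lt_left (by linarith))]
  · obtain ⟨hτ, hyτ⟩ : sInf zeros ∈ zeros := hclosed.csInf_mem hne hbdd
    refine ⟨sInf zeros, hτ, fun _ => hyτ, fun r _ => ?_⟩
    have havoid : AvoidsZero y r ↔ r < sInf zeros := by
      rw [avoidsZero_iff hy]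
      refine ⟨fun h => not_le.1 fun hr => h _ ⟨hτ, hr⟩ hyτ, fun h q hq hyq => ?_⟩
      exact ((csInf_le hbdd ⟨hq.1, hyq⟩).trans hq.2).not_gt h
    simp only [flipSign, havoid]

lemma continuousAt_flipSign (hy : Continuous y) (hs : y s ≠ 0) : ContinuousAt (flipSign y) s := by
  obtain ⟨τ, -, hyτ, hflip⟩ := exists_flipSign_eq_ite hy (s + 1)
  have hflip' : flipSign y =ᶠ[nhds s] fun r => if r < τ then 1 else -1 :=
    (gt_mem_nhds (lt_add_one s)).mono fun r hr => hflip r hr.le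
  refine ContinuousAt.congr ?_ hflip'.symm
  rcases lt_trichotomy s τ with hlt | rfl | hgt
  · exact continuousAt_const.congr ((gt_mem_nhds hlt).mono fun r hr => (if_pos hr).symm)
  · exact absurd (hyτ (lt_add_one s).le) hs
  · exact continuousAt_const.congr
      ((lt_mem_nhds hgt).mono fun r hr => (if_neg (not_lt.2 hr.le)).symm)

lemma abs_flipSign (y : ℝ → ℝ) (s : ℝ) : |flipSign y s| = 1 := by
  rw [← sq_eq_sq₀ (abs_nonneg _) zero_le_one, sq_abs, flipSign_sq, one_pow]

lemma continuous_flipSign_mul (hy : Continuous y) : Continuous fun s => flipSign y s * y s := by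
  refine continuous_iff_continuousAt.2 fun s => ?_
  by_cases hs : y s = 0
  · have habs (r : ℝ) : ‖flipSign y r * y r‖ = |y r| := by
      rw [Real.norm_eq_abs, abs_mul, abs_flipSign, one_mul]
    have hlim : Tendsto (fun r => |y r|) (nhds s) (nhds 0) := by
      simpa only [hs, abs_zero] using hy.abs.tendsto s
    rw [ContinuousAt, hs, mul_zero]
    exact squeeze_zero_norm (fun r => (habs r).le) hlim
  · exact (continuousAt_flipSign hy hs).mul hy.continuousAt

lemma measurable_flipSign {α : Type*} {_ : MeasurableSpace α} {Y : ℝ → α → ℝ}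
    (hY : ∀ r, 0 ≤ r → r ≤ s → Measurable (Y r)) :
    Measurable fun ω => flipSign (fun r => Y r ω) s := by
  have havoid : MeasurableSet {ω | AvoidsZero (fun r => Y r ω) s} := by
    simp only [AvoidsZero, ofPred_exists, ofPred_forall]
    refine .iUnion fun j => .iInter fun p => .iInter fun k => .iInter fun hk => ?_
    exact measurableSet_le measurable_const
      (hY _ (dyadicMesh_mul_natCast_nonneg p k) hk).abs
  exact Measurable.ite havoid measurable_const measurable_const

lemma leftSum_eq_of_flip {α : Type*} {K X : ℝ → α → ℝ} {ω : α} {c : ℝ} (hc : 0 < c) (N : ℕ)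
    (hK : ∀ r < c * N, K r ω = if r < τ then 1 else -1) :
    leftSum c N K X ω = 2 * X (c * (min N ⌈τ / c⌉₊ : ℕ)) ω - X (c * N) ω - X 0 ω := by
  induction N with
  | zero => simp only [leftSum, Finset.sum_range_zero, zero_min, Nat.cast_zero, mul_zero]; ring
  | succ N ih =>
    have hlt : c * N < c * (N + 1 : ℕ) := by push_cast; nlinarith
    have hceil : c * N < τ ↔ N < ⌈τ / c⌉₊ := by rw [Nat.lt_ceil, lt_div_iff₀' hc]
    rw [leftSum_succ, ih fun r hr => hK r (hr.trans hlt), hK _ hlt]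
    by_cases hN : N < ⌈τ / c⌉₊
    · rw [if_pos (hceil.2 hN), min_eq_left hN.le, min_eq_left (Nat.succ_le_of_lt hN)]
      push_cast
      ring
    · rw [if_neg (hceil.not.2 hN), min_eq_right (not_lt.1 hN),
        min_eq_right ((not_lt.1 hN).trans N.le_succ)]
      push_cast
      ring

lemma tendsto_dyadicMesh_mul_natCeil (hτ : 0 ≤ τ) :
    Tendsto (fun n => dyadicMesh n * ⌈τ / dyadicMesh n⌉₊) atTop (nhds τ) := by
  refine ((tendsto_nat_ceil_mul_div_atTop hτ).comp
    (tendsto_pow_atTop_atTop_of_one_lt one_lt_two)).congr fun n => ?_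
  simp only [Function.comp_apply, dyadicMesh, div_inv_eq_mul]
  rw [div_eq_inv_mul]

lemma tendsto_dyadicSum_of_flip {α : Type*} {K X : ℝ → α → ℝ} {ω : α}
    (hX : Continuous fun t => X t ω) (hτ : 0 ≤ τ) (ht : 0 ≤ t)
    (hK : ∀ r < t, K r ω = if r < τ then 1 else -1) :
    Tendsto (fun n => dyadicSum K X t n ω) atTop
      (nhds (2 * X (min t τ) ω - X t ω - X 0 ω)) := by
  have hfloor := tendsto_dyadicMesh_mul_natFloor ht
  have hmin := hfloor.min (tendsto_dyadicMesh_mul_natCeil hτ)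
  refine ((((hX.tendsto _).comp hmin).const_mul 2).sub ((hX.tendsto t).comp hfloor)).sub_const
    (X 0 ω) |>.congr fun n => ?_
  rw [dyadicSum, leftSum_eq_of_flip (dyadicMesh_pos n) _
    fun r hr => hK r (hr.trans_le (dyadicMesh_mul_natFloor_le ht n))]
  simp only [Function.comp_apply, Nat.cast_min, mul_min_of_nonneg _ _ (dyadicMesh_pos n).le]

lemma eq_of_tendsto_dyadicSum_of_flip {α : Type*} {K X X' : ℝ → α → ℝ} {ω : α}
    (hX : Continuous fun t => X t ω) (hX' : Continuous fun t => X' t ω)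
    (hlim : ∀ n k : ℕ, ∀ L, Tendsto (fun p => dyadicSum K X (dyadicMesh n * k) p ω) atTop (nhds L) →
      X' (dyadicMesh n * k) ω = L) (hτ : 0 ≤ τ) (ht : 0 ≤ t)
    (hK : ∀ r < t, K r ω = if r < τ then 1 else -1) :
    X' t ω = 2 * X (min t τ) ω - X t ω - X 0 ω := by
  have hrefl : Continuous fun t => 2 * X (min t τ) ω - X t ω - X 0 ω :=
    (((hX.comp (continuous_id.min continuous_const)).const_mul 2).sub hX).sub continuous_const
  have hgrid := tendsto_dyadicMesh_mul_natFloor ht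
  refine tendsto_nhds_unique ((hX'.tendsto t).comp hgrid)
    (((hrefl.tendsto t).comp hgrid).congr fun n => ?_)
  exact (hlim n _ _ (tendsto_dyadicSum_of_flip hX hτ (dyadicMesh_mul_natCast_nonneg n _)
    fun r hr => hK r (hr.trans_le (dyadicMesh_mul_natFloor_le ht n)))).symm

variable {β : ℝ → ℝ} {C y₀ : ℝ}

lemma integral_comp_eq_of_flip (hβ : Measurable β) (hC : ∀ x, |β x| ≤ C)
    (hodd : ∀ x ≠ 0, β (-x) = -β x) {z : ℝ → ℝ} (hy : Measurable y) (hz : Measurable z)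
    (hτ : 0 ≤ τ) (ht : 0 ≤ t) (hzy : ∀ r ≤ t, z r = if r < τ then y r else -y r)
    (hne : ∀ᵐ r ∂volume.restrict (Ioi 0), y r ≠ 0) :
    ∫ r in 0..t, β (z r) =
      2 * (∫ r in 0..min t τ, β (y r)) - ∫ r in 0..t, β (y r) := by
  have hyi := intervalIntegrable_bdd_comp hβ hC hy
  have hzi := intervalIntegrable_bdd_comp hβ hC hz
  have hmin : 0 ≤ min t τ := le_min ht hτ
  have hbefore : ∫ r in 0..min t τ, β (z r) = ∫ r in 0..min t τ, β (y r) := by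
    refine intervalIntegral.integral_congr_ae ((volume.ae_ne τ).mono fun r hr hmem => ?_)
    rw [uIoc_of_le hmin] at hmem
    rw [hzy r (hmem.2.trans (min_le_left _ _)),
      if_pos (lt_of_le_of_ne (hmem.2.trans (min_le_right _ _)) hr)]
  have hafter : ∫ r in min t τ..t, β (z r) = -∫ r in min t τ..t, β (y r) := by
    rw [← intervalIntegral.integral_neg]
    rw [ae_restrict_iff' measurableSet_Ioi] at hne
    refine intervalIntegral.integral_congr_ae (hne.mono fun r hr hmem => ?_)
    rw [uIoc_of_le (min_le_left _ _)] at hmem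
    have hτr : τ ≤ r := ((min_lt_iff.1 hmem.1).resolve_left hmem.2.not_gt).le
    rw [hzy r hmem.2, if_neg hτr.not_gt, hodd _ (hr (hmin.trans_lt hmem.1))]
  rw [← intervalIntegral.integral_add_adjacent_intervals (hzi 0 (min t τ)) (hzi (min t τ) t),
    ← intervalIntegral.integral_add_adjacent_intervals (hyi 0 (min t τ)) (hyi (min t τ) t),
    hbefore, hafter]
  ring

/-- The flipped path and its noise are both of the form `2 f (min t τ) - f t`, an operation which
commutes with `f ↦ ∫ β ∘ f` because `β` is odd away from zero. -/
lemma flipSign_mul_eq_add_integral {α : Type*} {Y B B' : ℝ → α → ℝ} {ω : α} (hβ : Measurable β)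
    (hC : ∀ x, |β x| ≤ C) (hodd : ∀ x ≠ 0, β (-x) = -β x) (hY : Continuous fun t => Y t ω)
    (hB : Continuous fun t => B t ω) (hB0 : B 0 ω = 0) (hB' : Continuous fun t => B' t ω)
    (hYB : ∀ t, 0 ≤ t → Y t ω = y₀ + B t ω + ∫ s in 0..t, β (Y s ω))
    (hne : ∀ᵐ s ∂volume.restrict (Ioi 0), Y s ω ≠ 0)
    (hlim : ∀ n k : ℕ, ∀ L, Tendsto (fun p => dyadicSum (fun t ω => flipSign (fun r => Y r ω) t) B
      (dyadicMesh n * k) p ω) atTop (nhds L) → B' (dyadicMesh n * k) ω = L) (ht : 0 ≤ t) :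
    flipSign (fun r => Y r ω) t * Y t ω =
      y₀ + B' t ω + ∫ s in 0..t, β (flipSign (fun r => Y r ω) s * Y s ω) := by
  obtain ⟨τ, hτ, hYτ, hflip⟩ := exists_flipSign_eq_ite hY t
  have hnoise := eq_of_tendsto_dyadicSum_of_flip hB hB' hlim hτ ht fun r hr => hflip r hr.le
  have hdrift := integral_comp_eq_of_flip hβ hC hodd hY.measurable
    (continuous_flipSign_mul hY).measurable hτ ht
    (fun r hr => by rw [hflip r hr, ite_mul, one_mul, neg_one_mul]) hne
  have hpath : flipSign (fun r => Y r ω) t * Y t ω = 2 * Y (min t τ) ω - Y t ω := by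
    rw [hflip t le_rfl]
    rcases lt_or_ge t τ with hlt | hle
    · rw [if_pos hlt, min_eq_left hlt.le]
      ring
    · rw [if_neg hle.not_gt, min_eq_right hle, hYτ hle]
      ring
  rw [hnoise, hdrift, hpath, hB0]
  linarith [hYB t ht, hYB _ (le_min ht hτ)]

end Reflection

/-! ### Non-existence of a strong solution of (4.9) -/

section JointLaw

variable {μ : Measure Ω} {E ι : Type*} [MeasurableSpace E]

lemma exists_seq_tendsto_ae_and_tendsto_ae {f f' : ℕ → Ω → ℝ} {g g' : Ω → ℝ}
    (h : TendstoInMeasure μ f atTop g) (h' : TendstoInMeasure μ f' atTop g') :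
    ∃ ns : ℕ → ℕ, (∀ᵐ ω ∂μ, Tendsto (fun n => f (ns n) ω) atTop (nhds (g ω))) ∧
      ∀ᵐ ω ∂μ, Tendsto (fun n => f' (ns n) ω) atTop (nhds (g' ω)) := by
  obtain ⟨ns, hns, hae⟩ := h.exists_seq_tendsto_ae
  have hsub : TendstoInMeasure μ (fun n => f' (ns n)) atTop g' := fun ε hε =>
    (h' ε hε).comp hns.tendsto_atTop
  obtain ⟨ms, hms, hae'⟩ := hsub.exists_seq_tendsto_ae
  exact ⟨ns ∘ ms, hae.mono fun ω hω => hω.comp hms.tendsto_atTop, hae'⟩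

variable [Countable ι] {b b' : Ω → E} {v v' : Ω → ι → ℝ} {Φ : ℕ → ι → E → ℝ}

lemma exists_measurable_ae_eq_of_tendstoInMeasure (hΦ : ∀ n i, Measurable (Φ n i))
    (h : ∀ i, TendstoInMeasure μ (fun n ω => Φ n i (b ω)) atTop (fun ω => v ω i))
    (h' : ∀ i, TendstoInMeasure μ (fun n ω => Φ n i (b' ω)) atTop (fun ω => v' ω i)) :
    ∃ Γ : E → ι → ℝ, Measurable Γ ∧
      (∀ᵐ ω ∂μ, v ω = Γ (b ω)) ∧ ∀ᵐ ω ∂μ, v' ω = Γ (b' ω) := by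
  choose ns hns hns' using fun i => exists_seq_tendsto_ae_and_tendsto_ae (h i) (h' i)
  refine ⟨fun e i => limUnder atTop fun n => Φ (ns i n) i e, measurable_pi_lambda _ fun i =>
    (StronglyMeasurable.limUnder (l := atTop) fun n => (hΦ _ _).stronglyMeasurable).measurable,
    ?_, ?_⟩
  · filter_upwards [ae_all_iff.2 hns] with ω hω using funext fun i => (hω i).limUnder_eq.symm
  · filter_upwards [ae_all_iff.2 hns'] with ω hω using funext fun i => (hω i).limUnder_eq.symm

/- Both `v` and `v'` are the same measurable functional of `b`, respectively `b'`. -/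
lemma map_prodMk_eq_of_tendstoInMeasure (hb : Measurable b) (hb' : Measurable b')
    (hlaw : μ.map b = μ.map b') (hΦ : ∀ n i, Measurable (Φ n i))
    (h : ∀ i, TendstoInMeasure μ (fun n ω => Φ n i (b ω)) atTop (fun ω => v ω i))
    (h' : ∀ i, TendstoInMeasure μ (fun n ω => Φ n i (b' ω)) atTop (fun ω => v' ω i)) :
    μ.map (fun ω => (b ω, v ω)) = μ.map (fun ω => (b' ω, v' ω)) := by
  obtain ⟨Γ, hΓ, hv, hv'⟩ := exists_measurable_ae_eq_of_tendstoInMeasure hΦ h h'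
  have hmap : ∀ {b : Ω → E} {v : Ω → ι → ℝ}, Measurable b → (∀ᵐ ω ∂μ, v ω = Γ (b ω)) →
      μ.map (fun ω => (b ω, v ω)) = (μ.map b).map fun e => (e, Γ e) := fun hb hv => by
    rw [Measure.map_map (by fun_prop) hb]
    exact Measure.map_congr (hv.mono fun ω hω => by simp [hω])
  rw [hmap hb hv, hmap hb' hv', hlaw]

lemma exists_measurableSet_mem_iff_dyadicValues_mem {V : ℝ → Ω → ℝ}
    (hV : ∀ᵐ ω ∂μ, Continuous fun t => V t ω) {T : ℝ} {A : Set Ω}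
    (hA : MeasurableSet[natFilt μ V T] A) :
    ∃ C, MeasurableSet C ∧ ∀ᵐ ω ∂μ, (ω ∈ A ↔ dyadicValues (fun s => V s ω) ∈ C) := by
  set D : Ω → ℕ × ℕ → ℝ := fun ω => dyadicValues fun s => V s ω
  have hle : natFilt μ V T ≤
      eventuallyMeasurableSpace (MeasurableSpace.comap D inferInstance) (ae μ) := by
    refine sup_le (iSup₂_le fun s hs => ?_) (MeasurableSpace.generateFrom_le fun A hA => ?_)
    · rintro _ ⟨C, hC, rfl⟩
      set f : (ℕ × ℕ → ℝ) → ℝ := fun b => limUnder atTop fun n => b (n, ⌊s / dyadicMesh n⌋₊)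
      have hf : Measurable f := (StronglyMeasurable.limUnder (l := atTop) fun n =>
        (measurable_pi_apply (n, ⌊s / dyadicMesh n⌋₊)).stronglyMeasurable).measurable
      refine ⟨D ⁻¹' (f ⁻¹' C), ⟨_, hf hC, rfl⟩, hV.mono fun ω hω => ?_⟩
      have hfD : f (D ω) = V s ω :=
        ((hω.tendsto s).comp (tendsto_dyadicMesh_mul_natFloor hs.1)).limUnder_eq
      change (V s ω ∈ C) = (f (D ω) ∈ C)
      rw [hfD]
    · exact ⟨∅, @MeasurableSet.empty _ (MeasurableSpace.comap D inferInstance), ae_eq_empty.2 hA⟩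
  obtain ⟨_, ⟨C, hC, rfl⟩, hAC⟩ := hle A hA
  exact ⟨C, hC, hAC.mono fun ω hω => iff_of_eq hω⟩

end JointLaw

section Tanaka

variable {μ : Measure Ω} {F : ℝ → MeasurableSpace Ω} {V H B Y H' B' Y' : ℝ → Ω → ℝ} {lam y₀ : ℝ}

/-- `Y` solves the Tanaka-type equation `dY = -λ sgn(Y) dt + sgn(Y) dV`, `Y(0) = y₀`. The noise
`B = ∫ H dV` is recorded separately, and its integrand `H` is only required to equal `sgn(Y)`
almost surely at each positive time: this class is stable under reflecting `Y` after its first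
zero. -/
structure IsTanakaSolution (μ : Measure Ω) (F : ℝ → MeasurableSpace Ω) (V : ℝ → Ω → ℝ)
    (lam y₀ : ℝ) (H B Y : ℝ → Ω → ℝ) : Prop where
  isSignedIntegral : IsSignedIntegral μ F V H B
  measurable : ∀ t, 0 ≤ t → Measurable[F t] (Y t)
  continuous : ∀ᵐ ω ∂μ, Continuous fun t => Y t ω
  ne_zero : ∀ t, 0 < t → ∀ᵐ ω ∂μ, Y t ω ≠ 0
  integrand_eq : ∀ t, 0 < t → ∀ᵐ ω ∂μ, H t ω = psgn (Y t ω)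
  eq : ∀ᵐ ω ∂μ, ∀ t, 0 ≤ t → Y t ω = y₀ + B t ω + ∫ s in 0..t, bangDrift lam (Y s ω)

lemma IsRankSystem.abs_sub_noise_sub_le {α : Type*} [MeasurableSpace α] {μ : Measure α}
    {F : ℝ → MeasurableSpace α} {g h x₁ x₂ : ℝ} {X₁ X₂ I₁ I₂ : ℝ → α → ℝ} (hgh : 0 ≤ g + h)
    (hS : IsRankSystem μ F g h x₁ x₂ X₁ X₂ I₁ I₂) :
    ∀ᵐ ω ∂μ, ∀ s t, 0 ≤ s → 0 ≤ t →
      |(X₁ t ω - X₂ t ω - (I₁ t ω - I₂ t ω)) - (X₁ s ω - X₂ s ω - (I₁ s ω - I₂ s ω))| ≤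
        (g + h) * |t - s| := by
  filter_upwards [hS.sub_eq, hS.continuous_sub] with ω heq hcont s t hs ht
  have hint := intervalIntegrable_bdd_comp (measurable_bangDrift (g + h)) (abs_bangDrift_le hgh)
    hcont.measurable
  have hadj := intervalIntegral.integral_add_adjacent_intervals (hint 0 s) (hint s t)
  refine le_of_eq_of_le (congrArg _ ?_)
    (abs_integral_bdd_comp_le (abs_bangDrift_le hgh) (fun r => X₁ r ω - X₂ r ω) s t)
  linear_combination heq t ht - heq s hs - hadj

lemma Solves49.exists_isTanakaSolution {g h x₁ x₂ : ℝ} {X₁ X₂ : ℝ → Ω → ℝ}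
    (hX : Solves49 μ F g h x₁ x₂ V X₁ X₂) (hV : IsBM μ F V) [IsProbabilityMeasure μ]
    (hgh : 0 ≤ g + h) :
    ∃ H B, IsTanakaSolution μ F V (g + h) (x₁ - x₂) H B fun t ω => X₁ t ω - X₂ t ω := by
  obtain ⟨I₁, I₂, hS, hI₁, hI₂⟩ := hX.exists_isRankSystem
  have hI : IsSI μ (fun t ω => psgn (X₁ t ω - X₂ t ω)) V (fun t ω => I₁ t ω - I₂ t ω) := by
    have hcomb := (hI₁.const_mul_add_const_mul hI₂ 1 (-1)).congr_integrand
      (H' := fun t ω => psgn (X₁ t ω - X₂ t ω))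
      (.of_forall fun ω s _ => by simp only [ite_le_eq_psgn]; ring)
    simpa only [one_mul, neg_one_mul, ← sub_eq_add_neg] using hcomb
  have hm : ∀ t, 0 ≤ t → Measurable[F t] fun ω => X₁ t ω - X₂ t ω := fun t ht =>
    (hS.meas₁ t ht).sub (hS.meas₂ t ht)
  have hmsgn : ∀ t, 0 ≤ t → Measurable[F t] fun ω => psgn (X₁ t ω - X₂ t ω) := fun t ht =>
    measurable_psgn.comp (hm t ht)
  have hne : ∀ t, 0 < t → ∀ᵐ ω ∂μ, X₁ t ω - X₂ t ω ≠ 0 := fun t ht =>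
    hV.ae_ne_zero (Y := fun t ω => X₁ t ω - X₂ t ω) hmsgn (fun _ _ => psgn_sq _) hI.2 hm hgh
      (hS.abs_sub_noise_sub_le hgh) ht
  obtain ⟨B, hB⟩ := hV.exists_isSignedIntegral hmsgn (fun _ _ => psgn_sq _)
    (isAEContinuousAt_psgn hS.continuous_sub hne)
  have hIB := ae_forall_eq_of_continuousOn_Ici (hS.continuousOn_noise_sub hgh)
    (hB.continuous.mono fun ω hω => hω.continuousOn) fun t ht => hI.ae_eq hB.isSI ht
  refine ⟨_, B, hB, hm, hS.continuous_sub, hne, fun t _ => .of_forall fun ω => rfl, ?_⟩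
  filter_upwards [hS.sub_eq, hIB] with ω heq hIB t ht
  rw [← hIB t ht, heq t ht]

namespace IsTanakaSolution

lemma init_eq (hY : IsTanakaSolution μ F V lam y₀ H B Y) : ∀ᵐ ω ∂μ, Y 0 ω = y₀ := by
  filter_upwards [hY.eq, hY.isSignedIntegral.isSI.1] with ω heq h0
  rw [heq 0 le_rfl, h0, intervalIntegral.integral_same, add_zero, add_zero]

lemma eulerLimit_eq (hY : IsTanakaSolution μ F V lam y₀ H B Y) (hlam : 0 ≤ lam) :
    ∀ᵐ ω ∂μ, ∀ t, 0 ≤ t →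
      eulerLimit (bangDrift lam) y₀ t (dyadicValues fun s => B s ω) = Y t ω := by
  filter_upwards [hY.eq, hY.continuous, hY.isSignedIntegral.continuous,
    hY.isSignedIntegral.isSI.1] with ω heq hYc hBc hB0 t ht
  refine eulerLimit_eq_of_eq_add_integral (antitone_bangDrift hlam) (abs_bangDrift_le hlam) y₀ hBc
    hYc.measurable (fun t ht => ?_) ht
  rw [hB0, sub_zero, heq t ht]

end IsTanakaSolution

/-- The `n`-th left-point approximation, at the grid time indexed by `x`, of the integral
`∫ sgn(Y) dB` which recovers `V` from `B = ∫ sgn(Y) dV`, as a functional of the dyadic values `b`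
of `B` alone; the values of `Y` are recovered from `b` by `eulerLimit`. -/
def tanakaDriver (lam y₀ : ℝ) (n : ℕ) (x : ℕ × ℕ) (b : ℕ × ℕ → ℝ) : ℝ :=
  ∑ i ∈ Finset.range ⌊dyadicMesh x.1 * x.2 / dyadicMesh n⌋₊,
    psgn (eulerLimit (bangDrift lam) y₀ (dyadicMesh n * i) b) * (b (n, i + 1) - b (n, i))

lemma measurable_tanakaDriver (lam y₀ : ℝ) (n : ℕ) (x : ℕ × ℕ) :
    Measurable (tanakaDriver lam y₀ n x) :=
  Finset.measurable_sum _ fun _ _ =>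
    (measurable_psgn.comp (measurable_eulerLimit (measurable_bangDrift lam) y₀ _)).mul
      ((measurable_pi_apply _).sub (measurable_pi_apply _))

namespace IsTanakaSolution

lemma tendstoInMeasure_tanakaDriver (hY : IsTanakaSolution μ F V lam y₀ H B Y) (hlam : 0 ≤ lam)
    (hV : IsBM μ F V) [IsProbabilityMeasure μ] (x : ℕ × ℕ) :
    TendstoInMeasure μ (fun n ω => tanakaDriver lam y₀ n x (dyadicValues fun s => B s ω)) atTop
      (fun ω => dyadicValues (fun s => V s ω) x) := by
  refine (hY.isSignedIntegral.tendstoInMeasure_dyadicSum_of_mul_eq_one hV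
    (K := fun s ω => psgn (Y s ω))
    (isBddAdapted_of_sq_eq_one (fun s hs => measurable_psgn.comp (hY.measurable s hs))
      fun _ _ => psgn_sq _)
    (isAEContinuousAt_psgn hY.continuous hY.ne_zero)
    (fun s hs => (hY.integrand_eq s hs).mono fun ω hω => by rw [hω, ← sq, psgn_sq])
    (dyadicMesh_mul_natCast_nonneg x.1 x.2)).congr_left fun n => ?_
  filter_upwards [hY.eulerLimit_eq hlam] with ω hω
  simp only [dyadicSum, leftSum, tanakaDriver]
  refine Finset.sum_congr rfl fun i _ => ?_
  rw [hω _ (dyadicMesh_mul_natCast_nonneg n i)]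
  simp [dyadicValues]

lemma measurable_dyadicValues_noise (hY : IsTanakaSolution μ F V lam y₀ H B Y)
    (hF : ∀ t, F t ≤ m) : Measurable fun ω => dyadicValues fun s => B s ω :=
  measurable_dyadicValues fun t ht => (hY.isSignedIntegral.measurable t ht).mono (hF t) le_rfl

/- The noises `B` and `B'` have the same law, and the same functional recovers `V` from either. -/
lemma map_prodMk_eq (hY : IsTanakaSolution μ F V lam y₀ H B Y)
    (hY' : IsTanakaSolution μ F V lam y₀ H' B' Y') (hlam : 0 ≤ lam) (hV : IsBM μ F V)
    [IsProbabilityMeasure μ] {t : ℝ} (ht : 0 ≤ t) :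
    μ.map (fun ω => (Y t ω, dyadicValues fun s => V s ω)) =
      μ.map (fun ω => (Y' t ω, dyadicValues fun s => V s ω)) := by
  have hjoint := map_prodMk_eq_of_tendstoInMeasure (hY.measurable_dyadicValues_noise hV.le)
    (hY'.measurable_dyadicValues_noise hV.le)
    (hY.isSignedIntegral.map_dyadicValues_eq hY'.isSignedIntegral hV)
    (measurable_tanakaDriver lam y₀) (hY.tendstoInMeasure_tanakaDriver hlam hV)
    (hY'.tendstoInMeasure_tanakaDriver hlam hV)
  have hmV : Measurable fun ω => dyadicValues fun s => V s ω :=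
    measurable_dyadicValues fun _ => hV.measurable
  have hm := measurable_eulerLimit (measurable_bangDrift lam) y₀ t
  have hmap : ∀ {H B Y : ℝ → Ω → ℝ}, IsTanakaSolution μ F V lam y₀ H B Y →
      μ.map (fun ω => (Y t ω, dyadicValues fun s => V s ω)) =
        (μ.map fun ω => (dyadicValues (fun s => B s ω), dyadicValues fun s => V s ω)).map
          (Prod.map (eulerLimit (bangDrift lam) y₀ t) id) := fun hY => by
    rw [Measure.map_map (hm.prodMap measurable_id)
      ((hY.measurable_dyadicValues_noise hV.le).prodMk hmV)]
    refine Measure.map_congr ((hY.eulerLimit_eq hlam).mono fun ω hω => ?_)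
    simp [hω t ht]
  rw [hmap hY, hmap hY', hjoint]

end IsTanakaSolution

lemma psgn_flipSign_mul (y : ℝ → ℝ) {s : ℝ} (hs : y s ≠ 0) :
    psgn (flipSign y s * y s) = flipSign y s * psgn (y s) := by
  rcases sq_eq_one_iff.1 (flipSign_sq y s) with h | h <;> simp [h, psgn_neg hs]

lemma bangDrift_neg (lam : ℝ) {y : ℝ} (hy : y ≠ 0) : bangDrift lam (-y) = -bangDrift lam y := by
  rw [bangDrift, bangDrift, psgn_neg hy, mul_neg]

namespace IsTanakaSolution

lemma isBddAdapted_flipSign (hY : IsTanakaSolution μ F V lam y₀ H B Y) (hF : Monotone F) :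
    IsBddAdapted F 1 fun s ω => flipSign (fun r => Y r ω) s :=
  isBddAdapted_of_sq_eq_one (fun _ _ => measurable_flipSign fun r hr hrs =>
    (hY.measurable r hr).mono (hF hrs) le_rfl) fun _ _ => flipSign_sq _ _

lemma isAEContinuousAt_flipSign (hY : IsTanakaSolution μ F V lam y₀ H B Y) :
    IsAEContinuousAt μ fun s ω => flipSign (fun r => Y r ω) s := fun s hs => by
  filter_upwards [hY.continuous, hY.ne_zero s hs] with ω hω hs0 using continuousAt_flipSign hω hs0

lemma flipSign_mul_eq (hY : IsTanakaSolution μ F V lam y₀ H B Y) (hlam : 0 ≤ lam)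
    (hV : IsBM μ F V) [IsProbabilityMeasure μ]
    (hB' : IsSignedIntegral μ F V (fun s ω => flipSign (fun r => Y r ω) s * H s ω) B') :
    ∀ᵐ ω ∂μ, ∀ t, 0 ≤ t → flipSign (fun r => Y r ω) t * Y t ω =
      y₀ + B' t ω + ∫ s in 0..t, bangDrift lam (flipSign (fun r => Y r ω) s * Y s ω) := by
  have hB := hY.isSignedIntegral
  have hlim : ∀ᵐ ω ∂μ, ∀ n k : ℕ, ∀ L,
      Tendsto (fun p => dyadicSum (fun t ω => flipSign (fun r => Y r ω) t) B
        (dyadicMesh n * k) p ω) atTop (nhds L) → B' (dyadicMesh n * k) ω = L := by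
    refine ae_all_iff.2 fun n => ae_all_iff.2 fun k => ?_
    have ht := dyadicMesh_mul_natCast_nonneg n k
    have hconv := (tendstoInMeasure_congr_of_sub (hV.tendstoInMeasure_dyadicSum_sub_dyadicSum_mul
      (hY.isBddAdapted_flipSign hV.mono) hY.isAEContinuousAt_flipSign hB.isBddAdapted
      hB.isAEContinuousAt (fun t ht => hB.tendstoInMeasure_dyadicSum hV ht) ht)).2
      (hB'.tendstoInMeasure_dyadicSum hV ht)
    obtain ⟨ns, hns, hae⟩ := hconv.exists_seq_tendsto_ae
    filter_upwards [hae] with ω hω L hL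
    exact tendsto_nhds_unique hω (hL.comp hns.tendsto_atTop)
  have hne := ae_ae_ne_zero (fun t ht => (hY.measurable t ht).mono (hV.le t) le_rfl)
    hY.continuous hY.ne_zero
  filter_upwards [hY.continuous, hB.continuous, hB.isSI.1, hB'.continuous, hY.eq, hne, hlim]
    with ω hYc hBc hB0 hBc' heq hne hlim t ht
  exact flipSign_mul_eq_add_integral (measurable_bangDrift lam) (abs_bangDrift_le hlam)
    (fun _ => bangDrift_neg lam) hYc hBc hB0 hBc' heq hne hlim ht

lemma exists_reflect (hY : IsTanakaSolution μ F V lam y₀ H B Y) (hlam : 0 ≤ lam)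
    (hV : IsBM μ F V) [IsProbabilityMeasure μ] :
    ∃ H' B', IsTanakaSolution μ F V lam y₀ H' B'
      fun t ω => flipSign (fun r => Y r ω) t * Y t ω := by
  have hflip := hY.isBddAdapted_flipSign hV.mono
  obtain ⟨B', hB'⟩ := hV.exists_isSignedIntegral
    (hflip.mul hY.isSignedIntegral.isBddAdapted).meas
    (fun s ω => by rw [mul_pow, flipSign_sq, hY.isSignedIntegral.sq_eq_one, one_mul])
    (hY.isAEContinuousAt_flipSign.mul hY.isSignedIntegral.isAEContinuousAt)
  refine ⟨_, B', hB', fun t ht => (hflip.meas t ht).mul (hY.measurable t ht),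
    hY.continuous.mono fun ω hω => continuous_flipSign_mul hω, fun t ht => ?_, fun t ht => ?_,
    hY.flipSign_mul_eq hlam hV hB'⟩
  · filter_upwards [hY.ne_zero t ht] with ω hω
    exact mul_ne_zero (fun h0 => by simpa [h0] using flipSign_sq (fun r => Y r ω) t) hω
  · filter_upwards [hY.ne_zero t ht, hY.integrand_eq t ht] with ω hω hH
    rw [hH, psgn_flipSign_mul _ hω]

/- Reflecting `Y` after its first zero keeps the joint law with `V`; if the sign of `Y` is a
functional of `V`, the reflected process must therefore have the same sign as `Y`. -/
lemma ae_avoidsZero (hY : IsTanakaSolution μ F V lam y₀ H B Y) (hlam : 0 ≤ lam)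
    (hV : IsBM μ F V) [IsProbabilityMeasure μ] {T : ℝ} (hT : 0 < T)
    (hmeas : MeasurableSet[natFilt μ V T] {ω | 0 < Y T ω}) :
    ∀ᵐ ω ∂μ, AvoidsZero (fun r => Y r ω) T := by
  obtain ⟨C, hC, hAC⟩ := exists_measurableSet_mem_iff_dyadicValues_mem hV.cont hmeas
  obtain ⟨H', B', hY'⟩ := hY.exists_reflect hlam hV
  have hmV : Measurable fun ω => dyadicValues fun s => V s ω :=
    measurable_dyadicValues fun _ => hV.measurable
  have hS : MeasurableSet {p : ℝ × (ℕ × ℕ → ℝ) | 0 < p.1 ↔ p.2 ∈ C} :=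
    (measurableSet_lt measurable_const measurable_fst).iff (measurable_snd hC)
  have hlaw : ∀ᵐ p ∂μ.map fun ω => (Y T ω, dyadicValues fun s => V s ω), 0 < p.1 ↔ p.2 ∈ C :=
    (ae_map_iff (((hY.measurable T hT.le).mono (hV.le T) le_rfl).prodMk hmV).aemeasurable hS).2 hAC
  rw [hY.map_prodMk_eq hY' hlam hV hT.le, ae_map_iff
    (((hY'.measurable T hT.le).mono (hV.le T) le_rfl).prodMk hmV).aemeasurable hS] at hlaw
  filter_upwards [hlaw, hAC, hY.ne_zero T hT] with ω hreflect hω hne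
  by_contra hzero
  have hsign := hreflect.trans hω.symm
  simp only [flipSign, if_neg hzero, neg_one_mul, neg_pos] at hsign
  rcases lt_or_gt_of_ne hne with hneg | hpos
  · exact hneg.not_gt (hsign.1 hneg)
  · exact hpos.not_gt (hsign.2 hpos)

end IsTanakaSolution

lemma psgn_mul_self (y : ℝ) : psgn y * y = |y| := by
  rcases le_or_gt y 0 with hy | hy
  · rw [psgn_of_nonpos hy, abs_of_nonpos hy, neg_one_mul]
  · rw [psgn_of_pos hy, abs_of_pos hy, one_mul]

lemma psgn_eq_of_forall_ne_zero {y : ℝ → ℝ} (hy : Continuous y) {T s : ℝ}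
    (hne : ∀ r ∈ Icc 0 T, y r ≠ 0) (hs : s ∈ Icc 0 T) : psgn (y s) = psgn (y 0) := by
  have hcont : ContinuousOn (fun r => psgn (y r)) (Icc 0 T) := fun r hr =>
    (ContinuousAt.comp (continuousAt_psgn (hne r hr)) hy.continuousAt).continuousWithinAt
  exact isPreconnected_Icc.eq_of_sq_eq hcont continuousOn_const
    (fun r _ => by simp [psgn_sq])
    (fun _ => ne_of_apply_ne (· ^ 2) (by simp [psgn_sq]))
    (left_mem_Icc.2 (hs.1.trans hs.2)) rfl hs

lemma IsSignedIntegral.not_ae_const_mul_pos (hB : IsSignedIntegral μ F V H B) (hV : IsBM μ F V)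
    [IsProbabilityMeasure μ] (c : ℝ) {t : ℝ} (ht : 0 ≤ t) : ¬ ∀ᵐ ω ∂μ, 0 < c * B t ω := by
  intro hpos
  have hm : Measurable (B t) := (hB.measurable t ht).mono (hV.le t) le_rfl
  have hsymm : μ.map (fun ω => c * B t ω) = μ.map (fun ω => c * -B t ω) := by
    simpa using hB.map_sum_mul_eq hB.neg hV {()} (fun _ => c) fun _ => ht
  have hneg : ∀ᵐ ω ∂μ, 0 < c * -B t ω := by
    rw [← ae_map_iff (p := fun x => 0 < x) (hm.const_mul c).aemeasurable measurableSet_Ioi, hsymm,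
      ae_map_iff (hm.fun_neg.const_mul c).aemeasurable measurableSet_Ioi] at hpos
    exact hpos
  obtain ⟨ω, hω, hω'⟩ := (hpos.and hneg).exists
  linarith

/- A solution without zeros on `[0, T]` has constant drift there; it then takes a noise of constant
sign to keep it away from the origin for longer than `|y₀| / λ`. -/
lemma IsTanakaSolution.const_mul_noise_pos (hY : IsTanakaSolution μ F V lam y₀ H B Y) {T : ℝ}
    (hT : 0 ≤ T) (hlamT : |y₀| ≤ lam * T) (hne : ∀ᵐ ω ∂μ, AvoidsZero (fun r => Y r ω) T) :
    ∀ᵐ ω ∂μ, 0 < psgn y₀ * B T ω := by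
  filter_upwards [hY.eq, hY.continuous, hY.init_eq, hne] with ω heq hcont h0 hne
  rw [avoidsZero_iff hcont] at hne
  have hsgn : ∀ s ∈ Icc 0 T, psgn (Y s ω) = psgn y₀ := fun s hs =>
    h0 ▸ psgn_eq_of_forall_ne_zero hcont hne hs
  have hdrift : ∫ s in 0..T, bangDrift lam (Y s ω) = -lam * T * psgn y₀ := by
    rw [intervalIntegral.integral_congr (g := fun _ => -lam * psgn y₀)]
    · rw [intervalIntegral.integral_const, smul_eq_mul, sub_zero]; ring
    · exact fun s hs => by simp only [bangDrift, hsgn s (uIcc_of_le hT ▸ hs)]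
  have hTmem := right_mem_Icc.2 hT
  have hY_pos : 0 < psgn y₀ * Y T ω := by
    rw [← hsgn T hTmem, psgn_mul_self]
    exact abs_pos.2 (hne T hTmem)
  have hsplit : psgn y₀ * B T ω = psgn y₀ * Y T ω - |y₀| + lam * T := by
    rw [heq T hT, hdrift, ← psgn_mul_self]
    linear_combination lam * T * psgn_sq y₀
  linarith

lemma measurableSet_natFilt_sub_pos {X₁ X₂ : ℝ → Ω → ℝ} {T : ℝ} (hT : 0 ≤ T) :
    MeasurableSet[natFilt μ (fun s ω => (X₁ s ω, X₂ s ω)) T] {ω | 0 < X₁ T ω - X₂ T ω} := by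
  have hX := measurable_natSA (fun s ω => (X₁ s ω, X₂ s ω)) hT le_rfl
  exact (le_sup_left : natSA _ T ≤ _) _ ((hX.fst.sub hX.snd) measurableSet_Ioi)

theorem IsBM.not_exists_strong_solves49 (hV : IsBM μ F V) [IsProbabilityMeasure μ] {g h : ℝ}
    (hgh : 0 < g + h) (x₁ x₂ : ℝ) :
    ¬ ∃ X₁ X₂ : ℝ → Ω → ℝ, Solves49 μ F g h x₁ x₂ V X₁ X₂ ∧
      ∀ t : ℝ, 0 ≤ t → natFilt μ (fun s ω => (X₁ s ω, X₂ s ω)) t ≤ natFilt μ V t := by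
  rintro ⟨X₁, X₂, hX, hstrong⟩
  obtain ⟨H, B, hY⟩ := hX.exists_isTanakaSolution hV hgh.le
  obtain ⟨T, hT⟩ := exists_gt (|x₁ - x₂| / (g + h))
  have hT0 : 0 < T := (by positivity : 0 ≤ |x₁ - x₂| / (g + h)).trans_lt hT
  have havoids := hY.ae_avoidsZero hgh.le hV hT0
    (hstrong T hT0.le _ (measurableSet_natFilt_sub_pos hT0.le))
  exact hY.isSignedIntegral.not_ae_const_mul_pos hV _ hT0.le
    (hY.const_mul_noise_pos hT0.le ((div_lt_iff₀' hgh).1 hT).le havoids)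

end Tanaka

theorem degenerate_strong_47_and_no_strong_49_general
    (g h : ℝ) (hgh : 0 < g + h) (x₁ x₂ : ℝ) :
    (∀ (Ω : Type*) [mΩ : MeasurableSpace Ω] (μ : Measure Ω) [IsProbabilityMeasure μ]
        (F : ℝ → MeasurableSpace Ω) (W : ℝ → Ω → ℝ),
      IsBM μ F W →
        ∃ X₁ X₂ : ℝ → Ω → ℝ, Solves47 μ F g h x₁ x₂ W X₁ X₂ ∧
          ∀ t : ℝ, 0 ≤ t →
            natFilt μ (fun s ω => (X₁ s ω, X₂ s ω)) t ≤ natFilt μ W t) ∧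
    (∀ (Ω : Type*) [mΩ : MeasurableSpace Ω] (μ : Measure Ω) [IsProbabilityMeasure μ]
        (F : ℝ → MeasurableSpace Ω) (W X₁ X₂ X₁' X₂' : ℝ → Ω → ℝ),
      IsBM μ F W →
        Solves47 μ F g h x₁ x₂ W X₁ X₂ →
        Solves47 μ F g h x₁ x₂ W X₁' X₂' →
        ∀ᵐ ω ∂μ, ∀ t : ℝ, 0 ≤ t → X₁ t ω = X₁' t ω ∧ X₂ t ω = X₂' t ω) ∧
    (∀ (Ω : Type*) [mΩ : MeasurableSpace Ω] (μ : Measure Ω) [IsProbabilityMeasure μ]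
        (F : ℝ → MeasurableSpace Ω) (V : ℝ → Ω → ℝ),
      IsBM μ F V →
        ¬ ∃ X₁ X₂ : ℝ → Ω → ℝ, Solves49 μ F g h x₁ x₂ V X₁ X₂ ∧
            ∀ t : ℝ, 0 ≤ t →
              natFilt μ (fun s ω => (X₁ s ω, X₂ s ω)) t ≤ natFilt μ V t) := by
  refine ⟨fun Ω _ μ _ F W hW => ?_, fun Ω _ μ _ F W X₁ X₂ X₁' X₂' hW hX hX' => ?_,
    fun Ω _ μ _ F V hV => hV.not_exists_strong_solves49 hgh x₁ x₂⟩
  · obtain ⟨X₁, X₂, hX⟩ := hW.exists_solves47 hgh.le x₁ x₂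
    exact ⟨X₁, X₂, hX.mono hW.natSA_le, fun t _ => hX.natFilt_le t⟩
  · exact hX.pathwise_unique hgh.le hW.cont hX'

/-- second part of Theorem 1 of the paper; degenerate case
`ρ = 1, σ = 0`.  The system (4.7)-(4.8) admits a strong solution — one adapted to the
augmented filtration of the driving Brownian motion `W` — which is pathwise unique;
whereas the system (4.9)-(4.10), driven by a Brownian motion `V`, admits no strong
solution. -/
theorem degenerate_strong_47_and_no_strong_49
    (g h : ℝ) (hg : 0 ≤ g) (hh : 0 ≤ h) (hgh : 0 < g + h) (x₁ x₂ : ℝ) :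
    (∀ (Ω : Type) [mΩ : MeasurableSpace Ω] (μ : Measure Ω) [IsProbabilityMeasure μ]
        (F : ℝ → MeasurableSpace Ω) (W : ℝ → Ω → ℝ),
      IsBM μ F W →
        ∃ X₁ X₂ : ℝ → Ω → ℝ, Solves47 μ F g h x₁ x₂ W X₁ X₂ ∧
          ∀ t : ℝ, 0 ≤ t →
            natFilt μ (fun s ω => (X₁ s ω, X₂ s ω)) t ≤ natFilt μ W t) ∧
    (∀ (Ω : Type) [mΩ : MeasurableSpace Ω] (μ : Measure Ω) [IsProbabilityMeasure μ]
        (F : ℝ → MeasurableSpace Ω) (W X₁ X₂ X₁' X₂' : ℝ → Ω → ℝ),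
      IsBM μ F W →
        Solves47 μ F g h x₁ x₂ W X₁ X₂ →
        Solves47 μ F g h x₁ x₂ W X₁' X₂' →
        ∀ᵐ ω ∂μ, ∀ t : ℝ, 0 ≤ t → X₁ t ω = X₁' t ω ∧ X₂ t ω = X₂' t ω) ∧
    (∀ (Ω : Type) [mΩ : MeasurableSpace Ω] (μ : Measure Ω) [IsProbabilityMeasure μ]
        (F : ℝ → MeasurableSpace Ω) (V : ℝ → Ω → ℝ),
      IsBM μ F V →
        ¬ ∃ X₁ X₂ : ℝ → Ω → ℝ, Solves49 μ F g h x₁ x₂ V X₁ X₂ ∧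
            ∀ t : ℝ, 0 ≤ t →
              natFilt μ (fun s ω => (X₁ s ω, X₂ s ω)) t ≤ natFilt μ V t) := by
  exact degenerate_strong_47_and_no_strong_49_general g h hgh x₁ x₂

end SDEPaper
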